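/- There exists a deterministic probability measure μ_f on ℝ, depending only on the density f of the absolutely continuous component of the spectral measure, such that ESD(W_N/√N) converges to μ_f weakly in probability as N → ∞. -/

import Mathlib

open MeasureTheory ProbabilityTheory Filter Real

noncomputable section

/-- The square `(-π, π]²` on which the spectral measure lives. -/
def specBox : Set (ℝ × ℝ) := Set.Ioc (-π) π ×ˢ Set.Ioc (-π) π

/-- `(1/N) ∑_j g(λ_j(A))`, the integral of `g` against the empirical spectral
distribution of a symmetric `N × N` real matrix `A` (junk value `0` if `A` is
not symmetric). -/
def esdEval {N : ℕ} (A : Matrix (Fin N) (Fin N) ℝ) (g : ℝ → ℝ) : ℝ :=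
  if hA : A.IsHermitian then (N : ℝ)⁻¹ * ∑ j, g (hA.eigenvalues j) else 0

/-- The (random) empirical spectral distributions of `A N` converge weakly in
probability to the probability measure `μ`: for every bounded continuous `g`,
`∫ g d(ESD(A N)) → ∫ g dμ` in probability. -/
def ESDTendstoInProb {Ω : Type*} [MeasurableSpace Ω] (P : Measure Ω)
    (A : (N : ℕ) → Ω → Matrix (Fin N) (Fin N) ℝ) (μ : Measure ℝ) : Prop :=
  ∀ g : ℝ → ℝ, Continuous g → (∃ C, ∀ x, |g x| ≤ C) →
    ∀ ε > 0, Tendsto (fun N => P {ω | ε ≤ |esdEval (A N ω) g - ∫ x, g x ∂μ|})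
      atTop (nhds 0)

/-- The symmetric matrix `W_N/√N`, where `W_N(i,j) = X_{i,j} + X_{j,i}`,
`1 ≤ i,j ≤ N`. -/
def scaledW {Ω : Type*} (X : ℤ → ℤ → Ω → ℝ) (N : ℕ) (ω : Ω) :
    Matrix (Fin N) (Fin N) ℝ :=
  fun i j => (Real.sqrt N)⁻¹ *
    (X ((i : ℕ) + 1) ((j : ℕ) + 1) ω + X ((j : ℕ) + 1) ((i : ℕ) + 1) ω)

/-- A centered stationary Gaussian process indexed by `ℤ²` with positive
variance: every finite real linear combination is a centered Gaussian random
variable, and second moments are shift invariant. -/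
structure StatGauss {Ω : Type*} [MeasurableSpace Ω] (P : Measure Ω)
    (X : ℤ → ℤ → Ω → ℝ) : Prop where
  meas : ∀ j k, Measurable (X j k)
  gauss : ∀ c : (ℤ × ℤ) →₀ ℝ, ∃ v : NNReal,
    P.map (fun ω => ∑ p ∈ c.support, c p * X p.1 p.2 ω) = gaussianReal 0 v
  var_pos : 0 < ∫ ω, (X 0 0 ω) ^ 2 ∂P
  stat : ∀ j k u v : ℤ,
    ∫ ω, X j k ω * X (j + u) (k + v) ω ∂P = ∫ ω, X 0 0 ω * X u v ω ∂P

/-- The spectral measure `ν` of the process `X` (from the Herglotz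
representation), together with the standing assumption of the paper:
`ν = ν_ac + ν_d`, where `ν_ac` is absolutely continuous with respect to
Lebesgue measure with density `f ≥ 0` and `ν_d = νd` is discrete (supported on
a countable set). -/
structure SpectralDecomp {Ω : Type*} [MeasurableSpace Ω] (P : Measure Ω)
    (X : ℤ → ℤ → Ω → ℝ) (ν νd : Measure (ℝ × ℝ)) (f : ℝ × ℝ → ℝ) : Prop where
  finite : IsFiniteMeasure ν
  support : ν specBoxᶜ = 0
  herglotz : ∀ u v : ℤ,
    (∫ q, Complex.exp (Complex.I * ((u * q.1 + v * q.2 : ℝ) : ℂ)) ∂ν)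
      = ((∫ ω, X 0 0 ω * X u v ω ∂P : ℝ) : ℂ)
  f_nonneg : ∀ q, 0 ≤ f q
  f_meas : Measurable f
  discrete : ∃ s : Set (ℝ × ℝ), s.Countable ∧ νd sᶜ = 0
  decomp : ν = (volume.restrict specBox).withDensity
      (fun q => ENNReal.ofReal (f q)) + νd

set_option linter.unusedSectionVars false

/-! ### Part A: words, loop equation -/
abbrev Wd := List (Option ℤ)

def wdeg (w : Wd) : ℕ := w.count none

def splits : Wd → List (Wd × Wd)
  | [] => []
  | none :: w => ([], w) :: (splits w).map (fun p => (none :: p.1, p.2))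
  | some a :: w => (splits w).map (fun p => (some a :: p.1, p.2))

def der : List Wd → List (Wd × List Wd)
  | [] => []
  | w :: ws => (splits w).map (fun p => (p.2 ++ p.1, ws)) ++
      (der ws).map (fun q => (q.1, w :: q.2))

def wtr (w : Wd) : Wd := (w.map (Option.map (fun a : ℤ => -a))).reverse

def wsdeg (ws : List Wd) : ℕ := (ws.map wdeg).sum

lemma splits_deg (w : Wd) : ∀ p ∈ splits w, wdeg p.1 + wdeg p.2 + 1 = wdeg w := by
  induction w with
  | nil => simp [splits]
  | cons l w ih =>
    cases l with
    | none =>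
      intro p hp
      simp only [splits, List.mem_cons, List.mem_map] at hp
      rcases hp with rfl | ⟨q, hq, rfl⟩
      · simp [wdeg]
      · have := ih q hq
        simp [wdeg] at this ⊢
        omega
    | some a =>
      intro p hp
      simp only [splits, List.mem_map] at hp
      rcases hp with ⟨q, hq, rfl⟩
      have := ih q hq
      simp [wdeg] at this ⊢
      omega

lemma splits_length (w : Wd) : (splits w).length = wdeg w := by
  induction w with
  | nil => simp [splits, wdeg]
  | cons l w ih =>
    cases l with
    | none => simp [splits, wdeg] at ih ⊢; exact ih
    | some a => simp [splits, wdeg] at ih ⊢; exact ih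

lemma der_deg (ws : List Wd) : ∀ q ∈ der ws,
    wdeg q.1 + wsdeg q.2 + 1 = wsdeg ws ∧ q.2.length + 1 = ws.length := by
  induction ws with
  | nil => simp [der]
  | cons w ws ih =>
    intro q hq
    simp only [der, List.mem_append, List.mem_map] at hq
    rcases hq with ⟨p, hp, rfl⟩ | ⟨r, hr, rfl⟩
    · have := splits_deg w p hp
      simp [wdeg, wsdeg] at this ⊢
      omega
    · have := ih r hr
      simp [wdeg, wsdeg] at this ⊢
      omega

lemma der_length (ws : List Wd) : (der ws).length = wsdeg ws := by
  induction ws with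
  | nil => simp [der, wsdeg]
  | cons w ws ih =>
    simp [der, wsdeg, splits_length] at ih ⊢
    omega

lemma wdeg_wtr (w : Wd) : wdeg (wtr w) = wdeg w := by
  unfold wdeg wtr
  rw [List.count_reverse]
  induction w with
  | nil => simp
  | cons l w ih => cases l <;> simp [ih]

section alg
variable {R : Type*} [CommRing R] {N : ℕ}

def Tm (R : Type*) [CommRing R] (N : ℕ) (a : ℤ) : Matrix (Fin N) (Fin N) R :=
  fun i j => if (j : ℤ) - (i : ℤ) = a then 1 else 0

lemma Tm_transpose (a : ℤ) : (Tm R N a).transpose = Tm R N (-a) := by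
  ext i j
  simp only [Tm, Matrix.transpose_apply]
  congr 1
  apply propext
  constructor <;> intro h <;> omega

def lett (A : Matrix (Fin N) (Fin N) R) : Option ℤ → Matrix (Fin N) (Fin N) R
  | none => A
  | some a => Tm R N a

def evw (A : Matrix (Fin N) (Fin N) R) (w : Wd) : Matrix (Fin N) (Fin N) R :=
  (w.map (lett A)).prod

lemma evw_nil (A : Matrix (Fin N) (Fin N) R) : evw A [] = 1 := by simp [evw]
lemma evw_cons (A : Matrix (Fin N) (Fin N) R) (l) (w : Wd) :
    evw A (l :: w) = lett A l * evw A w := by simp [evw]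
lemma evw_append (A : Matrix (Fin N) (Fin N) R) (v w : Wd) :
    evw A (v ++ w) = evw A v * evw A w := by simp [evw]

lemma evw_wtr (A : Matrix (Fin N) (Fin N) R) (hA : A.transpose = A) (w : Wd) :
    evw A (wtr w) = (evw A w).transpose := by
  induction w with
  | nil => simp [evw, wtr]
  | cons l w ih =>
    have : wtr (l :: w) = wtr w ++ [Option.map (fun a : ℤ => -a) l] := by simp [wtr]
    rw [this, evw_append, evw_cons A l, Matrix.transpose_mul, ih]
    congr 1
    cases l with
    | none => simp [evw, lett, hA]
    | some a => simp [evw, lett, Tm_transpose]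

end alg

section loop
variable {N : ℕ} {ι : Type*} [Fintype ι]
open MvPolynomial

def ntr (M : Matrix (Fin N) (Fin N) (MvPolynomial ι ℝ)) : MvPolynomial ι ℝ :=
  C ((N : ℝ)⁻¹) * M.trace

def Ap (H : ι → Matrix (Fin N) (Fin N) ℝ) : Matrix (Fin N) (Fin N) (MvPolynomial ι ℝ) :=
  fun j k => ∑ i, C (H i j k) * X i

def Phi (H : ι → Matrix (Fin N) (Fin N) ℝ) (ws : List Wd) : MvPolynomial ι ℝ :=
  (ws.map (fun w => ntr (evw (Ap H) w))).prod

def dM (i : ι) (M : Matrix (Fin N) (Fin N) (MvPolynomial ι ℝ)) :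
    Matrix (Fin N) (Fin N) (MvPolynomial ι ℝ) := fun j k => pderiv i (M j k)

lemma dM_mul (i : ι) (M M' : Matrix (Fin N) (Fin N) (MvPolynomial ι ℝ)) :
    dM i (M * M') = dM i M * M' + M * dM i M' := by
  ext1 j k
  simp only [dM, Matrix.mul_apply, Matrix.add_apply, map_sum, Derivation.leibniz, smul_eq_mul]
  rw [← Finset.sum_add_distrib]
  refine Finset.sum_congr rfl fun l _ => ?_
  ring

lemma dM_Ap (H : ι → Matrix (Fin N) (Fin N) ℝ) (i : ι) : dM i (Ap H) = (H i).map C := by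
  classical
  ext1 j k
  simp only [dM, Ap, map_sum, Derivation.leibniz, smul_eq_mul, pderiv_C, pderiv_X, mul_zero,
    add_zero, Matrix.map_apply]
  simp [Pi.single_apply]

lemma dM_Tm (i : ι) (a : ℤ) : dM i (Tm (MvPolynomial ι ℝ) N a) = 0 := by
  ext1 j k
  simp only [dM, Tm]
  split_ifs <;> simp

lemma dM_evw (H : ι → Matrix (Fin N) (Fin N) ℝ) (i : ι) (w : Wd) :
    dM i (evw (Ap H) w) =
      ((splits w).map (fun p => evw (Ap H) p.1 * (H i).map C * evw (Ap H) p.2)).sum := by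
  induction w with
  | nil =>
    ext1 j k
    simp only [evw_nil, dM, splits, List.map_nil, List.sum_nil, Matrix.one_apply]
    split_ifs <;> simp
  | cons l w ih =>
    rw [evw_cons, dM_mul, ih]
    cases l with
    | none =>
      simp only [lett, dM_Ap, splits, List.map_cons, List.sum_cons, List.map_map, evw_nil, one_mul,
        Function.comp_def, evw_cons, ← List.sum_map_mul_left, mul_assoc]
    | some a =>
      simp only [lett, dM_Tm, splits, List.map_map, zero_mul, zero_add,
        Function.comp_def, evw_cons, ← List.sum_map_mul_left, mul_assoc]

lemma pderiv_ntr (i : ι) (M : Matrix (Fin N) (Fin N) (MvPolynomial ι ℝ)) :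
    pderiv i (ntr M) = ntr (dM i M) := by
  simp [ntr, Derivation.leibniz, Matrix.trace, dM]

lemma ntr_list_sum (L : List (Matrix (Fin N) (Fin N) (MvPolynomial ι ℝ))) :
    ntr L.sum = (L.map ntr).sum := by
  induction L with
  | nil => simp [ntr]
  | cons a L ih =>
    simp only [List.sum_cons, List.map_cons, ← ih]
    simp [ntr, Matrix.trace_add, mul_add]

lemma ntr_mul_comm (M M' : Matrix (Fin N) (Fin N) (MvPolynomial ι ℝ)) :
    ntr (M * M') = ntr (M' * M) := by rw [ntr, Matrix.trace_mul_comm, ntr]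

lemma pderiv_Phi (H : ι → Matrix (Fin N) (Fin N) ℝ) (i : ι) (ws : List Wd) :
    pderiv i (Phi H ws) =
      ((der ws).map (fun q => ntr ((H i).map C * evw (Ap H) q.1) * Phi H q.2)).sum := by
  induction ws with
  | nil => simp [Phi, der]
  | cons w ws ih =>
    have : Phi H (w :: ws) = ntr (evw (Ap H) w) * Phi H ws := by simp [Phi]
    rw [this, Derivation.leibniz, ih, pderiv_ntr, dM_evw, ntr_list_sum]
    simp only [der, List.map_append, List.map_map, List.sum_append, Function.comp_def, smul_eq_mul]
    rw [add_comm]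
    congr 1
    · rw [mul_comm, ← List.sum_map_mul_right]
      congr 1
      refine List.map_congr_left fun p _ => ?_
      rw [evw_append, mul_assoc, ntr_mul_comm, mul_assoc]
    · rw [← List.sum_map_mul_left]
      congr 1
      refine List.map_congr_left fun p _ => ?_
      simp [Phi]; ring

end loop

section loop
variable {N : ℕ} {ι : Type*} [Fintype ι]
open MvPolynomial

/-- covariance structure -/
def CovH (H : ι → Matrix (Fin N) (Fin N) ℝ) (F : Finset (ℤ × ℤ)) (s : ℤ × ℤ → ℝ) : Prop :=
  ∀ j k l m, ∑ i, H i j k * H i l m = ∑ q ∈ F, s q * (N : ℝ)⁻¹ *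
    (Tm ℝ N q.1 j l * Tm ℝ N q.2 k m + Tm ℝ N q.1 j m * Tm ℝ N q.2 k l)

lemma C_Tm (a : ℤ) (j k : Fin N) : (C (Tm ℝ N a j k) : MvPolynomial ι ℝ) = Tm _ N a j k := by
  simp only [Tm]; split_ifs <;> simp

lemma trace4 (M1 M2 M3 M4 : Matrix (Fin N) (Fin N) (MvPolynomial ι ℝ)) :
    (M1 * M2 * M3 * M4).trace = ∑ j, ∑ k, ∑ l, ∑ m, M1 j k * M2 k l * M3 l m * M4 m j := by
  simp only [Matrix.trace, Matrix.diag, Matrix.mul_apply, Finset.sum_mul]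
  refine Finset.sum_congr rfl fun j _ => ?_
  calc _ = ∑ l, ∑ m, ∑ k, M1 j k * M2 k l * M3 l m * M4 m j := Finset.sum_comm
    _ = ∑ l, ∑ k, ∑ m, M1 j k * M2 k l * M3 l m * M4 m j :=
        Finset.sum_congr rfl fun l _ => Finset.sum_comm
    _ = _ := Finset.sum_comm

lemma trace2 (M1 M2 : Matrix (Fin N) (Fin N) (MvPolynomial ι ℝ)) :
    (M1 * M2).trace = ∑ j, ∑ k, M1 j k * M2 k j := by
  simp only [Matrix.trace, Matrix.diag, Matrix.mul_apply]

lemma sum4_perm {α : Type*} [AddCommMonoid α] (g : Fin N → Fin N → Fin N → Fin N → α) :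
    ∑ k, ∑ l, ∑ j, ∑ m, g j k l m = ∑ j, ∑ k, ∑ l, ∑ m, g j k l m := by
  calc _ = ∑ k, ∑ j, ∑ l, ∑ m, g j k l m := Finset.sum_congr rfl fun l _ => Finset.sum_comm
    _ = _ := Finset.sum_comm

lemma sum4_perm2 {α : Type*} [AddCommMonoid α] (g : Fin N → Fin N → Fin N → Fin N → α) :
    ∑ k, ∑ j, ∑ l, ∑ m, g j k l m = ∑ j, ∑ k, ∑ l, ∑ m, g j k l m := by
  rw [Finset.sum_comm]

lemma sum4_comm {α β : Type*} [AddCommMonoid α] (F : Finset β)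
    (g : Fin N → Fin N → Fin N → Fin N → β → α) :
    ∑ j, ∑ k, ∑ l, ∑ m, ∑ q ∈ F, g j k l m q = ∑ q ∈ F, ∑ j, ∑ k, ∑ l, ∑ m, g j k l m q := by
  calc _ = ∑ j, ∑ k, ∑ l, ∑ q ∈ F, ∑ m, g j k l m q :=
        Finset.sum_congr rfl fun j _ => Finset.sum_congr rfl fun k _ =>
          Finset.sum_congr rfl fun l _ => Finset.sum_comm
    _ = ∑ j, ∑ k, ∑ q ∈ F, ∑ l, ∑ m, g j k l m q :=
        Finset.sum_congr rfl fun j _ => Finset.sum_congr rfl fun k _ => Finset.sum_comm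
    _ = ∑ j, ∑ q ∈ F, ∑ k, ∑ l, ∑ m, g j k l m q :=
        Finset.sum_congr rfl fun j _ => Finset.sum_comm
    _ = _ := Finset.sum_comm

lemma sum4_C {β : Type*} (F : Finset β) (c : β → MvPolynomial ι ℝ)
    (g : Fin N → Fin N → Fin N → Fin N → β → MvPolynomial ι ℝ) :
    ∑ j, ∑ k, ∑ l, ∑ m, ∑ q ∈ F, c q * g j k l m q =
      ∑ q ∈ F, c q * ∑ j, ∑ k, ∑ l, ∑ m, g j k l m q := by
  rw [sum4_comm]
  simp only [Finset.mul_sum]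

lemma sum4_map (H : ι → Matrix (Fin N) (Fin N) ℝ)
    (g : Fin N → Fin N → Fin N → Fin N → MvPolynomial ι ℝ) :
    ∑ i, ∑ j, ∑ k, ∑ l, ∑ m, g j k l m * C (H i j k * H i l m) =
      ∑ j, ∑ k, ∑ l, ∑ m, g j k l m * C (∑ i, H i j k * H i l m) := by
  rw [← sum4_comm]
  simp only [map_sum, Finset.mul_sum]

lemma contract1 {H : ι → Matrix (Fin N) (Fin N) ℝ} {F : Finset (ℤ × ℤ)} {s : ℤ × ℤ → ℝ}
    (hc : CovH H F s) (M1 M2 : Matrix (Fin N) (Fin N) (MvPolynomial ι ℝ)) :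
    ∑ i, ntr ((H i).map C * M1 * (H i).map C * M2) =
      ∑ q ∈ F, C (s q) * (ntr (M1 * Tm _ N (-q.2)) * ntr (M2 * Tm _ N q.1) +
        C ((N : ℝ)⁻¹) * ntr (M1 * Tm _ N (-q.1) * M2.transpose * Tm _ N (-q.2))) := by
  have e1 : ∀ q : ℤ × ℤ, (M1 * Tm _ N (-q.2)).trace * (M2 * Tm _ N q.1).trace =
      ∑ j, ∑ k, ∑ l, ∑ m, M1 k l * M2 m j * (C (Tm ℝ N q.1 j m) * C (Tm ℝ N q.2 k l)) := by
    intro q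
    rw [trace2, trace2]
    refine Eq.trans ?_ (sum4_perm _)
    rw [Finset.sum_mul]
    refine Finset.sum_congr rfl fun k _ => ?_
    rw [Finset.sum_mul]
    refine Finset.sum_congr rfl fun l _ => ?_
    rw [Finset.sum_comm, Finset.mul_sum]
    refine Finset.sum_congr rfl fun j _ => ?_
    rw [Finset.mul_sum]
    refine Finset.sum_congr rfl fun m _ => ?_
    rw [← Tm_transpose, Matrix.transpose_apply, C_Tm, C_Tm]
    ring
  have e2 : ∀ q : ℤ × ℤ, (M1 * Tm _ N (-q.1) * M2.transpose * Tm _ N (-q.2)).trace =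
      ∑ j, ∑ k, ∑ l, ∑ m, M1 k l * M2 m j * (C (Tm ℝ N q.1 j l) * C (Tm ℝ N q.2 k m)) := by
    intro q
    rw [trace4]
    refine Eq.trans ?_ (sum4_perm _)
    refine Finset.sum_congr rfl fun k _ => ?_
    refine Finset.sum_congr rfl fun l _ => ?_
    refine Finset.sum_congr rfl fun j _ => ?_
    refine Finset.sum_congr rfl fun m _ => ?_
    rw [← Tm_transpose, ← Tm_transpose, Matrix.transpose_apply, Matrix.transpose_apply,
      Matrix.transpose_apply, C_Tm, C_Tm]
    ring
  calc ∑ i, ntr ((H i).map C * M1 * (H i).map C * M2)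
      = C ((N : ℝ)⁻¹) * ∑ j, ∑ k, ∑ l, ∑ m, M1 k l * M2 m j * C (∑ i, H i j k * H i l m) := by
        simp only [ntr, trace4, ← Finset.mul_sum, Matrix.map_apply]
        congr 1
        rw [← sum4_map]
        refine Finset.sum_congr rfl fun i _ => ?_
        refine Finset.sum_congr rfl fun j _ => ?_
        refine Finset.sum_congr rfl fun k _ => ?_
        refine Finset.sum_congr rfl fun l _ => ?_
        refine Finset.sum_congr rfl fun m _ => ?_
        rw [C_mul]; ring
    _ = C ((N : ℝ)⁻¹) * ∑ j, ∑ k, ∑ l, ∑ m, ∑ q ∈ F, C (s q * (N : ℝ)⁻¹) *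
          (M1 k l * M2 m j * (C (Tm ℝ N q.1 j l) * C (Tm ℝ N q.2 k m)) +
          M1 k l * M2 m j * (C (Tm ℝ N q.1 j m) * C (Tm ℝ N q.2 k l))) := by
        congr 1
        refine Finset.sum_congr rfl fun j _ => ?_
        refine Finset.sum_congr rfl fun k _ => ?_
        refine Finset.sum_congr rfl fun l _ => ?_
        refine Finset.sum_congr rfl fun m _ => ?_
        rw [hc, map_sum, Finset.mul_sum]
        refine Finset.sum_congr rfl fun i _ => ?_
        rw [C_mul, C_add, C_mul (a := Tm ℝ N i.1 j l), C_mul (a := Tm ℝ N i.1 j m)]; ring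
    _ = C ((N : ℝ)⁻¹) * ∑ q ∈ F, C (s q * (N : ℝ)⁻¹) * ∑ j, ∑ k, ∑ l, ∑ m,
          (M1 k l * M2 m j * (C (Tm ℝ N q.1 j l) * C (Tm ℝ N q.2 k m)) +
          M1 k l * M2 m j * (C (Tm ℝ N q.1 j m) * C (Tm ℝ N q.2 k l))) := by
        rw [sum4_C]
    _ = _ := by
        rw [Finset.mul_sum]
        refine Finset.sum_congr rfl fun q _ => ?_
        simp only [Finset.sum_add_distrib]
        rw [← e1, ← e2]
        simp only [ntr, C_mul]
        ring

lemma contract2 {H : ι → Matrix (Fin N) (Fin N) ℝ} {F : Finset (ℤ × ℤ)} {s : ℤ × ℤ → ℝ}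
    (hc : CovH H F s) (M1 M2 : Matrix (Fin N) (Fin N) (MvPolynomial ι ℝ)) :
    ∑ i, ntr ((H i).map C * M1) * ntr ((H i).map C * M2) =
      ∑ q ∈ F, C (s q) * (C ((N : ℝ)⁻¹ ^ 2) *
        (ntr (M1 * Tm _ N q.1 * M2.transpose * Tm _ N (-q.2)) +
          ntr (M1 * Tm _ N q.1 * M2 * Tm _ N (-q.2)))) := by
  have e1 : ∀ q : ℤ × ℤ, (M1 * Tm _ N q.1 * M2 * Tm _ N (-q.2)).trace =
      ∑ j, ∑ k, ∑ l, ∑ m, M1 k j * M2 m l * (C (Tm ℝ N q.1 j m) * C (Tm ℝ N q.2 k l)) := by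
    intro q
    rw [trace4]
    refine Eq.trans ?_ (sum4_perm2 _)
    refine Finset.sum_congr rfl fun k _ => ?_
    refine Finset.sum_congr rfl fun j _ => ?_
    rw [Finset.sum_comm]
    refine Finset.sum_congr rfl fun l _ => ?_
    refine Finset.sum_congr rfl fun m _ => ?_
    rw [← Tm_transpose, Matrix.transpose_apply, C_Tm, C_Tm]
    ring
  have e2 : ∀ q : ℤ × ℤ, (M1 * Tm _ N q.1 * M2.transpose * Tm _ N (-q.2)).trace =
      ∑ j, ∑ k, ∑ l, ∑ m, M1 k j * M2 m l * (C (Tm ℝ N q.1 j l) * C (Tm ℝ N q.2 k m)) := by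
    intro q
    rw [trace4]
    refine Eq.trans ?_ (sum4_perm2 _)
    refine Finset.sum_congr rfl fun k _ => ?_
    refine Finset.sum_congr rfl fun l _ => ?_
    refine Finset.sum_congr rfl fun j _ => ?_
    refine Finset.sum_congr rfl fun m _ => ?_
    rw [← Tm_transpose, Matrix.transpose_apply, Matrix.transpose_apply, C_Tm, C_Tm]
    ring
  calc ∑ i, ntr ((H i).map C * M1) * ntr ((H i).map C * M2)
      = C ((N : ℝ)⁻¹ ^ 2) * ∑ j, ∑ k, ∑ l, ∑ m, M1 k j * M2 m l * C (∑ i, H i j k * H i l m) := by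
        rw [← sum4_map, Finset.mul_sum]
        refine Finset.sum_congr rfl fun i _ => ?_
        simp only [ntr]
        rw [mul_mul_mul_comm, ← C_mul, ← pow_two, trace2, trace2]
        congr 1
        rw [Finset.sum_mul]
        refine Finset.sum_congr rfl fun j _ => ?_
        rw [Finset.sum_mul]
        refine Finset.sum_congr rfl fun k _ => ?_
        rw [Finset.mul_sum]
        refine Finset.sum_congr rfl fun l _ => ?_
        rw [Finset.mul_sum]
        refine Finset.sum_congr rfl fun m _ => ?_
        rw [C_mul, Matrix.map_apply, Matrix.map_apply]; ring
    _ = C ((N : ℝ)⁻¹ ^ 2) * ∑ j, ∑ k, ∑ l, ∑ m, ∑ q ∈ F, C (s q * (N : ℝ)⁻¹) *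
          (M1 k j * M2 m l * (C (Tm ℝ N q.1 j l) * C (Tm ℝ N q.2 k m)) +
          M1 k j * M2 m l * (C (Tm ℝ N q.1 j m) * C (Tm ℝ N q.2 k l))) := by
        congr 1
        refine Finset.sum_congr rfl fun j _ => ?_
        refine Finset.sum_congr rfl fun k _ => ?_
        refine Finset.sum_congr rfl fun l _ => ?_
        refine Finset.sum_congr rfl fun m _ => ?_
        rw [hc, map_sum, Finset.mul_sum]
        refine Finset.sum_congr rfl fun i _ => ?_
        rw [C_mul, C_add, C_mul (a := Tm ℝ N i.1 j l), C_mul (a := Tm ℝ N i.1 j m)]; ring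
    _ = C ((N : ℝ)⁻¹ ^ 2) * ∑ q ∈ F, C (s q * (N : ℝ)⁻¹) * ∑ j, ∑ k, ∑ l, ∑ m,
          (M1 k j * M2 m l * (C (Tm ℝ N q.1 j l) * C (Tm ℝ N q.2 k m)) +
          M1 k j * M2 m l * (C (Tm ℝ N q.1 j m) * C (Tm ℝ N q.2 k l))) := by
        rw [sum4_C]
    _ = _ := by
        rw [Finset.mul_sum]
        refine Finset.sum_congr rfl fun q _ => ?_
        simp only [Finset.sum_add_distrib]
        rw [← e1, ← e2]
        simp only [ntr, C_mul]
        ring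

lemma Ap_eq (H : ι → Matrix (Fin N) (Fin N) ℝ) : Ap H = ∑ i, (X i : MvPolynomial ι ℝ) • (H i).map C := by
  ext1 j k
  simp only [Ap, Matrix.sum_apply, Matrix.smul_apply, Matrix.map_apply, smul_eq_mul]
  exact Finset.sum_congr rfl fun i _ => mul_comm _ _

lemma Ap_symm (H : ι → Matrix (Fin N) (Fin N) ℝ) (hs : ∀ i, (H i).transpose = H i) :
    (Ap H).transpose = Ap H := by
  ext1 j k
  simp only [Matrix.transpose_apply, Ap]
  refine Finset.sum_congr rfl fun i _ => ?_
  rw [← Matrix.transpose_apply (H i), hs]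

lemma Phi_cons (H : ι → Matrix (Fin N) (Fin N) ℝ) (w : Wd) (ws : List Wd) :
    Phi H (w :: ws) = ntr (evw (Ap H) w) * Phi H ws := by simp [Phi]

/-- loop equation -/
lemma loop_eq {H : ι → Matrix (Fin N) (Fin N) ℝ} {F : Finset (ℤ × ℤ)} {s : ℤ × ℤ → ℝ}
    (hc : CovH H F s) (hs : ∀ i, (H i).transpose = H i)
    (E : MvPolynomial ι ℝ →ₗ[ℝ] ℝ) (hE : ∀ i p, E (X i * p) = E (pderiv i p))
    (v : Wd) (ws : List Wd) :
    E (Phi H ((none :: v) :: ws)) =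
      ((splits v).map (fun p => ∑ q ∈ F, s q *
        (E (Phi H ((p.1 ++ [some (-q.2)]) :: (p.2 ++ [some q.1]) :: ws)) +
         (N : ℝ)⁻¹ * E (Phi H ((p.1 ++ [some (-q.1)] ++ wtr p.2 ++ [some (-q.2)]) :: ws))))).sum +
      ((der ws).map (fun p => ∑ q ∈ F, s q * ((N : ℝ)⁻¹ ^ 2 *
        (E (Phi H ((v ++ [some q.1] ++ wtr p.1 ++ [some (-q.2)]) :: p.2)) +
         E (Phi H ((v ++ [some q.1] ++ p.1 ++ [some (-q.2)]) :: p.2)))))).sum := by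
  have hCE : ∀ (c : ℝ) p, E (C c * p) = c * E p := by
    intro c p
    rw [C_mul', map_smul, smul_eq_mul]
  have hA := Ap_symm H hs
  have e0 : Phi H ((none :: v) :: ws) =
      ∑ i, X i * (ntr ((H i).map C * evw (Ap H) v) * Phi H ws) := by
    rw [Phi_cons, evw_cons]
    simp only [lett]
    nth_rewrite 1 [Ap_eq]
    simp only [ntr, Finset.sum_mul, Matrix.trace_sum, Finset.mul_sum, Matrix.smul_mul,
      Matrix.trace_smul, smul_eq_mul]
    refine Finset.sum_congr rfl fun i _ => by ring
  have e1 : ∀ i, pderiv i (ntr ((H i).map C * evw (Ap H) v) * Phi H ws) =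
      ((splits v).map (fun p => ntr ((H i).map C * evw (Ap H) p.1 * (H i).map C * evw (Ap H) p.2)
        * Phi H ws)).sum +
      ((der ws).map (fun p => ntr ((H i).map C * evw (Ap H) v) * ntr ((H i).map C * evw (Ap H) p.1)
        * Phi H p.2)).sum := by
    intro i
    have d0 : dM i ((H i).map C) = (0 : Matrix (Fin N) (Fin N) (MvPolynomial ι ℝ)) := by
      ext1 j k
      simp [dM]
    rw [Derivation.leibniz, pderiv_Phi, pderiv_ntr, dM_mul, d0, zero_mul, zero_add, dM_evw,
      ← List.sum_map_mul_left, ntr_list_sum, smul_eq_mul, smul_eq_mul, add_comm,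
      ← List.sum_map_mul_left, ← List.sum_map_mul_left]
    simp only [List.map_map, Function.comp_def, mul_assoc, mul_comm (Phi H ws)]
  have lsum : ∀ {α : Type} (L : List α) (g : ι → α → MvPolynomial ι ℝ),
      ∑ i, (L.map (g i)).sum = (L.map (fun a => ∑ i, g i a)).sum := by
    intro α L g
    induction L with
    | nil => simp
    | cons a L ih => simp [Finset.sum_add_distrib, ih]
  rw [e0, map_sum]
  simp only [hE]
  rw [← map_sum]
  simp only [e1]
  rw [Finset.sum_add_distrib, map_add, lsum, lsum, map_list_sum, map_list_sum, List.map_map,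
    List.map_map]
  congr 2
  · refine List.map_congr_left fun p _ => ?_
    simp only [Function.comp]
    rw [← Finset.sum_mul, contract1 hc, Finset.sum_mul, map_sum]
    refine Finset.sum_congr rfl fun q _ => ?_
    rw [mul_assoc, hCE]
    congr 1
    simp only [Phi_cons, evw_append, evw_wtr _ hA, ← mul_assoc]
    rw [add_mul, map_add]
    simp only [mul_assoc, hCE, evw_cons, evw_nil, lett, mul_one]
  · refine List.map_congr_left fun p _ => ?_
    simp only [Function.comp]
    rw [← Finset.sum_mul, contract2 hc, Finset.sum_mul, map_sum]
    refine Finset.sum_congr rfl fun q _ => ?_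
    rw [mul_assoc, hCE, mul_assoc, hCE]
    congr 2
    simp only [Phi_cons, evw_append, evw_wtr _ hA, ← mul_assoc]
    rw [add_mul, map_add]
    simp only [mul_assoc, evw_cons, evw_nil, lett, mul_one]

end loop

structure LoopSys (G : ℕ → List Wd → ℝ) (F : Finset (ℤ × ℤ)) (s : ℤ × ℤ → ℝ)
    (t : ℕ → Wd → ℝ) (l : Wd → ℝ) : Prop where
  gnil : ∀ N, G N [] = 1
  cyc : ∀ N w1 w2 ws, G N ((w1 ++ w2) :: ws) = G N ((w2 ++ w1) :: ws)
  det : ∀ N w ws, wdeg w = 0 → G N (w :: ws) = t N w * G N ws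
  tlim : ∀ w, wdeg w = 0 → Tendsto (fun N => t N w) atTop (nhds (l w))
  tbd : ∀ N w, wdeg w = 0 → |t N w| ≤ 1
  loop : ∀ N v ws, G N ((none :: v) :: ws) =
      ((splits v).map (fun p => ∑ q ∈ F, s q *
        (G N ((p.1 ++ [some (-q.2)]) :: (p.2 ++ [some q.1]) :: ws) +
         (N : ℝ)⁻¹ * G N ((p.1 ++ [some (-q.1)] ++ wtr p.2 ++ [some (-q.2)]) :: ws)))).sum +
      ((der ws).map (fun p => ∑ q ∈ F, s q * ((N : ℝ)⁻¹ ^ 2 *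
        (G N ((v ++ [some q.1] ++ wtr p.1 ++ [some (-q.2)]) :: p.2) +
         G N ((v ++ [some q.1] ++ p.1 ++ [some (-q.2)]) :: p.2))))).sum

lemma exists_rot (w : Wd) (h : wdeg w ≠ 0) : ∃ a b, w = a ++ none :: b := by
  have : none ∈ w := by
    by_contra hn
    exact h (List.count_eq_zero.2 hn)
  exact List.append_of_mem this

lemma wdeg_append (a b : Wd) : wdeg (a ++ b) = wdeg a + wdeg b := by simp [wdeg]
lemma wdeg_none (b : Wd) : wdeg (none :: b) = wdeg b + 1 := by simp [wdeg]
lemma wdeg_one (c : ℤ) : wdeg [some c] = 0 := by simp [wdeg]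
lemma wsdeg_cons (w : Wd) (ws) : wsdeg (w :: ws) = wdeg w + wsdeg ws := by simp [wsdeg]

lemma tendsto_lsum {α : Type*} (L : List α) (g : ℕ → α → ℝ) (c : α → ℝ)
    (h : ∀ a ∈ L, Tendsto (fun N => g N a) atTop (nhds (c a))) :
    Tendsto (fun N => (L.map (g N)).sum) atTop (nhds (L.map c).sum) := by
  induction L with
  | nil => simp
  | cons a L ih =>
    simp only [List.map_cons, List.sum_cons]
    exact (h a (by simp)).add (ih fun b hb => h b (by simp [hb]))

def Kc (F : Finset (ℤ × ℤ)) (s : ℤ × ℤ → ℝ) (L : Wd → ℝ) (v : Wd) : ℝ :=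
  ((splits v).map (fun p => ∑ q ∈ F, s q * (L (p.1 ++ [some (-q.2)]) * L (p.2 ++ [some q.1])))).sum

lemma LoopSys.step {G F s t l} (h : LoopSys G F s t l) (L : Wd → ℝ) (n : ℕ)
    (ih : ∀ ws, wsdeg ws + ws.length < n → Tendsto (fun N => G N ws) atTop (nhds (ws.map L).prod))
    (v : Wd) (ws) (hn : wsdeg ((none :: v) :: ws) + ((none :: v) :: ws).length ≤ n) :
    Tendsto (fun N => G N ((none :: v) :: ws)) atTop (nhds (Kc F s L v * (ws.map L).prod)) := by
  simp only [h.loop]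
  simp only [wsdeg_cons, wdeg_none, List.length_cons] at hn
  have hN : Tendsto (fun N : ℕ => (N : ℝ)⁻¹) atTop (nhds 0) := tendsto_inv_atTop_nhds_zero_nat
  have e : Kc F s L v * (ws.map L).prod =
    ((splits v).map (fun p => ∑ q ∈ F, s q * (L (p.1 ++ [some (-q.2)]) * (L (p.2 ++ [some q.1])
      * (ws.map L).prod) + 0 * (L (p.1 ++ [some (-q.1)] ++ wtr p.2 ++ [some (-q.2)])
      * (ws.map L).prod)))).sum +
      ((der ws).map (fun p => ∑ q ∈ F, s q * (0 ^ 2 *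
        (L (v ++ [some q.1] ++ wtr p.1 ++ [some (-q.2)]) * (p.2.map L).prod +
         L (v ++ [some q.1] ++ p.1 ++ [some (-q.2)]) * (p.2.map L).prod)))).sum := by
    simp only [Kc, ← List.sum_map_mul_right]
    simp only [ne_eq, OfNat.ofNat_ne_zero, not_false_eq_true, zero_pow, zero_mul, mul_zero,
      Finset.sum_const_zero, List.map_const', List.sum_replicate, smul_zero, add_zero,
      Finset.sum_mul, mul_assoc]
  rw [e]
  refine Tendsto.add (tendsto_lsum _ _ _ fun p hp => tendsto_finsetSum _ fun q _ => ?_)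
    (tendsto_lsum _ _ _ fun p hp => tendsto_finsetSum _ fun q _ => ?_)
  · have hd := splits_deg v p hp
    refine Tendsto.const_mul _ (Tendsto.add ?_ (hN.mul ?_))
    · have := ih ((p.1 ++ [some (-q.2)]) :: (p.2 ++ [some q.1]) :: ws) (by
        simp only [wsdeg_cons, wdeg_append, wdeg_one, List.length_cons]; omega)
      simpa using this
    · have := ih ((p.1 ++ [some (-q.1)] ++ wtr p.2 ++ [some (-q.2)]) :: ws) (by
        simp only [wsdeg_cons, wdeg_append, wdeg_one, wdeg_wtr, List.length_cons]; omega)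
      simpa using this
  · have hd := der_deg ws p hp
    refine Tendsto.const_mul _ ((hN.pow 2).mul (Tendsto.add ?_ ?_))
    · have := ih ((v ++ [some q.1] ++ wtr p.1 ++ [some (-q.2)]) :: p.2) (by
        simp only [wsdeg_cons, wdeg_append, wdeg_one, wdeg_wtr, List.length_cons]; omega)
      simpa using this
    · have := ih ((v ++ [some q.1] ++ p.1 ++ [some (-q.2)]) :: p.2) (by
        simp only [wsdeg_cons, wdeg_append, wdeg_one, List.length_cons]; omega)
      simpa using this

lemma LoopSys.conv {G F s t l} (h : LoopSys G F s t l) :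
    ∃ L : Wd → ℝ, ∀ ws, Tendsto (fun N => G N ws) atTop (nhds (ws.map L).prod) := by
  refine ⟨fun w => limUnder atTop (fun N => G N [w]), ?_⟩
  set L : Wd → ℝ := fun w => limUnder atTop (fun N => G N [w]) with hL
  suffices ∀ n, ∀ ws, wsdeg ws + ws.length < n →
    Tendsto (fun N => G N ws) atTop (nhds (ws.map L).prod) from
    fun ws => this _ ws (Nat.lt_succ_self _)
  intro n
  induction n with
  | zero => intro ws h; omega
  | succ n ih =>
    intro ws hws
    cases ws with
    | nil => simp [h.gnil]
    | cons w ws =>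
      by_cases hw : wdeg w = 0
      · have h1 : Tendsto (fun N => G N [w]) atTop (nhds (l w)) := by
          simp only [h.det _ w _ hw, h.gnil, mul_one]
          exact h.tlim w hw
        have h2 : L w = l w := h1.limUnder_eq
        simp only [List.map_cons, List.prod_cons, h2, h.det _ w _ hw]
        refine (h.tlim w hw).mul (ih ws ?_)
        simp only [wsdeg_cons, List.length_cons] at hws
        omega
      · obtain ⟨a, b, rfl⟩ := exists_rot w hw
        have e : ∀ ws, (fun N => G N ((a ++ none :: b) :: ws)) =
            fun N => G N ((none :: (b ++ a)) :: ws) := by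
          intro ws; funext N; rw [h.cyc]; rfl
        have h1 : Tendsto (fun N => G N [a ++ none :: b]) atTop (nhds (Kc F s L (b ++ a))) := by
          rw [e]
          have := h.step L n ih (b ++ a) [] (by
            simp only [wsdeg_cons, List.length_cons, wdeg_append, wdeg_none] at hws ⊢
            simp [wsdeg]
            omega)
          simpa using this
        have h2 : L (a ++ none :: b) = Kc F s L (b ++ a) := h1.limUnder_eq
        simp only [List.map_cons, List.prod_cons, h2, e]
        refine h.step L n ih (b ++ a) ws (by
            simp only [wsdeg_cons, List.length_cons, wdeg_append, wdeg_none] at hws ⊢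
            omega)

lemma abs_list_sum_le {α : Type*} (L : List α) (g : α → ℝ) (c : ℝ)
    (h : ∀ a ∈ L, |g a| ≤ c) : |(L.map g).sum| ≤ L.length * c := by
  induction L with
  | nil => simp
  | cons a L ih =>
    simp only [List.map_cons, List.sum_cons, List.length_cons]
    have h1 := h a (by simp)
    have h2 := ih fun b hb => h b (by simp [hb])
    push_cast
    calc _ ≤ |g a| + |(L.map g).sum| := abs_add_le _ _
      _ ≤ _ := by linarith

def bnd (S : ℝ) (d : ℕ) : ℝ := (4 * S) ^ (d / 2) * (d / 2).factorial

lemma LoopSys.bound {G F s t l} (h : LoopSys G F s t l) (N : ℕ) (ws : List Wd) :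
    |G N ws| ≤ bnd (∑ q ∈ F, |s q|) (wsdeg ws) := by
  set S := ∑ q ∈ F, |s q| with hS
  have hS0 : 0 ≤ S := Finset.sum_nonneg fun _ _ => abs_nonneg _
  have hb0 : ∀ d, 0 ≤ bnd S d := fun d => by unfold bnd; positivity
  have hN0 : 0 ≤ (N : ℝ)⁻¹ := by positivity
  have hN1 : (N : ℝ)⁻¹ ≤ 1 := Nat.cast_inv_le_one N
  suffices ∀ n, ∀ ws, wsdeg ws + ws.length < n → |G N ws| ≤ bnd S (wsdeg ws) from
    this _ ws (Nat.lt_succ_self _)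
  intro n
  induction n with
  | zero => intro ws h; omega
  | succ n ih =>
    intro ws hws
    cases ws with
    | nil => simp [h.gnil, wsdeg, bnd]
    | cons w ws =>
      simp only [wsdeg_cons, List.length_cons] at hws
      by_cases hw : wdeg w = 0
      · rw [h.det _ w _ hw, abs_mul, wsdeg_cons, hw, zero_add]
        calc _ ≤ 1 * |G N ws| := by gcongr; exact h.tbd N w hw
          _ ≤ _ := by rw [one_mul]; exact ih ws (by omega)
      · obtain ⟨a, b, rfl⟩ := exists_rot w hw
        rw [h.cyc]
        simp only [wdeg_append, wdeg_none] at hws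
        obtain ⟨v, hv⟩ : ∃ v, v = b ++ a := ⟨_, rfl⟩
        have hvd : wdeg v = wdeg b + wdeg a := by rw [hv, wdeg_append]
        have e0 : none :: b ++ a = none :: v := by rw [hv]; rfl
        have e1 : wsdeg ((a ++ none :: b) :: ws) = wdeg v + wsdeg ws + 1 := by
          rw [wsdeg_cons, wdeg_append, wdeg_none]; omega
        rw [e0, e1, h.loop]
        set B := bnd S (wdeg v + wsdeg ws - 1) with hB
        have hB0 : 0 ≤ B := hb0 _
        have key : ∀ (x y : ℤ × ℤ → ℝ), (∀ q, |x q| ≤ B) → (∀ q, |y q| ≤ B) →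
            |∑ q ∈ F, s q * (x q + y q)| ≤ S * (2 * B) := by
          intro x y hx hy
          calc _ ≤ ∑ q ∈ F, |s q * (x q + y q)| := Finset.abs_sum_le_sum_abs _ _
            _ ≤ ∑ q ∈ F, |s q| * (2 * B) := by
              refine Finset.sum_le_sum fun q _ => ?_
              rw [abs_mul]
              gcongr
              calc _ ≤ |x q| + |y q| := abs_add_le _ _
                _ ≤ _ := by linarith [hx q, hy q]
            _ = _ := by rw [← Finset.sum_mul]
        have shr : ∀ c x : ℝ, 0 ≤ c → c ≤ 1 → |x| ≤ B → |c * x| ≤ B := by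
          intro c x hc hc' hx
          rw [abs_mul, abs_of_nonneg hc]
          calc _ ≤ 1 * |x| := by gcongr
            _ ≤ B := by linarith
        have t1 := abs_list_sum_le (splits v) (fun p => ∑ q ∈ F, s q *
          (G N ((p.1 ++ [some (-q.2)]) :: (p.2 ++ [some q.1]) :: ws) +
          (N : ℝ)⁻¹ * G N ((p.1 ++ [some (-q.1)] ++ wtr p.2 ++ [some (-q.2)]) :: ws)))
          (S * (2 * B)) (by
            intro p hp
            have hd := splits_deg v p hp
            refine key _ _ (fun q => ?_) (fun q => shr _ _ hN0 hN1 ?_)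
            · refine (ih _ ?_).trans (le_of_eq ?_)
              · simp only [wsdeg_cons, wdeg_append, wdeg_one, List.length_cons]; omega
              · rw [hB]; congr 1
                simp only [wsdeg_cons, wdeg_append, wdeg_one]; omega
            · refine (ih _ ?_).trans (le_of_eq ?_)
              · simp only [wsdeg_cons, wdeg_append, wdeg_one, List.length_cons, wdeg_wtr]; omega
              · rw [hB]; congr 1
                simp only [wsdeg_cons, wdeg_append, wdeg_one, wdeg_wtr]; omega)
        have t2 := abs_list_sum_le (der ws) (fun p => ∑ q ∈ F, s q * ((N : ℝ)⁻¹ ^ 2 *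
          (G N ((v ++ [some q.1] ++ wtr p.1 ++ [some (-q.2)]) :: p.2) +
           G N ((v ++ [some q.1] ++ p.1 ++ [some (-q.2)]) :: p.2))))
          (S * (2 * B)) (by
            intro p hp
            have hd := der_deg ws p hp
            simp only [mul_add ((N : ℝ)⁻¹ ^ 2)]
            refine key _ _ (fun q => shr _ _ (by positivity) (pow_le_one₀ hN0 hN1) ?_)
              (fun q => shr _ _ (by positivity) (pow_le_one₀ hN0 hN1) ?_)
            · refine (ih _ ?_).trans (le_of_eq ?_)
              · simp only [wsdeg_cons, wdeg_append, wdeg_one, List.length_cons, wdeg_wtr]; omega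
              · rw [hB]; congr 1
                simp only [wsdeg_cons, wdeg_append, wdeg_one, wdeg_wtr]; omega
            · refine (ih _ ?_).trans (le_of_eq ?_)
              · simp only [wsdeg_cons, wdeg_append, wdeg_one, List.length_cons, wdeg_wtr]; omega
              · rw [hB]; congr 1
                simp only [wsdeg_cons, wdeg_append, wdeg_one, wdeg_wtr]; omega)
        rw [splits_length] at t1
        rw [der_length] at t2
        refine (abs_add_le _ _).trans ((add_le_add t1 t2).trans ?_)
        rw [← add_mul, ← Nat.cast_add]
        rcases Nat.eq_zero_or_pos (wdeg v + wsdeg ws) with h0 | h0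
        · rw [h0]; simpa using hb0 1
        · obtain ⟨d, hd⟩ : ∃ d, wdeg v + wsdeg ws = d + 1 := ⟨_, (Nat.sub_add_cancel h0).symm⟩
          rw [hB, hd]
          have e2 : (d + 1 + 1) / 2 = d / 2 + 1 := by omega
          simp only [Nat.add_sub_cancel, bnd, e2, Nat.factorial_succ]
          have h3 : ((d + 1 : ℕ) : ℝ) ≤ 2 * ((d / 2 + 1 : ℕ) : ℝ) := by
            have : d + 1 ≤ 2 * (d / 2 + 1) := by omega
            exact_mod_cast this
          calc _ = ((d + 1 : ℕ) : ℝ) * (2 * S * ((4 * S) ^ (d / 2) * (d / 2).factorial)) := by ring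
            _ ≤ (2 * ((d / 2 + 1 : ℕ) : ℝ)) * (2 * S * ((4 * S) ^ (d / 2) * (d / 2).factorial)) := by
              gcongr
            _ = _ := by push_cast; ring

def Gm (n : ℕ) : ℝ := ∫ x, x ^ n ∂(gaussianReal 0 1)

lemma integrable_pow_gauss (n : ℕ) : Integrable (fun x : ℝ => x ^ n) (gaussianReal 0 1) := by
  rcases Nat.eq_zero_or_pos n with rfl | hn
  · simp
  · have h := (memLp_id_gaussianReal (μ := 0) (v := 1) (n : NNReal))
    have h2 := h.integrable_norm_pow (by omega)
    rw [← integrable_norm_iff (by fun_prop)]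
    simpa using h2

lemma integrable_pow_pdf (n : ℕ) :
    Integrable (fun x : ℝ => x ^ n * gaussianPDFReal 0 1 x) := by
  have h := integrable_pow_gauss n
  rw [gaussianReal_of_var_ne_zero _ one_ne_zero] at h
  rw [integrable_withDensity_iff_integrable_smul' (measurable_gaussianPDF 0 1)
    (ae_of_all _ fun x => gaussianPDF_lt_top)] at h
  refine h.congr (ae_of_all _ fun x => ?_)
  simp only [gaussianPDF, smul_eq_mul]
  rw [ENNReal.toReal_ofReal (gaussianPDFReal_nonneg _ _ _), mul_comm]

lemma Gm_eq (n : ℕ) : Gm n = ∫ x, x ^ n * gaussianPDFReal 0 1 x := by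
  rw [Gm, integral_gaussianReal_eq_integral_smul one_ne_zero]
  simp only [smul_eq_mul, mul_comm]

lemma hasDeriv_pdf (x : ℝ) :
    HasDerivAt (gaussianPDFReal 0 1) (-x * gaussianPDFReal 0 1 x) x := by
  rw [gaussianPDFReal_def]
  have h1 : HasDerivAt (fun x : ℝ => -(x - 0) ^ 2 / (2 * ((1 : NNReal) : ℝ))) (-x) x := by
    have := ((((hasDerivAt_id x).sub_const 0).pow 2).neg).div_const (2 * ((1 : NNReal) : ℝ))
    refine this.congr_deriv ?_
    simp
    ring
  have := (h1.exp).const_mul (√(2 * π * ((1 : NNReal) : ℝ)))⁻¹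
  refine this.congr_deriv ?_
  ring

lemma Gm_succ (n : ℕ) : Gm (n + 1) = n * Gm (n - 1) := by
  rw [Gm_eq, Gm_eq]
  have := integral_mul_deriv_eq_deriv_mul_of_integrable (A := ℝ)
    (u := fun x : ℝ => x ^ n) (u' := fun x => n * x ^ (n - 1))
    (v := gaussianPDFReal 0 1) (v' := fun x => -x * gaussianPDFReal 0 1 x)
    (fun x _ => hasDerivAt_pow n x) (fun x _ => hasDeriv_pdf x)
    (by
      refine (integrable_pow_pdf (n + 1)).neg.congr (ae_of_all _ fun x => ?_)
      simp [pow_succ]; ring)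
    (by
      refine ((integrable_pow_pdf (n - 1)).const_mul (n : ℝ)).congr (ae_of_all _ fun x => ?_)
      simp; ring)
    (integrable_pow_pdf n)
  rw [← integral_const_mul]
  have e1 : (∫ x, x ^ (n + 1) * gaussianPDFReal 0 1 x) =
      - ∫ x, x ^ n * (-x * gaussianPDFReal 0 1 x) := by
    rw [← integral_neg]
    congr 1; funext x; ring
  rw [e1, this, neg_neg]
  congr 1; funext x; ring

section
variable {ι : Type*} [Fintype ι]
open MvPolynomial

def stdG (ι : Type*) [Fintype ι] : Measure (ι → ℝ) := Measure.pi fun _ => gaussianReal 0 1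

instance : IsProbabilityMeasure (stdG ι) := by unfold stdG; infer_instance

lemma eval_mono (x : ι → ℝ) (m : ι →₀ ℕ) (c : ℝ) :
    eval x (monomial m c) = c * ∏ i, x i ^ m i := by
  rw [eval_monomial, Finsupp.prod_fintype]
  simp

lemma integrable_eval_stdG (p : MvPolynomial ι ℝ) : Integrable (fun x => eval x p) (stdG ι) := by
  induction p using MvPolynomial.induction_on' with
  | monomial m c =>
    simp only [eval_mono]
    refine Integrable.const_mul ?_ c
    exact Integrable.fintype_prod (f := fun i x => x ^ m i) fun i => integrable_pow_gauss _
  | add p q hp hq =>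
    simp only [map_add]
    exact hp.add hq

def EG (ι : Type*) [Fintype ι] : MvPolynomial ι ℝ →ₗ[ℝ] ℝ where
  toFun p := ∫ x, eval x p ∂(stdG ι)
  map_add' p q := by
    simp only [map_add]
    exact integral_add (integrable_eval_stdG p) (integrable_eval_stdG q)
  map_smul' c p := by
    simp only [smul_eval, RingHom.id_apply, smul_eq_mul]
    exact integral_const_mul _ _

lemma EG_mono (m : ι →₀ ℕ) (c : ℝ) : EG ι (monomial m c) = c * ∏ i, Gm (m i) := by
  change ∫ x, eval x (monomial m c) ∂(stdG ι) = _
  simp only [eval_mono]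
  rw [integral_const_mul, stdG, integral_fintype_prod_eq_prod (f := fun i x => x ^ m i)]
  rfl

lemma EG_ibp (i : ι) (p : MvPolynomial ι ℝ) : EG ι (X i * p) = EG ι (pderiv i p) := by
  classical
  induction p using MvPolynomial.induction_on' with
  | monomial m c =>
    rw [pderiv_monomial, X, monomial_mul, EG_mono, EG_mono, one_mul, mul_assoc]
    congr 1
    rw [← Finset.mul_prod_erase _ _ (Finset.mem_univ i),
      ← Finset.mul_prod_erase _ (fun j => Gm ((m - Finsupp.single i 1 : ι →₀ ℕ) j)) (Finset.mem_univ i),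
      ← mul_assoc]
    congr 1
    · simp [add_comm 1, Gm_succ]
    · refine Finset.prod_congr rfl fun j hj => ?_
      have hj' : i ≠ j := fun h => by simp [h] at hj
      simp [Finsupp.single_apply, hj']
  | add p q hp hq => rw [mul_add, map_add, hp, hq, map_add, map_add]
end

/-! deterministic words -/
def wsum (w : Wd) : ℤ := (w.map (fun o => o.getD 0)).sum
def wabs (w : Wd) : ℤ := (w.map (fun o => |o.getD 0|)).sum

def pw (N : ℕ) : Wd → ℤ → ℕ
  | [], _ => 1
  | o :: w, i => if 0 ≤ i + o.getD 0 ∧ i + o.getD 0 < N then pw N w (i + o.getD 0) else 0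

lemma pw_le (N : ℕ) (w : Wd) (i : ℤ) : pw N w i ≤ 1 := by
  induction w generalizing i with
  | nil => simp [pw]
  | cons o w ih => simp only [pw]; split_ifs; exacts [ih _, by simp]

lemma wabs_nonneg (w : Wd) : 0 ≤ wabs w := by
  unfold wabs
  exact List.sum_nonneg (by intro x hx; simp at hx; obtain ⟨a, _, rfl⟩ := hx; exact abs_nonneg _)

lemma pw_bulk (N : ℕ) (w : Wd) (i : ℤ) (h1 : wabs w ≤ i) (h2 : i + wabs w < N) :
    pw N w i = 1 := by
  induction w generalizing i with
  | nil => simp [pw]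
  | cons o w ih =>
    have e : wabs (o :: w) = |o.getD 0| + wabs w := by simp [wabs]
    rw [e] at h1 h2
    have := wabs_nonneg w
    have h3 := neg_abs_le (o.getD 0)
    have h4 := le_abs_self (o.getD 0)
    simp only [pw]
    rw [if_pos ⟨by omega, by omega⟩]
    exact ih _ (by omega) (by omega)

lemma evw_det {R : Type*} [CommRing R] {N : ℕ} (A : Matrix (Fin N) (Fin N) R) (w : Wd)
    (hw : wdeg w = 0) (i j : Fin N) :
    evw A w i j = if (j : ℤ) - i = wsum w then (pw N w i : R) else 0 := by
  induction w generalizing i with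
  | nil =>
    simp only [evw_nil, wsum, pw, Matrix.one_apply, List.map_nil, List.sum_nil, Nat.cast_one]
    congr 1
    apply propext
    rw [Fin.ext_iff]
    omega
  | cons o w ih =>
    cases o with
    | none => simp [wdeg] at hw
    | some a =>
      have hw' : wdeg w = 0 := by simpa [wdeg] using hw
      have e : wsum (some a :: w) = a + wsum w := by simp [wsum]
      rw [evw_cons, Matrix.mul_apply, e]
      simp only [ih hw', lett, Tm, pw, Option.getD_some]
      by_cases h : 0 ≤ (i : ℤ) + a ∧ (i : ℤ) + a < N
      · rw [if_pos h]
        have hk : ((i : ℤ) + a).toNat < N := by omega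
        rw [Finset.sum_eq_single (⟨((i : ℤ) + a).toNat, hk⟩ : Fin N)]
        · have e2 : ((((i : ℤ) + a).toNat : ℕ) : ℤ) = i + a := by omega
          simp only [e2, add_sub_cancel_left, if_true, one_mul]
          congr 1
          apply propext; constructor <;> intro h <;> omega
        · intro k _ hk2
          rw [if_neg, zero_mul]
          intro h3
          apply hk2
          rw [Fin.ext_iff]
          simp only
          omega
        · simp
      · rw [if_neg h]
        simp only [Nat.cast_zero, ite_self]
        refine Finset.sum_eq_zero fun k _ => ?_
        rw [if_neg, zero_mul]
        intro h3
        apply h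
        have := k.2
        omega

def tdet (N : ℕ) (w : Wd) : ℝ := (N : ℝ)⁻¹ * ∑ i : Fin N, if wsum w = 0 then (pw N w i : ℝ) else 0
def ldet (w : Wd) : ℝ := if wsum w = 0 then 1 else 0

lemma tdet_bd (N : ℕ) (w : Wd) : |tdet N w| ≤ 1 := by
  unfold tdet
  rcases Nat.eq_zero_or_pos N with rfl | hN
  · simp
  have h0 : 0 ≤ ∑ i : Fin N, (if wsum w = 0 then (pw N w i : ℝ) else 0) :=
    Finset.sum_nonneg fun i _ => by split_ifs <;> positivity
  have h1 : ∑ i : Fin N, (if wsum w = 0 then (pw N w i : ℝ) else 0) ≤ ∑ i : Fin N, (1 : ℝ) :=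
    Finset.sum_le_sum fun i _ => by
      split_ifs
      · exact_mod_cast pw_le N w i
      · simp
  rw [abs_of_nonneg (by positivity)]
  rw [Finset.sum_const, Finset.card_univ, Fintype.card_fin, nsmul_eq_mul] at h1
  have : (0 : ℝ) < N := by exact_mod_cast hN
  rw [inv_mul_le_iff₀ this]
  linarith

lemma tdet_lim (w : Wd) : Tendsto (fun N => tdet N w) atTop (nhds (ldet w)) := by
  unfold tdet ldet
  split_ifs with h
  · obtain ⟨c, hc⟩ : ∃ c : ℕ, wabs w = c := ⟨(wabs w).toNat, by
      rw [Int.toNat_of_nonneg (wabs_nonneg w)]⟩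
    have hl : Tendsto (fun N : ℕ => 1 - (2 * c : ℝ) * (N : ℝ)⁻¹) atTop (nhds 1) := by
      have := (tendsto_inv_atTop_nhds_zero_nat (𝕜 := ℝ)).const_mul (2 * c : ℝ)
      simpa using this.const_sub 1
    refine tendsto_of_tendsto_of_tendsto_of_le_of_le' hl tendsto_const_nhds ?_ ?_
    · filter_upwards [eventually_gt_atTop 0] with N hN
      have hN' : (0 : ℝ) < N := by exact_mod_cast hN
      have key : (N : ℝ) - 2 * c ≤ ∑ i : Fin N, (pw N w i : ℝ) := by
        have h1 : ∀ i : Fin N, 1 - (if (i : ℕ) < c then (1 : ℝ) else 0) -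
            (if N - c ≤ (i : ℕ) then (1 : ℝ) else 0) ≤ (pw N w i : ℝ) := by
          intro i
          by_cases h1 : (i : ℕ) < c
          · rw [if_pos h1]
            have : (0 : ℝ) ≤ pw N w i := by positivity
            split_ifs <;> linarith
          by_cases h2 : N - c ≤ (i : ℕ)
          · rw [if_pos h2]
            have : (0 : ℝ) ≤ pw N w i := by positivity
            split_ifs <;> linarith
          rw [if_neg h1, if_neg h2, pw_bulk N w i (by omega) (by omega)]
          simp
        have h2 := Finset.sum_le_sum fun (i : Fin N) (_ : i ∈ Finset.univ) => h1 i
        refine le_trans ?_ h2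
        rw [Finset.sum_sub_distrib, Finset.sum_sub_distrib, Finset.sum_boole, Finset.sum_boole]
        have c1 : (Finset.univ.filter fun i : Fin N => (i : ℕ) < c).card ≤ c := by
          rw [← Finset.card_range c]
          refine Finset.card_le_card_of_injOn (fun i => (i : ℕ)) ?_ (fun a _ b _ h => Fin.ext h)
          intro i hi; simpa using hi
        have c2 : (Finset.univ.filter fun i : Fin N => N - c ≤ (i : ℕ)).card ≤ c := by
          have : (Finset.Ico (N - c) N).card ≤ c := by simp; omega
          refine le_trans ?_ this
          refine Finset.card_le_card_of_injOn (fun i => (i : ℕ)) ?_ (fun a _ b _ h => Fin.ext h)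
          intro i hi; simpa using hi
        have c1' : ((Finset.univ.filter fun i : Fin N => (i : ℕ) < c).card : ℝ) ≤ c := by
          exact_mod_cast c1
        have c2' : ((Finset.univ.filter fun i : Fin N => N - c ≤ (i : ℕ)).card : ℝ) ≤ c := by
          exact_mod_cast c2
        simp only [Finset.sum_const, Finset.card_univ, Fintype.card_fin, nsmul_eq_mul, mul_one]
        linarith
      calc 1 - (2 * c : ℝ) * (N : ℝ)⁻¹ = (N : ℝ)⁻¹ * (N - 2 * c) := by field_simp
        _ ≤ _ := by gcongr
    · refine Eventually.of_forall fun N => ?_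
      have := le_of_abs_le (tdet_bd N w)
      simpa [tdet, h] using this
  · simp

section
variable {N : ℕ} {ι : Type*} [Fintype ι]
open MvPolynomial
lemma ntr_det (A : Matrix (Fin N) (Fin N) (MvPolynomial ι ℝ)) (w : Wd) (hw : wdeg w = 0) :
    ntr (evw A w) = C (tdet N w) := by
  rw [ntr, tdet, C_mul, map_sum]
  congr 1
  simp only [Matrix.trace, Matrix.diag, evw_det A w hw, sub_self]
  refine Finset.sum_congr rfl fun i _ => ?_
  by_cases h : wsum w = 0
  · simp [h]
  · simp [h, Ne.symm h]
end

open MvPolynomial in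
lemma loopSys_of {ι : ℕ → Type} [∀ N, Fintype (ι N)]
    (H : ∀ N, ι N → Matrix (Fin N) (Fin N) ℝ) (F : Finset (ℤ × ℤ)) (s : ℤ × ℤ → ℝ)
    (hc : ∀ N, CovH (H N) F s) (hs : ∀ N i, (H N i).transpose = H N i) :
    LoopSys (fun N ws => EG (ι N) (Phi (H N) ws)) F s tdet ldet where
  gnil N := by
    have : (Phi (H N) [] : MvPolynomial (ι N) ℝ) = 1 := by simp [Phi]
    simp only [this]
    change ∫ x, eval x 1 ∂(stdG (ι N)) = 1
    simp
  cyc N w1 w2 ws := by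
    simp only [Phi_cons, evw_append]
    rw [ntr_mul_comm]
  det N w ws hw := by
    simp only [Phi_cons]
    rw [ntr_det _ _ hw, C_mul', map_smul, smul_eq_mul]
  tlim w hw := tdet_lim w
  tbd N w hw := tdet_bd N w
  loop N v ws := loop_eq (hc N) (hs N) (EG (ι N)) EG_ibp v ws

abbrev VV (N : ℕ) := Fin N × Fin N → ℝ

def Smat (N : ℕ) (x : VV N) : Matrix (Fin N) (Fin N) ℝ :=
  fun i j => (Real.sqrt N)⁻¹ * (x (i, j) + x (j, i))

lemma Smat_herm (N : ℕ) (x : VV N) : (Smat N x).IsHermitian := by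
  ext i j
  simp [Smat, add_comm]

def ev {N : ℕ} (x : VV N) (j : Fin N) : ℝ := (Smat_herm N x).eigenvalues j

def mev {N : ℕ} (x : VV N) (φ : ℝ → ℂ) : ℂ := (N : ℂ)⁻¹ * ∑ j, φ (ev x j)

lemma esd_eq {N : ℕ} (x : VV N) (g : ℝ → ℝ) :
    ((esdEval (Smat N x) g : ℝ) : ℂ) = mev x (fun t => (g t : ℂ)) := by
  rw [esdEval, dif_pos (Smat_herm N x), mev]
  push_cast
  rfl

lemma trace_pow_herm {N : ℕ} {A : Matrix (Fin N) (Fin N) ℝ} (hA : A.IsHermitian) (k : ℕ) :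
    (A ^ k).trace = ∑ j, (hA.eigenvalues j) ^ k := by
  conv_lhs => rw [hA.spectral_theorem]
  rw [← map_pow, Unitary.conjStarAlgAut_apply, Matrix.trace_mul_cycle]
  simp [Matrix.diagonal_pow, Matrix.trace]

lemma mev_pow {N : ℕ} (x : VV N) (k : ℕ) :
    mev x (fun t => (t : ℂ) ^ k) = (((N : ℝ)⁻¹ * (Smat N x ^ k).trace : ℝ) : ℂ) := by
  rw [trace_pow_herm (Smat_herm N x), mev]
  push_cast
  rfl

lemma mev_add {N : ℕ} (x : VV N) (φ ψ : ℝ → ℂ) :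
    mev x (fun t => φ t + ψ t) = mev x φ + mev x ψ := by
  simp only [mev, Finset.sum_add_distrib, mul_add]

lemma mev_sub {N : ℕ} (x : VV N) (φ ψ : ℝ → ℂ) :
    mev x (fun t => φ t - ψ t) = mev x φ - mev x ψ := by
  simp only [mev, Finset.sum_sub_distrib, mul_sub]

lemma mev_smul {N : ℕ} (x : VV N) (c : ℂ) (φ : ℝ → ℂ) :
    mev x (fun t => c * φ t) = c * mev x φ := by
  simp only [mev, ← Finset.mul_sum]; ring

lemma mev_sum {N : ℕ} {α : Type*} (x : VV N) (s : Finset α) (φ : α → ℝ → ℂ) :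
    mev x (fun t => ∑ a ∈ s, φ a t) = ∑ a ∈ s, mev x (φ a) := by
  simp only [mev, ← Finset.mul_sum]
  rw [Finset.sum_comm]

lemma mev_norm_le {N : ℕ} (x : VV N) (φ : ℝ → ℂ) (ψ : ℝ → ℝ) (h : ∀ t, ‖φ t‖ ≤ ψ t) :
    ‖mev x φ‖ ≤ (mev x (fun t => (ψ t : ℂ))).re := by
  have : (mev x (fun t => (ψ t : ℂ))) = (((N : ℝ)⁻¹ * ∑ j, ψ (ev x j) : ℝ) : ℂ) := by
    rw [mev]; push_cast; rfl
  rw [this, Complex.ofReal_re, mev, norm_mul, norm_inv, Complex.norm_natCast]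
  gcongr
  refine (norm_sum_le _ _).trans (Finset.sum_le_sum fun j _ => h _)

lemma mev_one {N : ℕ} (hN : 0 < N) (x : VV N) (c : ℂ) : mev x (fun _ => c) = c := by
  have : (N : ℂ) ≠ 0 := by exact_mod_cast hN.ne'
  simp only [mev, Finset.sum_const, Finset.card_univ, Fintype.card_fin, nsmul_eq_mul]
  field_simp

lemma mev_norm_le_const {N : ℕ} (x : VV N) (φ : ℝ → ℂ) (c : ℝ) (hc : 0 ≤ c) (h : ∀ t, ‖φ t‖ ≤ c) :
    ‖mev x φ‖ ≤ c := by
  rcases Nat.eq_zero_or_pos N with rfl | hN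
  · simpa [mev] using hc
  refine (mev_norm_le x φ (fun _ => c) h).trans (le_of_eq ?_)
  rw [mev_one hN, Complex.ofReal_re]

/-! measurability -/
lemma meas_Smat (N : ℕ) (i j : Fin N) : Continuous (fun x : VV N => Smat N x i j) := by
  unfold Smat; fun_prop

lemma cont_Smat (N : ℕ) : Continuous (fun x : VV N => Smat N x) :=
  continuous_matrix fun i j => meas_Smat N i j

lemma meas_mev_pow (N : ℕ) (k : ℕ) : Measurable (fun x : VV N => mev x (fun t => (t : ℂ) ^ k)) := by
  simp only [mev_pow]
  refine Continuous.measurable ?_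
  have := (cont_Smat N).pow k
  exact Complex.continuous_ofReal.comp (continuous_const.mul this.matrix_trace)

lemma exists_poly_seq (g : ℝ → ℝ) (hg : Continuous g) :
    ∃ p : ℕ → Polynomial ℝ, ∀ x, Tendsto (fun n => (p n).eval x) atTop (nhds (g x)) := by
  have : ∀ n : ℕ, ∃ p : Polynomial ℝ, ∀ x ∈ Set.Icc (-(n : ℝ)) n, |p.eval x - g x| < 1 / (n + 1) :=
    fun n => exists_polynomial_near_of_continuousOn _ _ g hg.continuousOn _ (by positivity)
  choose p hp using this
  refine ⟨p, fun x => ?_⟩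
  rw [tendsto_iff_norm_sub_tendsto_zero]
  refine squeeze_zero' (Eventually.of_forall fun _ => norm_nonneg _) ?_
    tendsto_one_div_add_atTop_nhds_zero_nat
  obtain ⟨M, hM⟩ := exists_nat_ge |x|
  filter_upwards [eventually_ge_atTop M] with n hn
  have h1 : |x| ≤ n := hM.trans (by exact_mod_cast hn)
  exact (hp n x (abs_le.1 h1)).le

lemma meas_mev_poly (N : ℕ) (p : Polynomial ℝ) :
    Measurable (fun x : VV N => mev x (fun t => ((p.eval t : ℝ) : ℂ))) := by
  have : ∀ x : VV N, mev x (fun t => ((p.eval t : ℝ) : ℂ)) =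
      ∑ k ∈ Finset.range (p.natDegree + 1), (p.coeff k : ℂ) * mev x (fun t => (t : ℂ) ^ k) := by
    intro x
    simp only [Polynomial.eval_eq_sum_range, Complex.ofReal_sum, Complex.ofReal_mul,
      Complex.ofReal_pow, mev_sum, mev_smul]
  simp only [this]
  exact Finset.measurable_sum _ fun k _ => (meas_mev_pow N k).const_mul _

lemma meas_mev_real (N : ℕ) (g : ℝ → ℝ) (hg : Continuous g) :
    Measurable (fun x : VV N => mev x (fun t => (g t : ℂ))) := by
  obtain ⟨p, hp⟩ := exists_poly_seq g hg
  refine measurable_of_tendsto_metrizable (fun n => meas_mev_poly N (p n)) ?_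
  rw [tendsto_pi_nhds]
  intro x
  unfold mev
  refine Tendsto.const_mul _ (tendsto_finsetSum _ fun j _ => ?_)
  exact (Complex.continuous_ofReal.tendsto _).comp (hp _)

lemma meas_mev (N : ℕ) (φ : ℝ → ℂ) (hφ : Continuous φ) :
    Measurable (fun x : VV N => mev x φ) := by
  have e : φ = fun t => ((φ t).re : ℂ) + Complex.I * ((φ t).im : ℂ) := by
    funext t; rw [mul_comm, Complex.re_add_im]
  have : ∀ x : VV N, mev x φ = mev x (fun t => ((φ t).re : ℂ)) +
      Complex.I * mev x (fun t => ((φ t).im : ℂ)) := by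
    intro x
    conv_lhs => rw [e]
    rw [mev_add, mev_smul]
  simp only [this]
  exact (meas_mev_real N _ (Complex.continuous_re.comp hφ)).add
    ((meas_mev_real N _ (Complex.continuous_im.comp hφ)).const_mul _)

/-! the distance functional -/
def aN {N : ℕ} (m : Measure (VV N)) (φ : ℝ → ℂ) (c : ℂ) : ENNReal := ∫⁻ x, ‖mev x φ - c‖ₑ ∂m

lemma exists_lim (a : ℕ → ℂ → ENNReal) (h1 : ∀ N c c', a N c ≤ a N c' + ‖c' - c‖ₑ)
    (h2 : ∀ N c c', ‖c - c'‖ₑ ≤ a N c + a N c')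
    (h : ∀ ε : ℝ, 0 < ε → ∃ c, ∀ᶠ N in atTop, a N c ≤ ENNReal.ofReal ε) :
    ∃ c, Tendsto (fun N => a N c) atTop (nhds 0) := by
  have hp : ∀ n : ℕ, (0 : ℝ) < (1 / 2) ^ n := fun n => by positivity
  choose c hc using fun n : ℕ => h ((1 / 2) ^ n) (hp n)
  have hd : ∀ n m, ‖c n - c m‖ ≤ (1 / 2) ^ n + (1 / 2) ^ m := by
    intro n m
    obtain ⟨N, hN1, hN2⟩ := ((hc n).and (hc m)).exists
    have := (h2 N (c n) (c m)).trans (add_le_add hN1 hN2)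
    rw [← ENNReal.ofReal_add (hp n).le (hp m).le, ← ofReal_norm_eq_enorm,
      ENNReal.ofReal_le_ofReal_iff (by have := hp n; have := hp m; linarith)] at this
    exact this
  have hlim0 : Tendsto (fun n : ℕ => (1 / 2 : ℝ) ^ n) atTop (nhds 0) :=
    tendsto_pow_atTop_nhds_zero_of_lt_one (by norm_num) (by norm_num)
  have hcau : CauchySeq c := by
    refine cauchySeq_of_le_tendsto_0 (fun n => 2 * (1 / 2 : ℝ) ^ n) ?_ (by simpa using hlim0.const_mul 2)
    intro n m k hn hm
    rw [dist_eq_norm]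
    refine (hd n m).trans ?_
    have e1 : (1 / 2 : ℝ) ^ n ≤ (1 / 2) ^ k := pow_le_pow_of_le_one (by norm_num) (by norm_num) hn
    have e2 : (1 / 2 : ℝ) ^ m ≤ (1 / 2) ^ k := pow_le_pow_of_le_one (by norm_num) (by norm_num) hm
    linarith
  obtain ⟨c0, hc0⟩ := cauchySeq_tendsto_of_complete hcau
  refine ⟨c0, ?_⟩
  rw [ENNReal.tendsto_nhds_zero]
  intro ε hε
  have hl : Tendsto (fun n : ℕ => ENNReal.ofReal ((1 / 2) ^ n) + ‖c n - c0‖ₑ) atTop (nhds 0) := by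
    have e1 : Tendsto (fun n : ℕ => ENNReal.ofReal ((1 / 2) ^ n)) atTop (nhds 0) := by
      simpa using ENNReal.tendsto_ofReal hlim0
    have e2 : Tendsto (fun n : ℕ => ‖c n - c0‖ₑ) atTop (nhds 0) := by
      have := ((hc0.sub_const c0).enorm)
      simpa using this
    simpa using e1.add e2
  obtain ⟨n, hn⟩ := ((ENNReal.tendsto_nhds_zero.1 hl) ε hε).exists
  filter_upwards [hc n] with N hN
  refine (h1 N c0 (c n)).trans (le_trans ?_ hn)
  gcongr

lemma aN_h1 {N : ℕ} (m : Measure (VV N)) [IsProbabilityMeasure m] (φ : ℝ → ℂ) (c c' : ℂ) :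
    aN m φ c ≤ aN m φ c' + ‖c' - c‖ₑ := by
  unfold aN
  calc _ ≤ ∫⁻ x, (‖mev x φ - c'‖ₑ + ‖c' - c‖ₑ) ∂m := by
        refine lintegral_mono fun x => ?_
        have : mev x φ - c = (mev x φ - c') + (c' - c) := by ring
        rw [this]; exact enorm_add_le _ _
    _ = _ := by rw [lintegral_add_right _ measurable_const]; simp

lemma aN_h2 {N : ℕ} (m : Measure (VV N)) [IsProbabilityMeasure m] (φ : ℝ → ℂ) (hφ : Continuous φ)
    (c c' : ℂ) : ‖c - c'‖ₑ ≤ aN m φ c + aN m φ c' := by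
  unfold aN
  calc _ = ∫⁻ x, ‖c - c'‖ₑ ∂m := by simp
    _ ≤ ∫⁻ x, (‖mev x φ - c‖ₑ + ‖mev x φ - c'‖ₑ) ∂m := by
        refine lintegral_mono fun x => ?_
        have : c - c' = - (mev x φ - c) + (mev x φ - c') := by ring
        rw [this]; refine (enorm_add_le _ _).trans ?_
        rw [enorm_neg]
    _ = _ := by rw [lintegral_add_left ((meas_mev N φ hφ).sub_const c).enorm]

def Cv (m : ∀ N, Measure (VV N)) (φ : ℝ → ℂ) (c : ℂ) : Prop :=
  Tendsto (fun N => aN (m N) φ c) atTop (nhds 0)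

lemma aN_phi {N : ℕ} (m : Measure (VV N)) (φ ψ : ℝ → ℂ) (hφ : Continuous φ) (hψ : Continuous ψ)
    (c : ℂ) : aN m φ c ≤ aN m ψ c + aN m (fun t => φ t - ψ t) 0 := by
  unfold aN
  rw [← lintegral_add_left ((meas_mev N ψ hψ).sub_const c).enorm]
  refine lintegral_mono fun x => ?_
  have : mev x φ - c = (mev x ψ - c) + (mev x (fun t => φ t - ψ t) - 0) := by rw [mev_sub]; ring
  rw [this]; exact enorm_add_le _ _

/-- closure under approximation of test functions -/
lemma Cv_approx (m : ∀ N, Measure (VV N)) [∀ N, IsProbabilityMeasure (m N)] (φ : ℝ → ℂ)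
    (hφ : Continuous φ)
    (h : ∀ ε : ℝ, 0 < ε → ∃ ψ c, Continuous ψ ∧ Cv m ψ c ∧
      ∀ᶠ N in atTop, aN (m N) (fun t => φ t - ψ t) 0 ≤ ENNReal.ofReal ε) :
    ∃ c, Cv m φ c := by
  refine exists_lim (fun N c => aN (m N) φ c) (fun N => aN_h1 _ _) (fun N => aN_h2 _ _ hφ) ?_
  intro ε hε
  obtain ⟨ψ, c, hψ, hc, h'⟩ := h (ε / 2) (by positivity)
  refine ⟨c, ?_⟩
  have h3 := (ENNReal.tendsto_nhds_zero.1 hc) (ENNReal.ofReal (ε / 2)) (by simpa using hε)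
  filter_upwards [h', h3] with N hN1 hN2
  refine (aN_phi _ φ ψ hφ hψ c).trans ((add_le_add hN2 hN1).trans (le_of_eq ?_))
  rw [← ENNReal.ofReal_add (by positivity) (by positivity)]
  congr 1; ring

lemma Cv_add {m : ∀ N, Measure (VV N)} {φ ψ : ℝ → ℂ} {c d : ℂ} (hφ : Continuous φ)
    (h1 : Cv m φ c) (h2 : Cv m ψ d) : Cv m (fun t => φ t + ψ t) (c + d) := by
  have := h1.add h2
  rw [add_zero] at this
  refine tendsto_of_tendsto_of_tendsto_of_le_of_le tendsto_const_nhds this (fun _ => zero_le) ?_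
  intro N
  simp only [aN]
  rw [← lintegral_add_left ((meas_mev N φ hφ).sub_const c).enorm]
  refine lintegral_mono fun x => ?_
  rw [mev_add, add_sub_add_comm]
  exact enorm_add_le _ _

lemma Cv_smul {m : ∀ N, Measure (VV N)} {φ : ℝ → ℂ} {c : ℂ} (hφ : Continuous φ) (a : ℂ)
    (h1 : Cv m φ c) : Cv m (fun t => a * φ t) (a * c) := by
  have h := ENNReal.Tendsto.const_mul (a := ‖a‖ₑ) h1 (Or.inr (by simp))
  rw [mul_zero] at h
  refine h.congr fun N => ?_
  simp only [aN]
  rw [← lintegral_const_mul _ ((meas_mev N φ hφ).sub_const c).enorm]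
  refine lintegral_congr fun x => ?_
  rw [mev_smul, ← mul_sub, enorm_mul]

lemma Cv_zero (m : ∀ N, Measure (VV N)) : Cv m (fun _ => 0) 0 := by
  simp [Cv, aN, mev]

lemma Cv_sum {α : Type*} {m : ∀ N, Measure (VV N)} {φ : α → ℝ → ℂ} {c : α → ℂ} (s : Finset α)
    (hφ : ∀ a, Continuous (φ a)) (h : ∀ a ∈ s, Cv m (φ a) (c a)) :
    Cv m (fun t => ∑ a ∈ s, φ a t) (∑ a ∈ s, c a) := by
  classical
  induction s using Finset.induction_on with
  | empty => simpa using Cv_zero m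
  | insert a s ha ih =>
    simp only [Finset.sum_insert ha]
    exact Cv_add (hφ a) (h a (by simp)) (ih fun b hb => h b (by simp [hb]))

lemma Cv_unique {m : ∀ N, Measure (VV N)} [∀ N, IsProbabilityMeasure (m N)] {φ : ℝ → ℂ}
    (hφ : Continuous φ) {c d : ℂ} (h1 : Cv m φ c) (h2 : Cv m φ d) : c = d := by
  have h3 := h1.add h2
  rw [add_zero] at h3
  have : ‖c - d‖ₑ ≤ 0 := ge_of_tendsto h3 (Eventually.of_forall fun N => aN_h2 (m N) φ hφ c d)
  have := nonpos_iff_eq_zero.1 this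
  rw [enorm_eq_zero] at this
  exact sub_eq_zero.1 this

lemma Cv_meas (m : ∀ N, Measure (VV N)) [∀ N, IsProbabilityMeasure (m N)] (φ : ℝ → ℂ)
    (hφ : Continuous φ)
    (h : ∀ ε : ℝ, 0 < ε → ∃ (m' : ∀ N, Measure (VV N)) (c : ℂ), Cv m' φ c ∧
      ∀ᶠ N in atTop, aN (m N) φ c ≤ aN (m' N) φ c + ENNReal.ofReal ε) :
    ∃ c, Cv m φ c := by
  refine exists_lim (fun N c => aN (m N) φ c) (fun N => aN_h1 _ _) (fun N => aN_h2 _ _ hφ) ?_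
  intro ε hε
  obtain ⟨m', c, hc, h'⟩ := h (ε / 2) (by positivity)
  refine ⟨c, ?_⟩
  have h3 := (ENNReal.tendsto_nhds_zero.1 hc) (ENNReal.ofReal (ε / 2)) (by simpa using hε)
  filter_upwards [h', h3] with N hN1 hN2
  refine hN1.trans ((add_le_add hN2 le_rfl).trans (le_of_eq ?_))
  rw [← ENNReal.ofReal_add (by positivity) (by positivity)]
  congr 1; ring

def Dn (n : ℕ) (y : ℝ) : ℂ := Complex.exp (Complex.I * y) -
  ∑ k ∈ Finset.range n, (Complex.I * y) ^ k / k.factorial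

lemma Dn_deriv (n : ℕ) (y : ℝ) : HasDerivAt (Dn (n + 1)) (Complex.I * Dn n y) y := by
  have h0 : HasDerivAt (fun y : ℝ => Complex.I * (y : ℂ)) Complex.I y := by
    simpa using (Complex.ofRealCLM.hasDerivAt (x := y)).const_mul Complex.I
  have h1 := h0.cexp
  have h2 : ∀ n : ℕ, HasDerivAt (fun y : ℝ => ∑ k ∈ Finset.range (n + 1), (Complex.I * y) ^ k / (k.factorial : ℂ))
      (Complex.I * ∑ k ∈ Finset.range n, (Complex.I * y) ^ k / k.factorial) y := by
    intro n
    induction n with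
    | zero => simpa using hasDerivAt_const y (1 : ℂ)
    | succ n ih =>
      simp only [Finset.sum_range_succ _ (n + 1)]
      have h3 := ih.add ((h0.pow (n + 1)).div_const ((n + 1).factorial : ℂ))
      refine h3.congr_deriv ?_
      rw [Finset.sum_range_succ, Nat.factorial_succ]
      have : (n.factorial : ℂ) ≠ 0 := by exact_mod_cast n.factorial_ne_zero
      have h4 : ((n : ℂ) + 1) ≠ 0 := by exact_mod_cast n.succ_ne_zero
      push_cast
      field_simp
  refine (h1.sub (h2 n)).congr_deriv ?_
  rw [Dn]; ring

lemma Dn_bound_pos (n : ℕ) (y : ℝ) (hy : 0 ≤ y) : ‖Dn n y‖ ≤ y ^ n / n.factorial := by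
  induction n generalizing y with
  | zero => simp [Dn, Complex.norm_exp]
  | succ n ih =>
    have := image_norm_le_of_norm_deriv_right_le_deriv_boundary (a := 0) (b := y) (f := Dn (n + 1))
      (f' := fun y => Complex.I * Dn n y) (B := fun y => y ^ (n + 1) / (n + 1).factorial)
      (B' := fun y => y ^ n / n.factorial)
      (fun x _ => (Dn_deriv n x).continuousAt.continuousWithinAt)
      (fun x _ => (Dn_deriv n x).hasDerivWithinAt)
      (by simp [Dn, Finset.sum_range_succ'])
      (fun x => by
        refine ((hasDerivAt_pow (n + 1) x).div_const ((n + 1).factorial : ℝ)).congr_deriv ?_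
        rw [Nat.factorial_succ]
        have : (n.factorial : ℝ) ≠ 0 := by exact_mod_cast n.factorial_ne_zero
        push_cast
        field_simp)
      (fun x hx => by simpa using ih x hx.1)
    exact this (Set.right_mem_Icc.2 hy)

lemma Dn_bound (n : ℕ) (y : ℝ) : ‖Dn n y‖ ≤ |y| ^ n / n.factorial := by
  rcases le_total 0 y with h | h
  · rw [abs_of_nonneg h]; exact Dn_bound_pos n y h
  · have e : Dn n y = (starRingEnd ℂ) (Dn n (-y)) := by
      simp [Dn, ← Complex.exp_conj]
    rw [abs_of_nonpos h, e, RCLike.norm_conj]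
    exact Dn_bound_pos n (-y) (by linarith)

section
variable {N : ℕ} {ι : Type} [Fintype ι] [DecidableEq ι]
open MvPolynomial

def HL (L : (ι → ℝ) →ₗ[ℝ] VV N) (i : ι) : Matrix (Fin N) (Fin N) ℝ :=
  Smat N (L (Pi.single i 1))

lemma Smat_L (L : (ι → ℝ) →ₗ[ℝ] VV N) (x : ι → ℝ) (j k : Fin N) :
    Smat N (L x) j k = ∑ i, HL L i j k * x i := by
  have : L x = ∑ i, x i • L (Pi.single i 1) := by
    conv_lhs => rw [← (Pi.basisFun ℝ ι).sum_repr x]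
    simp [map_sum]
  rw [this]
  simp only [Smat, HL, Finset.sum_apply, Pi.smul_apply, smul_eq_mul]
  rw [← Finset.sum_add_distrib, Finset.mul_sum]
  refine Finset.sum_congr rfl fun i _ => by ring

lemma eval_Ap (L : (ι → ℝ) →ₗ[ℝ] VV N) (x : ι → ℝ) :
    (eval x).mapMatrix (Ap (HL L)) = Smat N (L x) := by
  ext j k
  rw [Smat_L]
  simp [Ap]

def Pk (L : (ι → ℝ) →ₗ[ℝ] VV N) (k : ℕ) : MvPolynomial ι ℝ :=
  ntr (evw (Ap (HL L)) (List.replicate k none))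

lemma eval_Pk (L : (ι → ℝ) →ₗ[ℝ] VV N) (x : ι → ℝ) (k : ℕ) :
    ((eval x (Pk L k) : ℝ) : ℂ) = mev (L x) (fun t => (t : ℂ) ^ k) := by
  rw [mev_pow, Pk, ntr, map_mul, eval_C]
  congr 2
  have e : evw (Ap (HL L)) (List.replicate k none) = Ap (HL L) ^ k := by
    simp [evw, lett]
  rw [e, ← eval_Ap, ← map_pow]
  simp [Matrix.trace]

end

lemma meas_lin {ι : Type} [Fintype ι] {N : ℕ} (L : (ι → ℝ) →ₗ[ℝ] VV N) : Measurable L :=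
  (LinearMap.continuous_of_finiteDimensional L).measurable

section
variable {ι : ℕ → Type} [∀ N, Fintype (ι N)] [∀ N, DecidableEq (ι N)]
  (L : ∀ N, (ι N → ℝ) →ₗ[ℝ] VV N) {F : Finset (ℤ × ℤ)} {s : ℤ × ℤ → ℝ}
  (hc : ∀ N, CovH (HL (L N)) F s)

open MvPolynomial
include hc

lemma loopSys_L : LoopSys (fun N ws => EG (ι N) (Phi (HL (L N)) ws)) F s tdet ldet := by
  refine loopSys_of _ F s hc fun N i => ?_
  exact Smat_herm _ _

lemma nice_pow (k : ℕ) : ∃ c, Cv (fun N => (stdG (ι N)).map (L N)) (fun t => (t : ℂ) ^ k) c := by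
  obtain ⟨l, hl⟩ := (loopSys_L L hc).conv
  set w : Wd := List.replicate k none with hw
  have h1 : Tendsto (fun N => EG (ι N) (Pk (L N) k)) atTop (nhds (l w)) := by
    simpa [Phi, Pk] using hl [w]
  have h2 : Tendsto (fun N => EG (ι N) (Pk (L N) k * Pk (L N) k)) atTop (nhds (l w * l w)) := by
    simpa [Phi, Pk] using hl [w, w]
  set v : ℕ → ℝ := fun N => EG (ι N) ((Pk (L N) k - C (l w)) ^ 2) with hv
  have hvl : Tendsto v atTop (nhds 0) := by
    have e : v = fun N => EG (ι N) (Pk (L N) k * Pk (L N) k) - (2 * l w) * EG (ι N) (Pk (L N) k)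
        + l w ^ 2 := by
      funext N
      have e1 : (Pk (L N) k - C (l w)) ^ 2 =
        Pk (L N) k * Pk (L N) k - (2 * l w) • Pk (L N) k + (l w ^ 2) • (1 : MvPolynomial (ι N) ℝ) := by
        rw [smul_eq_C_mul, smul_eq_C_mul]
        simp only [map_mul, map_pow, map_ofNat]
        ring
      have e2 : EG (ι N) 1 = 1 := by
        change ∫ x, eval x 1 ∂(stdG (ι N)) = 1
        simp
      rw [hv]
      simp only [e1, map_add, map_sub, map_smul, smul_eq_mul, e2, mul_one]
    rw [e]
    have := (h2.sub (h1.const_mul (2 * l w))).add_const (l w ^ 2)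
    convert this using 2
    ring
  refine ⟨(l w : ℂ), ?_⟩
  have hbound : ∀ (N : ℕ) (δ : ℝ), 0 < δ → aN ((stdG (ι N)).map (L N)) (fun t => (t : ℂ) ^ k) (l w)
      ≤ ENNReal.ofReal (δ + δ⁻¹ * v N) := by
    intro N δ hδ
    have hm : Measurable (fun x : VV N => ‖mev x (fun t => (t : ℂ) ^ k) - (l w : ℂ)‖ₑ) :=
      ((meas_mev_pow N k).sub_const _).enorm
    rw [aN, lintegral_map hm (meas_lin (L N))]
    have e1 : v N = ∫ x, eval x ((Pk (L N) k - C (l w)) ^ 2) ∂(stdG (ι N)) := rfl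
    rw [e1, ← integral_const_mul]
    have e2 : δ = ∫ x, δ ∂(stdG (ι N)) := by simp
    conv_rhs => rw [e2]
    have hi : Integrable (fun x => δ⁻¹ * eval x ((Pk (L N) k - C (l w)) ^ 2)) (stdG (ι N)) :=
      (integrable_eval_stdG _).const_mul _
    rw [← integral_add (integrable_const _) (by simpa [← e2] using hi)]
    simp only [integral_const, probReal_univ, smul_eq_mul, one_mul]
    rw [ofReal_integral_eq_lintegral_ofReal (f := fun x => δ + δ⁻¹ *
      eval x ((Pk (L N) k - C (l w)) ^ 2)) ((integrable_const δ).add hi)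
      (ae_of_all _ fun x => by simp only [map_pow, Pi.zero_apply]; positivity)]
    refine lintegral_mono fun x => ?_
    rw [← eval_Pk, ← Complex.ofReal_sub, ← ofReal_norm, Complex.norm_real]
    refine ENNReal.ofReal_le_ofReal ?_
    simp only [map_pow, map_sub, eval_C, norm_eq_abs]
    set y := eval x (Pk (L N) k) - l w
    have h0 : |y| * δ ≤ δ * δ + y ^ 2 := by
      nlinarith [sq_nonneg (|y| - δ), sq_abs y, mul_nonneg (abs_nonneg y) hδ.le]
    calc |y| = δ⁻¹ * (|y| * δ) := by field_simp
      _ ≤ δ⁻¹ * (δ * δ + y ^ 2) := by gcongr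
      _ = _ := by field_simp
  unfold Cv
  rw [ENNReal.tendsto_nhds_zero]
  intro ε hε
  rcases eq_or_ne ε ⊤ with rfl | hεt
  · simp
  have hε' : 0 < ε.toReal := ENNReal.toReal_pos hε.ne' hεt
  set δ := ε.toReal / 2 with hδ
  have hδ0 : 0 < δ := by positivity
  have := (hvl.const_mul δ⁻¹)
  rw [mul_zero] at this
  filter_upwards [this.eventually (gt_mem_nhds hδ0)] with N hN
  refine (hbound N δ hδ0).trans ?_
  rw [← ENNReal.ofReal_toReal hεt]
  refine ENNReal.ofReal_le_ofReal ?_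
  linarith

lemma nice_bound (k : ℕ) (N : ℕ) :
    ∫⁻ x, ‖mev x (fun t => (t : ℂ) ^ (2 * k))‖ₑ ∂((stdG (ι N)).map (L N)) ≤
      ENNReal.ofReal ((4 * ∑ q ∈ F, |s q|) ^ k * k.factorial) := by
  have hm : Measurable (fun x : VV N => ‖mev x (fun t => (t : ℂ) ^ (2 * k))‖ₑ) :=
      (meas_mev_pow N _).enorm
  rw [lintegral_map hm (meas_lin (L N))]
  have h := (loopSys_L L hc).bound N [List.replicate (2 * k) none]
  have e : bnd (∑ q ∈ F, |s q|) (wsdeg [List.replicate (2 * k) none]) =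
      (4 * ∑ q ∈ F, |s q|) ^ k * k.factorial := by
    have : wsdeg [List.replicate (2 * k) none] = 2 * k := by simp [wsdeg, wdeg]
    rw [this, bnd]; simp
  rw [e] at h
  have e2 : EG (ι N) (Phi (HL (L N)) [List.replicate (2 * k) none]) =
    ∫ x, eval x (Pk (L N) (2 * k)) ∂(stdG (ι N)) := by
    simp [Phi, Pk, EG]
  have hnn : ∀ x, 0 ≤ eval x (Pk (L N) (2 * k)) := by
    intro x
    have h1 := eval_Pk (L N) x (2 * k)
    have h2 : mev (L N x) (fun t => (t : ℂ) ^ (2 * k)) =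
      (((N : ℝ)⁻¹ * ∑ j, (ev (L N x) j) ^ (2 * k) : ℝ) : ℂ) := by
      rw [mev]; push_cast; rfl
    rw [h2] at h1
    have h3 := Complex.ofReal_injective h1
    rw [h3]
    refine mul_nonneg (by positivity) (Finset.sum_nonneg fun j _ => ?_)
    rw [pow_mul]; positivity
  calc _ = ∫⁻ x, ENNReal.ofReal (eval x (Pk (L N) (2 * k))) ∂(stdG (ι N)) := by
        refine lintegral_congr fun x => ?_
        rw [← eval_Pk, ← ofReal_norm, Complex.norm_real, norm_eq_abs, abs_of_nonneg (hnn x)]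
    _ = ENNReal.ofReal (∫ x, eval x (Pk (L N) (2 * k)) ∂(stdG (ι N))) :=
        (ofReal_integral_eq_lintegral_ofReal (integrable_eval_stdG _) (ae_of_all _ hnn)).symm
    _ ≤ _ := by
        refine ENNReal.ofReal_le_ofReal ?_
        rw [← e2]; exact le_of_abs_le h

lemma nice_exp (r : ℝ) : ∃ c, Cv (fun N => (stdG (ι N)).map (L N))
    (fun t => Complex.exp (Complex.I * (r * t : ℝ))) c := by
  have hmm : ∀ N, IsProbabilityMeasure ((stdG (ι N)).map (L N)) := fun N =>
    Measure.isProbabilityMeasure_map (meas_lin (L N)).aemeasurable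
  refine Cv_approx _ _ (by fun_prop) ?_
  intro ε hε
  set S := ∑ q ∈ F, |s q|
  have hlim : Tendsto (fun K : ℕ => (r ^ 2 * (4 * S)) ^ K / K.factorial) atTop (nhds 0) :=
    FloorSemiring.tendsto_pow_div_factorial_atTop _
  have hS : 0 ≤ S := Finset.sum_nonneg fun _ _ => abs_nonneg _
  obtain ⟨K, hK⟩ := (hlim.eventually (gt_mem_nhds hε)).exists
  choose c hc' using nice_pow L hc
  refine ⟨fun t => ∑ k ∈ Finset.range (2 * K), (Complex.I * r) ^ k / k.factorial * (t : ℂ) ^ k,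
    ∑ k ∈ Finset.range (2 * K), (Complex.I * r) ^ k / k.factorial * c k, by fun_prop,
    Cv_sum _ (fun k => by fun_prop) (fun k _ => Cv_smul (by fun_prop) _ (hc' k)), ?_⟩
  refine Eventually.of_forall fun N => ?_
  have hptw : ∀ t : ℝ, ‖Complex.exp (Complex.I * (r * t : ℝ)) -
      ∑ k ∈ Finset.range (2 * K), (Complex.I * r) ^ k / k.factorial * (t : ℂ) ^ k‖ ≤
      (r ^ 2) ^ K / (2 * K).factorial * t ^ (2 * K) := by
    intro t
    have := Dn_bound (2 * K) (r * t)
    have e1 : |r * t| ^ (2 * K) / ((2 * K).factorial : ℝ) =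
        (r ^ 2) ^ K / (2 * K).factorial * t ^ (2 * K) := by
      rw [pow_mul, sq_abs, mul_pow, mul_pow, pow_mul t]; ring
    rw [e1] at this
    refine le_trans (le_of_eq ?_) this
    rw [Dn]
    congr 2
    refine Finset.sum_congr rfl fun k _ => ?_
    push_cast
    ring
  calc aN _ _ 0 ≤ ∫⁻ x, ENNReal.ofReal ((r ^ 2) ^ K / (2 * K).factorial) *
        ‖mev x (fun t => (t : ℂ) ^ (2 * K))‖ₑ ∂((stdG (ι N)).map (L N)) := by
        unfold aN
        refine lintegral_mono fun x => ?_
        rw [sub_zero, ← ofReal_norm, ← ofReal_norm, ← ENNReal.ofReal_mul (by positivity)]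
        refine ENNReal.ofReal_le_ofReal ((mev_norm_le x _ _ hptw).trans ?_)
        have : mev x (fun t => (((r ^ 2) ^ K / (2 * K).factorial * t ^ (2 * K) : ℝ) : ℂ)) =
          (((r ^ 2) ^ K / (2 * K).factorial : ℝ) : ℂ) * mev x (fun t => (t : ℂ) ^ (2 * K)) := by
          rw [← mev_smul]; push_cast; rfl
        rw [this, Complex.re_ofReal_mul]
        gcongr
        exact Complex.re_le_norm _
    _ ≤ ENNReal.ofReal ((r ^ 2) ^ K / (2 * K).factorial) *
          ENNReal.ofReal ((4 * S) ^ K * K.factorial) := by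
        rw [lintegral_const_mul _ (meas_mev_pow N _).enorm]
        gcongr
        exact nice_bound L hc K N
    _ ≤ ENNReal.ofReal ε := by
        rw [← ENNReal.ofReal_mul (by positivity)]
        refine ENNReal.ofReal_le_ofReal (le_trans ?_ hK.le)
        have hf : ((K.factorial : ℝ) * K.factorial) ≤ (2 * K).factorial := by
          have := Nat.factorial_mul_factorial_dvd_factorial_add K K
          have := Nat.le_of_dvd (Nat.factorial_pos _) this
          rw [two_mul]
          exact_mod_cast this
        have h0 : (0 : ℝ) < K.factorial := by exact_mod_cast K.factorial_pos
        have h1 : (0 : ℝ) < (2 * K).factorial := by exact_mod_cast (2 * K).factorial_pos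
        rw [mul_pow (r ^ 2) (4 * S), div_mul_eq_mul_div, div_le_div_iff₀ h1 h0]
        have h2 : 0 ≤ (r ^ 2) ^ K * (4 * S) ^ K := by positivity
        have h3 := mul_le_mul_of_nonneg_left hf h2
        linarith
end

lemma trig_approx (g : ℝ → ℝ) (hg : Continuous g) (C : ℝ) (hC : ∀ x, |g x| ≤ C) (M : ℝ)
    (θ : ℝ → ℝ) (hθ : Continuous θ) (hi : Set.InjOn θ (Set.Icc (-M) M))
    (hm : ∀ x ∈ Set.Icc (-M) M, θ x ∈ Set.Ico (-π) π) (ε : ℝ) (hε : 0 < ε) :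
    ∃ (S : Finset ℤ) (c : ℤ → ℂ),
      (∀ x ∈ Set.Icc (-M) M,
        ‖(g x : ℂ) - ∑ n ∈ S, c n * Complex.exp (Complex.I * ((n : ℝ) * θ x : ℝ))‖ ≤ ε) ∧
      ∀ x, ‖∑ n ∈ S, c n * Complex.exp (Complex.I * ((n : ℝ) * θ x : ℝ))‖ ≤ C + ε := by
  have : Fact (0 < 2 * π) := ⟨by positivity⟩
  set e : Set.Icc (-M) M → AddCircle (2 * π) := fun x => ((θ x : ℝ) : AddCircle (2 * π)) with he
  have hec : Continuous e := (AddCircle.continuous_mk' (2 * π)).comp (hθ.comp continuous_subtype_val)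
  have hei : Function.Injective e := by
    intro x y hxy
    have h2 : ∀ x : Set.Icc (-M) M, θ x ∈ Set.Ico (-π) (-π + 2 * π) := fun x => by
      have := hm x x.2
      rw [show -π + 2 * π = π by ring]; exact this
    exact Subtype.ext (hi x.2 y.2 ((AddCircle.coe_eq_coe_iff_of_mem_Ico (h2 x) (h2 y)).1 hxy))
  have hE := hec.isClosedEmbedding hei
  let g0 : BoundedContinuousFunction (Set.Icc (-M) M) ℝ :=
    BoundedContinuousFunction.ofNormedAddCommGroup (fun x => g x) (hg.comp continuous_subtype_val) C
      (fun x => hC x)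
  obtain ⟨G, hG1, hG2⟩ := BoundedContinuousFunction.exists_extension_norm_eq_of_isClosedEmbedding g0 hE
  have hC0 : 0 ≤ C := (abs_nonneg _).trans (hC 0)
  have hGn : ∀ z, |G z| ≤ C := fun z => (G.norm_coe_le_norm z).trans (by
    rw [hG1]; exact BoundedContinuousFunction.norm_ofNormedAddCommGroup_le _ hC0 _)
  let G' : C(AddCircle (2 * π), ℂ) := ⟨fun z => (G z : ℂ), Complex.continuous_ofReal.comp G.continuous⟩
  have hcl : G' ∈ closure ((Submodule.span ℂ (Set.range (fourier (T := 2 * π)))) : Set C(AddCircle (2 * π), ℂ)) := by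
    rw [← Submodule.topologicalClosure_coe, span_fourier_closure_eq_top]; trivial
  obtain ⟨q, hq, hd⟩ := Metric.mem_closure_iff.1 hcl ε hε
  rw [SetLike.mem_coe, Finsupp.mem_span_range_iff_exists_finsupp] at hq
  obtain ⟨c, hc⟩ := hq
  rw [ContinuousMap.dist_lt_iff hε] at hd
  have hev : ∀ x : ℝ, ∑ n ∈ c.support, c n * Complex.exp (Complex.I * ((n : ℝ) * θ x : ℝ)) =
      q ((θ x : ℝ) : AddCircle (2 * π)) := by
    intro x
    rw [← hc, Finsupp.sum, ContinuousMap.coe_sum, Finset.sum_apply]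
    refine Finset.sum_congr rfl fun n _ => ?_
    rw [ContinuousMap.smul_apply, fourier_coe_apply, smul_eq_mul]
    congr 2
    have : (π : ℂ) ≠ 0 := by exact_mod_cast pi_ne_zero
    push_cast
    field_simp
  refine ⟨c.support, c, fun x hx => ?_, fun x => ?_⟩
  · rw [hev]
    have h1 := congrFun hG2 ⟨x, hx⟩
    have h2 : G ((θ x : ℝ) : AddCircle (2 * π)) = g x := h1
    have h3 := (hd ((θ x : ℝ) : AddCircle (2 * π))).le
    rw [dist_eq_norm] at h3
    rw [← h2]; exact h3
  · rw [hev]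
    have h3 := (hd ((θ x : ℝ) : AddCircle (2 * π))).le
    rw [dist_eq_norm, norm_sub_rev] at h3
    have h4 : ‖G' ((θ x : ℝ) : AddCircle (2 * π))‖ ≤ C := by
      simpa [G'] using hGn ((θ x : ℝ) : AddCircle (2 * π))
    calc _ ≤ ‖q ((θ x : ℝ) : AddCircle (2 * π)) - G' ((θ x : ℝ) : AddCircle (2 * π))‖ +
        ‖G' ((θ x : ℝ) : AddCircle (2 * π))‖ := norm_le_norm_sub_add _ _
      _ ≤ _ := by linarith

lemma Cv_all (m : ∀ N, Measure (VV N)) [∀ N, IsProbabilityMeasure (m N)] (B : ℝ) (hB0 : 0 ≤ B)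
    (hB : ∀ N, ∫⁻ x, ‖mev x (fun t => (t : ℂ) ^ 2)‖ₑ ∂(m N) ≤ ENNReal.ofReal B)
    (h : ∀ M : ℝ, 0 < M → ∃ θ : ℝ → ℝ, Continuous θ ∧ Set.InjOn θ (Set.Icc (-M) M) ∧
      (∀ x ∈ Set.Icc (-M) M, θ x ∈ Set.Ico (-π) π) ∧
      ∀ n : ℤ, ∃ c, Cv m (fun t => Complex.exp (Complex.I * ((n : ℝ) * θ t : ℝ))) c)
    (g : ℝ → ℝ) (hg : Continuous g) (hgb : ∃ C, ∀ x, |g x| ≤ C) :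
    ∃ c, Cv m (fun t => (g t : ℂ)) c := by
  obtain ⟨C, hC⟩ := hgb
  have hC0 : 0 ≤ C := (abs_nonneg _).trans (hC 0)
  refine Cv_approx m _ (by fun_prop) fun ε hε => ?_
  -- choose δ, M
  set δ := min 1 (ε / 2) with hδ
  have hδ0 : 0 < δ := by positivity
  set A := 2 * C + 1 with hA
  have hA0 : 0 < A := by positivity
  obtain ⟨M, hM0, hM⟩ : ∃ M : ℝ, 0 < M ∧ A * B / M ^ 2 ≤ ε / 2 := by
    refine ⟨√(2 * A * (B + 1) / ε), by positivity, ?_⟩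
    rw [Real.sq_sqrt (by positivity)]
    rw [div_div_eq_mul_div, div_le_iff₀ (by positivity)]
    nlinarith [mul_pos hA0 hε]
  obtain ⟨θ, h1, h2, h3, h4⟩ := h M hM0
  obtain ⟨S, c, hc1, hc2⟩ := trig_approx g hg C hC M θ h1 h2 h3 δ hδ0
  choose d hd using h4
  refine ⟨_, ∑ n ∈ S, c n * d n, ?_, Cv_sum S (φ := fun n t => c n * Complex.exp (Complex.I * ((n : ℝ) * θ t : ℝ)))
    (c := fun n => c n * d n) (fun n => by fun_prop) (fun n _ => Cv_smul (by fun_prop) _ (hd n)), ?_⟩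
  · fun_prop
  refine Eventually.of_forall fun N => ?_
  unfold aN
  have hpt : ∀ t : ℝ, ‖(g t : ℂ) - ∑ n ∈ S, c n * Complex.exp (Complex.I * ((n : ℝ) * θ t : ℝ))‖ ≤
      δ + A / M ^ 2 * t ^ 2 := by
    intro t
    by_cases ht : t ∈ Set.Icc (-M) M
    · exact (hc1 t ht).trans (by have : 0 ≤ A / M ^ 2 * t ^ 2 := by positivity
                                 linarith)
    · have h5 : M ^ 2 ≤ t ^ 2 := by
        rw [← sq_abs t]
        have : M ≤ |t| := by
          by_contra hh
          push Not at hh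
          exact ht (abs_le.1 hh.le)
        gcongr
      have h6 : A ≤ A / M ^ 2 * t ^ 2 := by
        rw [div_mul_eq_mul_div, le_div_iff₀ (by positivity)]
        gcongr
      have h7 : ‖(g t : ℂ)‖ ≤ C := by simpa using hC t
      have h8 := norm_sub_le (g t : ℂ) (∑ n ∈ S, c n * Complex.exp (Complex.I * ((n : ℝ) * θ t : ℝ)))
      have h9 : δ ≤ 1 := min_le_left _ _
      have := hc2 t
      linarith
  calc _ ≤ ∫⁻ x, (ENNReal.ofReal δ + ENNReal.ofReal (A / M ^ 2) * ‖mev x (fun t => (t : ℂ) ^ 2)‖ₑ) ∂(m N) := by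
        refine lintegral_mono fun x => ?_
        rw [sub_zero, ← ofReal_norm, ← ofReal_norm, ← ENNReal.ofReal_mul (by positivity),
          ← ENNReal.ofReal_add (by positivity) (by positivity)]
        refine ENNReal.ofReal_le_ofReal ?_
        rcases Nat.eq_zero_or_pos N with rfl | hN
        · simp [mev]; positivity
        refine (mev_norm_le x _ _ hpt).trans ?_
        have e : mev x (fun t => ((δ + A / M ^ 2 * t ^ 2 : ℝ) : ℂ)) = (δ : ℂ) +
            ((A / M ^ 2 : ℝ) : ℂ) * mev x (fun t => (t : ℂ) ^ 2) := by
          rw [← mev_smul, ← mev_one hN x (δ : ℂ), ← mev_add]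
          push_cast; rfl
        rw [e, Complex.add_re, Complex.ofReal_re, Complex.re_ofReal_mul]
        gcongr
        exact Complex.re_le_norm _
    _ ≤ ENNReal.ofReal δ + ENNReal.ofReal (A / M ^ 2) * ENNReal.ofReal B := by
        rw [lintegral_add_left measurable_const, lintegral_const_mul _ (meas_mev_pow N _).enorm]
        simp only [lintegral_const, measure_univ, mul_one]
        gcongr
        exact hB N
    _ ≤ ENNReal.ofReal ε := by
        rw [← ENNReal.ofReal_mul (by positivity), ← ENNReal.ofReal_add (by positivity) (by positivity)]
        refine ENNReal.ofReal_le_ofReal ?_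
        have : δ ≤ ε / 2 := min_le_right _ _
        have e : A / M ^ 2 * B = A * B / M ^ 2 := by ring
        rw [e]; linarith

section
variable {ι : ℕ → Type} [∀ N, Fintype (ι N)] [∀ N, DecidableEq (ι N)]

lemma nice_all (L : ∀ N, (ι N → ℝ) →ₗ[ℝ] VV N) {F : Finset (ℤ × ℤ)} {s : ℤ × ℤ → ℝ}
    (hc : ∀ N, CovH (HL (L N)) F s) (φ : ℝ → ℂ) (hφ : Continuous φ) (hb : ∃ C, ∀ x, ‖φ x‖ ≤ C) :
    ∃ c, Cv (fun N => (stdG (ι N)).map (L N)) φ c := by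
  have hmm : ∀ N, IsProbabilityMeasure ((stdG (ι N)).map (L N)) := fun N =>
    Measure.isProbabilityMeasure_map (meas_lin (L N)).aemeasurable
  have key := Cv_all (fun N => (stdG (ι N)).map (L N)) ((4 * ∑ q ∈ F, |s q|) ^ 1 * (1).factorial)
    (by positivity) (fun N => by simpa using nice_bound L hc 1 N) (fun M hM => by
      refine ⟨fun x => x / M, by fun_prop, ?_, ?_, ?_⟩
      · intro x _ y _ hxy
        simp only at hxy
        field_simp at hxy
        exact hxy
      · intro x hx
        have h1 : -1 ≤ x / M := by rw [le_div_iff₀ hM]; linarith [hx.1]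
        have h2 : x / M ≤ 1 := by rw [div_le_iff₀ hM]; linarith [hx.2]
        constructor <;> linarith [pi_gt_three]
      · intro n
        obtain ⟨c, h⟩ := nice_exp L hc (n / M)
        refine ⟨c, ?_⟩
        have e : ∀ t : ℝ, (n : ℝ) * (t / M) = n / M * t := fun t => by ring
        simpa only [e] using h)
  obtain ⟨C, hC⟩ := hb
  obtain ⟨a, ha⟩ := key (fun t => (φ t).re) (by fun_prop) ⟨C, fun x => (Complex.abs_re_le_norm _).trans (hC x)⟩
  obtain ⟨b, hb⟩ := key (fun t => (φ t).im) (by fun_prop) ⟨C, fun x => (Complex.abs_im_le_norm _).trans (hC x)⟩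
  refine ⟨a + Complex.I * b, ?_⟩
  have := Cv_add (by fun_prop) ha (Cv_smul (by fun_prop) Complex.I hb)
  convert this using 2 with t
  rw [mul_comm, Complex.re_add_im]
end

def uc (t : ℝ) : ℂ := (1 + Complex.I * t) / (1 - Complex.I * t)

lemma uc_den (t : ℝ) : (1 - Complex.I * t : ℂ) ≠ 0 := by
  intro h
  have := congrArg Complex.re h
  simp at this

lemma uc_exp (t : ℝ) : uc t = Complex.exp (Complex.I * (2 * arctan t : ℝ)) := by
  have h : Complex.exp (Complex.I * (2 * arctan t : ℝ)) = (Complex.exp ((arctan t : ℝ) * Complex.I)) ^ 2 := by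
    rw [← Complex.exp_nat_mul]; congr 1; push_cast; ring
  rw [h, Complex.exp_mul_I, ← Complex.ofReal_cos, ← Complex.ofReal_sin, cos_arctan, sin_arctan]
  have hp : (0 : ℝ) < 1 + t ^ 2 := by positivity
  have h1 : ((√(1 + t ^ 2) : ℝ) : ℂ) ^ 2 = 1 + (t : ℂ) ^ 2 := by
    rw [← Complex.ofReal_pow, Real.sq_sqrt hp.le]; push_cast; ring
  have h2 : ((√(1 + t ^ 2) : ℝ) : ℂ) ≠ 0 := by
    exact_mod_cast (Real.sqrt_pos.2 hp).ne'
  have h3 : (1 + (t : ℂ) ^ 2) ≠ 0 := by rw [← h1]; positivity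
  have h4 := uc_den t
  push_cast
  rw [uc]
  have e : (1 / ((√(1 + t ^ 2) : ℝ) : ℂ) + t / ((√(1 + t ^ 2) : ℝ) : ℂ) * Complex.I) ^ 2 =
    (1 + t * Complex.I) ^ 2 / (1 + (t : ℂ) ^ 2) := by
    rw [← h1]; field_simp
  rw [e, div_eq_div_iff h4 h3]
  linear_combination ((1 + t * Complex.I) * t ^ 2) * Complex.I_sq

lemma uc_norm (t : ℝ) : ‖uc t‖ = 1 := by
  rw [uc_exp, mul_comm, Complex.norm_exp_ofReal_mul_I]

lemma uc_cont : Continuous uc := by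
  have : uc = fun t => Complex.exp (Complex.I * (2 * arctan t : ℝ)) := funext uc_exp
  rw [this]
  have := Real.continuous_arctan
  fun_prop

section
variable {N : ℕ}
open Matrix

def Ctr (Q : Matrix (Fin N) (Fin N) ℂ) : Prop :=
  ∀ v : Fin N → ℂ, ∑ i, ‖(Q *ᵥ v) i‖ ^ 2 ≤ ∑ i, ‖v i‖ ^ 2

lemma Ctr.mul {Q R : Matrix (Fin N) (Fin N) ℂ} (hQ : Ctr Q) (hR : Ctr R) : Ctr (Q * R) := fun v => by
  rw [← mulVec_mulVec]; exact (hQ _).trans (hR _)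

lemma Ctr.one : Ctr (1 : Matrix (Fin N) (Fin N) ℂ) := fun v => by simp

lemma Ctr.pow {Q : Matrix (Fin N) (Fin N) ℂ} (hQ : Ctr Q) (n : ℕ) : Ctr (Q ^ n) := by
  induction n with
  | zero => simpa using Ctr.one
  | succ n ih => rw [pow_succ]; exact ih.mul hQ

lemma Ctr.diag (d : Fin N → ℂ) (h : ∀ i, ‖d i‖ ≤ 1) : Ctr (diagonal d) := fun v => by
  refine Finset.sum_le_sum fun i _ => ?_
  rw [mulVec_diagonal, norm_mul]
  gcongr
  exact mul_le_of_le_one_left (norm_nonneg _) (h i)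

lemma sum_norm_sq (v : Fin N → ℂ) : ((∑ i, ‖v i‖ ^ 2 : ℝ) : ℂ) = star v ⬝ᵥ v := by
  simp only [dotProduct, Complex.ofReal_sum, Pi.star_apply]
  refine Finset.sum_congr rfl fun i _ => ?_
  rw [Complex.star_def, Complex.conj_mul']; push_cast; rfl

lemma Ctr.unit {V : Matrix (Fin N) (Fin N) ℂ} (h : Vᴴ * V = 1) : Ctr V := fun v => by
  refine le_of_eq ?_
  have : ((∑ i, ‖(V *ᵥ v) i‖ ^ 2 : ℝ) : ℂ) = ((∑ i, ‖v i‖ ^ 2 : ℝ) : ℂ) := by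
    rw [sum_norm_sq, sum_norm_sq, star_mulVec, dotProduct_mulVec, vecMul_vecMul, h, vecMul_one]
  exact_mod_cast this

lemma spec (A : Matrix (Fin N) (Fin N) ℝ) (hA : A.IsHermitian) :
    ∃ V : Matrix (Fin N) (Fin N) ℂ, Vᴴ * V = 1 ∧ V * Vᴴ = 1 ∧
      A.map (fun t : ℝ => (t : ℂ)) = V * diagonal (fun j => (hA.eigenvalues j : ℂ)) * Vᴴ := by
  let V0 : Matrix (Fin N) (Fin N) ℝ := hA.eigenvectorUnitary
  have h1 : V0ᴴ * V0 = 1 := Unitary.coe_star_mul_self hA.eigenvectorUnitary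
  have h2 : V0 * V0ᴴ = 1 := Unitary.coe_mul_star_self hA.eigenvectorUnitary
  let f : Matrix (Fin N) (Fin N) ℝ →+* Matrix (Fin N) (Fin N) ℂ := Complex.ofRealHom.mapMatrix
  have hs : f V0ᴴ = (f V0)ᴴ := by
    ext i j; simp [f]
  refine ⟨f V0, ?_, ?_, ?_⟩
  · rw [← hs, ← map_mul, h1, map_one]
  · rw [← hs, ← map_mul, h2, map_one]
  · have h3 : A = V0 * diagonal hA.eigenvalues * V0ᴴ := by
      have := hA.spectral_theorem
      rw [Unitary.conjStarAlgAut_apply] at this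
      exact this
    have h4 : f (diagonal hA.eigenvalues) = diagonal (fun j => (hA.eigenvalues j : ℂ)) := by
      ext i j; simp [f, diagonal_apply]; split_ifs <;> simp
    rw [← hs, ← h4, ← map_mul, ← map_mul, ← h3]; rfl

lemma spec_cay (A : Matrix (Fin N) (Fin N) ℝ) (hA : A.IsHermitian) :
    ∃ U R : Matrix (Fin N) (Fin N) ℂ, Ctr U ∧ Ctr R ∧ U = 2 * R - 1 ∧
      (1 - Complex.I • A.map (fun t : ℝ => (t : ℂ))) * R = 1 ∧
      R * (1 - Complex.I • A.map (fun t : ℝ => (t : ℂ))) = 1 ∧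
      ∀ n : ℕ, (U ^ n).trace = ∑ j, uc (hA.eigenvalues j) ^ n := by
  obtain ⟨V, h1, h2, h3⟩ := spec A hA
  have hVs : Ctr Vᴴ := Ctr.unit (by rwa [conjTranspose_conjTranspose])
  have hm : ∀ d e : Fin N → ℂ, V * diagonal d * Vᴴ * (V * diagonal e * Vᴴ) =
      V * diagonal (fun i => d i * e i) * Vᴴ := fun d e => by
    calc _ = V * diagonal d * (Vᴴ * V) * diagonal e * Vᴴ := by simp only [Matrix.mul_assoc]
      _ = _ := by rw [h1, Matrix.mul_one, Matrix.mul_assoc V, diagonal_mul_diagonal]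
  have hone : V * diagonal (fun _ => (1 : ℂ)) * Vᴴ = 1 := by
    rw [diagonal_one, Matrix.mul_one, h2]
  set l := hA.eigenvalues
  have hden : (1 - Complex.I • A.map (fun t : ℝ => (t : ℂ))) =
      V * diagonal (fun j => 1 - Complex.I * (l j : ℂ)) * Vᴴ := by
    rw [h3, ← hone, ← Matrix.smul_mul, ← Matrix.mul_smul, ← Matrix.sub_mul, ← Matrix.mul_sub]
    congr 2
    ext i j
    by_cases h : i = j
    · subst h; simp
    · simp [h]
  have hpow : ∀ (d : Fin N → ℂ) (n : ℕ), (V * diagonal d * Vᴴ) ^ n = V * diagonal (fun i => d i ^ n) * Vᴴ := by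
    intro d n
    induction n with
    | zero => simpa using hone.symm
    | succ n ih => rw [pow_succ, ih, hm]; simp only [pow_succ]
  refine ⟨V * diagonal (fun j => uc (l j)) * Vᴴ, V * diagonal (fun j => (1 - Complex.I * (l j : ℂ))⁻¹) * Vᴴ,
    ((Ctr.unit h1).mul (Ctr.diag _ fun j => (uc_norm _).le)).mul hVs,
    ((Ctr.unit h1).mul (Ctr.diag _ fun j => ?_)).mul hVs, ?_, ?_, ?_, ?_⟩
  · rw [norm_inv]
    refine inv_le_one_of_one_le₀ ?_
    refine le_trans ?_ (Complex.abs_re_le_norm _)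
    simp
  · have e2 : (2 : Matrix (Fin N) (Fin N) ℂ) * (V * diagonal (fun j => (1 - Complex.I * (l j : ℂ))⁻¹) * Vᴴ)
       = V * diagonal (fun j => 2 * (1 - Complex.I * (l j : ℂ))⁻¹) * Vᴴ := by
      have : (2 : Matrix (Fin N) (Fin N) ℂ) = V * diagonal (fun _ => (2 : ℂ)) * Vᴴ := by
        have : diagonal (fun _ : Fin N => (2 : ℂ)) = 2 := by
          ext i j; simp [diagonal_apply, Matrix.ofNat_apply]
        rw [this, show (2 : Matrix (Fin N) (Fin N) ℂ) = 1 + 1 by norm_num, Matrix.mul_add, Matrix.add_mul,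
          Matrix.mul_one, h2]
      rw [this, hm]
    rw [e2, ← hone, ← Matrix.sub_mul, ← Matrix.mul_sub]
    congr 2
    ext i j
    by_cases h : i = j
    · subst h
      have := uc_den (l i)
      simp only [diagonal_apply_eq, Matrix.sub_apply, uc]
      field_simp
      ring
    · simp [h]
  · rw [hden, hm, ← hone]; congr 3; funext j; exact mul_inv_cancel₀ (uc_den _)
  · rw [hden, hm, ← hone]; congr 3; funext j; exact inv_mul_cancel₀ (uc_den _)
  · intro n
    rw [hpow, Matrix.trace_mul_comm, ← Matrix.mul_assoc, h1, Matrix.one_mul, trace_diagonal]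

lemma cay (A B : Matrix (Fin N) (Fin N) ℝ) (hA : A.IsHermitian) (hB : B.IsHermitian) (n : ℕ) (c : ℝ)
    (h : ∀ Q, Ctr Q → ‖(Q * ((A - B).map (fun t : ℝ => (t : ℂ)))).trace‖ ≤ c) :
    ‖∑ j, uc (hA.eigenvalues j) ^ n - ∑ j, uc (hB.eigenvalues j) ^ n‖ ≤ 2 * n * c := by
  obtain ⟨U, R, hU, hR, e1, e2, e3, e4⟩ := spec_cay A hA
  obtain ⟨U', R', hU', hR', e1', e2', e3', e4'⟩ := spec_cay B hB
  have hm : (A - B).map (fun t : ℝ => (t : ℂ)) = A.map (fun t : ℝ => (t : ℂ)) - B.map (fun t : ℝ => (t : ℂ)) := by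
    ext i j; simp
  rw [hm] at h
  rw [← e4, ← e4', ← trace_sub]
  set a := A.map (fun t : ℝ => (t : ℂ))
  set b := B.map (fun t : ℝ => (t : ℂ))
  have hd : U - U' = (2 * Complex.I) • (R * (a - b) * R') := by
    have : Complex.I • (a - b) = (1 - Complex.I • b) - (1 - Complex.I • a) := by rw [smul_sub]; abel
    have h5 : Complex.I • (R * (a - b) * R') = R - R' := by
      rw [← Matrix.smul_mul, ← Matrix.mul_smul, this, Matrix.mul_sub, e3, Matrix.sub_mul, Matrix.mul_assoc,
        e2', Matrix.mul_one, Matrix.one_mul]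
    rw [mul_smul, h5, e1, e1', two_smul]
    noncomm_ring
  have tele : ∀ n : ℕ, U ^ n - U' ^ n = ∑ k ∈ Finset.range n, U ^ k * (U - U') * U' ^ (n - 1 - k) := by
    intro n
    induction n with
    | zero => simp
    | succ n ih =>
      rw [Finset.sum_range_succ]
      have : ∑ k ∈ Finset.range n, U ^ k * (U - U') * U' ^ (n + 1 - 1 - k) =
          (∑ k ∈ Finset.range n, U ^ k * (U - U') * U' ^ (n - 1 - k)) * U' := by
        rw [Finset.sum_mul]
        refine Finset.sum_congr rfl fun k hk => ?_
        rw [Finset.mem_range] at hk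
        rw [show n + 1 - 1 - k = (n - 1 - k) + 1 by omega, pow_succ, ← mul_assoc]
      rw [this, ← ih]
      simp only [Nat.add_sub_cancel, Nat.sub_self, pow_zero, mul_one, pow_succ]
      noncomm_ring
  rw [tele, trace_sum]
  calc _ ≤ ∑ k ∈ Finset.range n, 2 * c := by
        refine norm_sum_le_of_le _ fun k _ => ?_
        rw [hd, Matrix.mul_smul, Matrix.smul_mul, trace_smul, norm_smul]
        have : ‖(2 * Complex.I : ℂ)‖ = 2 := by simp
        rw [this]
        gcongr
        have e' : (U ^ k * (R * (a - b) * R') * U' ^ (n - 1 - k)).trace =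
          ((R' * U' ^ (n - 1 - k)) * (U ^ k * R) * (a - b)).trace := by
          have : U ^ k * (R * (a - b) * R') * U' ^ (n - 1 - k) =
            (U ^ k * R * (a - b)) * (R' * U' ^ (n - 1 - k)) := by simp only [Matrix.mul_assoc]
          rw [this, Matrix.trace_mul_comm]; simp only [Matrix.mul_assoc]
        rw [e']
        exact h _ ((hR'.mul (hU'.pow _)).mul ((hU.pow _).mul hR))
    _ = 2 * n * c := by simp; ring

lemma Ctr_frob {Q : Matrix (Fin N) (Fin N) ℂ} (hQ : Ctr Q) : ∑ i, ∑ j, ‖Q i j‖ ^ 2 ≤ N := by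
  rw [Finset.sum_comm]
  calc _ ≤ ∑ j : Fin N, (1 : ℝ) := by
        refine Finset.sum_le_sum fun j _ => ?_
        have := hQ (Pi.single j 1)
        simp only [mulVec_single_one, col_apply] at this
        refine this.trans (le_of_eq ?_)
        rw [Finset.sum_eq_single j] <;> simp +contextual
    _ = N := by simp

lemma tr_frob {Q : Matrix (Fin N) (Fin N) ℂ} (hQ : Ctr Q) (E : Matrix (Fin N) (Fin N) ℝ) :
    ‖(Q * E.map (fun t : ℝ => (t : ℂ))).trace‖ ≤ √N * √(∑ i, ∑ j, E i j ^ 2) := by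
  have h1 : ‖(Q * E.map (fun t : ℝ => (t : ℂ))).trace‖ ≤ ∑ p : Fin N × Fin N, ‖Q p.1 p.2‖ * |E p.2 p.1| := by
    rw [Fintype.sum_prod_type]
    simp only [trace, diag, mul_apply]
    refine (norm_sum_le _ _).trans (Finset.sum_le_sum fun i _ => (norm_sum_le _ _).trans
      (Finset.sum_le_sum fun j _ => ?_))
    simp
  refine h1.trans ((Real.sum_mul_le_sqrt_mul_sqrt _ _ _).trans ?_)
  gcongr
  · rw [Fintype.sum_prod_type]; exact Ctr_frob hQ
  · rw [Fintype.sum_prod_type, Finset.sum_comm]; simp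

lemma tr_rank1 {Q : Matrix (Fin N) (Fin N) ℂ} (hQ : Ctr Q) (x y : Fin N → ℝ) :
    ‖(Q * (Matrix.of fun i j => x i * y j).map (fun t : ℝ => (t : ℂ))).trace‖ ≤
      √(∑ i, x i ^ 2) * √(∑ i, y i ^ 2) := by
  have e : (Q * (Matrix.of fun i j => x i * y j).map (fun t : ℝ => (t : ℂ))).trace =
      ∑ i, (Q *ᵥ (fun i => (x i : ℂ))) i * (y i : ℂ) := by
    simp only [trace, diag, mul_apply, map_apply, of_apply, mulVec, dotProduct, Finset.sum_mul]
    refine Finset.sum_congr rfl fun i _ => Finset.sum_congr rfl fun j _ => ?_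
    push_cast; ring
  rw [e]
  refine (norm_sum_le _ _).trans ?_
  simp only [norm_mul]
  refine (Real.sum_mul_le_sqrt_mul_sqrt _ _ _).trans ?_
  gcongr ?_ * ?_
  · refine Real.sqrt_le_sqrt ((hQ _).trans ?_)
    simp
  · simp
end

section
variable {α : Type} [Fintype α]

def IsCG (m : Measure (α → ℝ)) (S : α → α → ℝ) : Prop :=
  IsProbabilityMeasure m ∧ ∀ c : α → ℝ, ∫ x, Complex.exp ((∑ a, c a * x a : ℝ) * Complex.I) ∂m =
    Complex.exp (-((∑ a, ∑ b, c a * c b * S a b : ℝ) : ℂ) / 2)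

lemma IsCG.unique {m m' : Measure (α → ℝ)} {S : α → α → ℝ} (h : IsCG m S) (h' : IsCG m' S) : m = m' := by
  classical
  have := h.1
  have := h'.1
  refine Measure.ext_of_charFunDual ?_
  ext l
  rw [charFunDual_apply, charFunDual_apply]
  have e : ∀ x : α → ℝ, l x = ∑ a, l (Pi.single a 1) * x a := by
    intro x
    conv_lhs => rw [← (Pi.basisFun ℝ α).sum_repr x]
    simp [map_sum, mul_comm]
  have e' : ∀ m : Measure (α → ℝ), ∫ x, Complex.exp ((l x : ℝ) * Complex.I) ∂m =
      ∫ x, Complex.exp ((∑ a, l (Pi.single a 1) * x a : ℝ) * Complex.I) ∂m := fun m =>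
    integral_congr_ae (Eventually.of_forall fun x => by simp only [← e x])
  rw [e', e', h.2, h'.2]

lemma charfun_std (t : ℝ) : ∫ x, Complex.exp ((t * x : ℝ) * Complex.I) ∂(gaussianReal 0 1) =
    Complex.exp (-((t * t : ℝ) : ℂ) / 2) := by
  have := charFun_gaussianReal (μ := 0) (v := 1) t
  rw [charFun_apply_real] at this
  push_cast
  rw [this]
  congr 1
  push_cast; ring

lemma gauss_map {ι : Type} [Fintype ι] [DecidableEq ι] (L : (ι → ℝ) →ₗ[ℝ] (α → ℝ)) :
    IsCG ((stdG ι).map L) (fun a b => ∑ i, L (Pi.single i 1) a * L (Pi.single i 1) b) := by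
  have hL : Measurable L := (LinearMap.continuous_of_finiteDimensional L).measurable
  refine ⟨Measure.isProbabilityMeasure_map hL.aemeasurable, fun c => ?_⟩
  rw [integral_map hL.aemeasurable (by exact (by fun_prop : Continuous _).aestronglyMeasurable)]
  have e : ∀ x : ι → ℝ, ∑ a, c a * L x a = ∑ i, (∑ a, c a * L (Pi.single i 1) a) * x i := by
    intro x
    have : L x = ∑ i, x i • L (Pi.single i 1) := by
      conv_lhs => rw [← (Pi.basisFun ℝ ι).sum_repr x]
      simp [map_sum]
    rw [this]
    simp only [Finset.sum_apply, Pi.smul_apply, smul_eq_mul, Finset.mul_sum, Finset.sum_mul]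
    rw [Finset.sum_comm]
    refine Finset.sum_congr rfl fun i _ => Finset.sum_congr rfl fun a _ => by ring
  have e2 : ∀ x : ι → ℝ, Complex.exp ((∑ a, c a * L x a : ℝ) * Complex.I) =
      ∏ i, Complex.exp (((∑ a, c a * L (Pi.single i 1) a) * x i : ℝ) * Complex.I) := by
    intro x
    rw [e, ← Complex.exp_sum, Complex.ofReal_sum, Finset.sum_mul]
  simp only [e2]
  rw [stdG, integral_fintype_prod_eq_prod
    (f := fun i (y : ℝ) => Complex.exp (((∑ a, c a * L (Pi.single i 1) a) * y : ℝ) * Complex.I))]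
  simp only [charfun_std]
  rw [← Complex.exp_sum]
  congr 1
  rw [← Finset.sum_div, Finset.sum_neg_distrib]
  congr 2
  rw [← Complex.ofReal_sum]
  congr 1
  simp only [Finset.sum_mul_sum]
  simp only [Finset.mul_sum]
  rw [Finset.sum_comm]
  refine Finset.sum_congr rfl fun a _ => ?_
  rw [Finset.sum_comm]
  refine Finset.sum_congr rfl fun b _ => Finset.sum_congr rfl fun i _ => by ring

lemma IsCG.add {m m' : Measure (α → ℝ)} {S S' : α → α → ℝ} (h : IsCG m S) (h' : IsCG m' S') :
    IsCG ((m.prod m').map (fun p => p.1 + p.2)) (fun a b => S a b + S' a b) := by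
  have := h.1
  have := h'.1
  refine ⟨Measure.isProbabilityMeasure_map (by fun_prop), fun c => ?_⟩
  rw [integral_map (by fun_prop) (by exact (by fun_prop : Continuous _).aestronglyMeasurable)]
  have e : ∀ p : (α → ℝ) × (α → ℝ), Complex.exp ((∑ a, c a * (p.1 + p.2) a : ℝ) * Complex.I) =
      Complex.exp ((∑ a, c a * p.1 a : ℝ) * Complex.I) * Complex.exp ((∑ a, c a * p.2 a : ℝ) * Complex.I) := by
    intro p
    rw [← Complex.exp_add]
    congr 1
    simp only [Pi.add_apply, mul_add, Finset.sum_add_distrib, Complex.ofReal_add, add_mul]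
  simp only [e]
  rw [integral_prod_mul (f := fun x : α → ℝ => Complex.exp ((∑ a, c a * x a : ℝ) * Complex.I))
    (g := fun x : α → ℝ => Complex.exp ((∑ a, c a * x a : ℝ) * Complex.I)), h.2, h'.2, ← Complex.exp_add]
  congr 1
  simp only [mul_add, Finset.sum_add_distrib, Complex.ofReal_add]
  ring

lemma IsCG.sq {m : Measure (α → ℝ)} {S : α → α → ℝ} (h : IsCG m S) (a : α) (hS : 0 ≤ S a a) :
    ∫⁻ x, ENNReal.ofReal (x a ^ 2) ∂m = ENNReal.ofReal (S a a) := by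
  classical
  have := h.1
  have hm : m.map (fun x => x a) = gaussianReal 0 (S a a).toNNReal := by
    have : IsProbabilityMeasure (m.map (fun x => x a)) := Measure.isProbabilityMeasure_map (measurable_pi_apply a).aemeasurable
    refine Measure.ext_of_charFun ?_
    ext t
    rw [charFun_gaussianReal, charFun_apply_real, integral_map (measurable_pi_apply a).aemeasurable (by fun_prop)]
    have := h.2 (Pi.single a t)
    simp only [Pi.single_apply, ite_mul, zero_mul, Finset.sum_ite_eq', Finset.mem_univ, if_true, mul_ite, mul_zero] at this
    push_cast at this
    rw [this]
    congr 1
    rw [Real.coe_toNNReal _ hS]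
    push_cast; ring
  have h2 : ∫⁻ x, ENNReal.ofReal (x a ^ 2) ∂m = ∫⁻ y, ENNReal.ofReal (y ^ 2) ∂(m.map (fun x => x a)) := by
    rw [lintegral_map (by fun_prop) (by fun_prop)]
  rw [h2, hm]
  have hv := variance_id_gaussianReal (μ := 0) (v := (S a a).toNNReal)
  rw [variance_eq_integral (by fun_prop)] at hv
  simp only [id, integral_id_gaussianReal, sub_zero, Real.coe_toNNReal _ hS] at hv
  conv_rhs => rw [← hv]
  rw [ofReal_integral_eq_lintegral_ofReal]
  · have := (memLp_id_gaussianReal (μ := 0) (v := (S a a).toNNReal) 2).integrable_sq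
    simpa using this
  · exact Eventually.of_forall fun x => sq_nonneg x

lemma IsCG.exists (S : α → α → ℝ) (hs : ∀ a b, S a b = S b a)
    (hp : ∀ c : α → ℝ, 0 ≤ ∑ a, ∑ b, c a * c b * S a b) :
    ∃ (k : ℕ) (L : (Fin k → ℝ) →ₗ[ℝ] (α → ℝ)),
      ∀ a b, ∑ i, L (Pi.single i 1) a * L (Pi.single i 1) b = S a b := by
  have : (Matrix.of S).PosSemidef := by
    refine Matrix.PosSemidef.of_dotProduct_mulVec_nonneg ?_ ?_
    · ext a b; simp [hs a b]
    · intro c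
      refine (hp c).trans (le_of_eq ?_)
      simp only [dotProduct, Matrix.mulVec, Finset.mul_sum, Matrix.of_apply, Pi.star_apply, star_trivial]
      refine Finset.sum_congr rfl fun a _ => Finset.sum_congr rfl fun b _ => by ring
  obtain ⟨k, v, hv⟩ := Matrix.posSemidef_iff_eq_sum_vecMulVec.1 this
  refine ⟨k, Matrix.toLin' (Matrix.of fun a i => v i a), fun a b => ?_⟩
  have := congrFun (congrFun hv a) b
  rw [Matrix.of_apply] at this
  rw [this, Matrix.sum_apply]
  refine Finset.sum_congr rfl fun i _ => ?_
  simp [Matrix.vecMulVec_apply]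
end

def Cc (ν : Measure (ℝ × ℝ)) (u v : ℤ) : ℝ := ∫ q, cos (u * q.1 + v * q.2) ∂ν

def Sg (ν : Measure (ℝ × ℝ)) (N : ℕ) (a b : Fin N × Fin N) : ℝ :=
  Cc ν ((b.1 : ℕ) - (a.1 : ℕ) : ℤ) ((b.2 : ℕ) - (a.2 : ℕ) : ℤ)

lemma integrable_cos (ν : Measure (ℝ × ℝ)) [IsFiniteMeasure ν] (u v : ℝ) :
    Integrable (fun q : ℝ × ℝ => cos (u * q.1 + v * q.2)) ν := by
  refine Integrable.of_bound (C := 1) (by fun_prop) (Eventually.of_forall fun q => ?_)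
  exact abs_cos_le_one _

lemma Cc_neg (ν : Measure (ℝ × ℝ)) (u v : ℤ) : Cc ν (-u) (-v) = Cc ν u v := by
  unfold Cc
  congr 1; funext q
  rw [← cos_neg]; congr 1; push_cast; ring

lemma Cc_zero (ν : Measure (ℝ × ℝ)) : Cc ν 0 0 = ν.real Set.univ := by simp [Cc]

lemma Cc_add (ν ρ : Measure (ℝ × ℝ)) [IsFiniteMeasure ν] [IsFiniteMeasure ρ] (u v : ℤ) :
    Cc (ν + ρ) u v = Cc ν u v + Cc ρ u v :=
  integral_add_measure (integrable_cos ν _ _) (integrable_cos ρ _ _)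

lemma Sg_diag (ν : Measure (ℝ × ℝ)) (N : ℕ) (a : Fin N × Fin N) : Sg ν N a a = ν.real Set.univ := by
  simp [Sg, Cc_zero]

lemma Sg_symm (ν : Measure (ℝ × ℝ)) (N : ℕ) (a b : Fin N × Fin N) : Sg ν N a b = Sg ν N b a := by
  unfold Sg; rw [← Cc_neg]; congr 1 <;> ring

lemma Sg_pos (ν : Measure (ℝ × ℝ)) [IsFiniteMeasure ν] (N : ℕ) (c : Fin N × Fin N → ℝ) :
    0 ≤ ∑ a, ∑ b, c a * c b * Sg ν N a b := by
  have : ∑ a, ∑ b, c a * c b * Sg ν N a b = ∫ q : ℝ × ℝ,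
      ((∑ a, c a * cos ((a.1 : ℕ) * q.1 + (a.2 : ℕ) * q.2)) ^ 2 +
      (∑ a, c a * sin ((a.1 : ℕ) * q.1 + (a.2 : ℕ) * q.2)) ^ 2) ∂ν := by
    have h1 : ∀ a b : Fin N × Fin N, c a * c b * Sg ν N a b = ∫ q : ℝ × ℝ, c a * c b *
        cos ((((b.1 : ℕ) - (a.1 : ℕ) : ℤ) : ℝ) * q.1 + (((b.2 : ℕ) - (a.2 : ℕ) : ℤ) : ℝ) * q.2) ∂ν :=
      fun a b => (integral_const_mul _ _).symm
    simp only [h1]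
    have hint : ∀ a b : Fin N × Fin N, Integrable (fun q : ℝ × ℝ => c a * c b *
        cos ((((b.1 : ℕ) - (a.1 : ℕ) : ℤ) : ℝ) * q.1 + (((b.2 : ℕ) - (a.2 : ℕ) : ℤ) : ℝ) * q.2)) ν :=
      fun a b => (integrable_cos ν _ _).const_mul _
    have h2 : ∀ a : Fin N × Fin N, ∑ b : Fin N × Fin N, ∫ q : ℝ × ℝ, c a * c b *
        cos ((((b.1 : ℕ) - (a.1 : ℕ) : ℤ) : ℝ) * q.1 + (((b.2 : ℕ) - (a.2 : ℕ) : ℤ) : ℝ) * q.2) ∂ν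
        = ∫ q : ℝ × ℝ, ∑ b : Fin N × Fin N, c a * c b *
        cos ((((b.1 : ℕ) - (a.1 : ℕ) : ℤ) : ℝ) * q.1 + (((b.2 : ℕ) - (a.2 : ℕ) : ℤ) : ℝ) * q.2) ∂ν :=
      fun a => (integral_finsetSum _ fun b _ => hint a b).symm
    simp only [h2]
    rw [← integral_finsetSum _ fun a _ => integrable_finsetSum _ fun b _ => hint a b]
    congr 1; funext q
    rw [sq, sq, Finset.sum_mul_sum, Finset.sum_mul_sum, ← Finset.sum_add_distrib]
    refine Finset.sum_congr rfl fun a _ => ?_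
    rw [← Finset.sum_add_distrib]
    refine Finset.sum_congr rfl fun b _ => ?_
    have : (((b.1 : ℕ) - (a.1 : ℕ) : ℤ) : ℝ) * q.1 + (((b.2 : ℕ) - (a.2 : ℕ) : ℤ) : ℝ) * q.2 =
      ((b.1 : ℕ) * q.1 + (b.2 : ℕ) * q.2) - ((a.1 : ℕ) * q.1 + (a.2 : ℕ) * q.2) := by push_cast; ring
    rw [this, cos_sub]; ring
  rw [this]; positivity

lemma law_exists (ν : Measure (ℝ × ℝ)) [IsFiniteMeasure ν] (N : ℕ) :
    ∃ (k : ℕ) (L : (Fin k → ℝ) →ₗ[ℝ] VV N),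
      ∀ a b, ∑ i, L (Pi.single i 1) a * L (Pi.single i 1) b = Sg ν N a b :=
  IsCG.exists _ (Sg_symm ν N) (Sg_pos ν N)

open Classical in
def lw (ν : Measure (ℝ × ℝ)) (N : ℕ) : Measure (VV N) :=
  if h : ∃ m : Measure (VV N), IsCG m (Sg ν N) then h.choose else 0

lemma lw_eq {ν : Measure (ℝ × ℝ)} {N : ℕ} {m : Measure (VV N)} (h : IsCG m (Sg ν N)) : lw ν N = m := by
  have h' : ∃ m : Measure (VV N), IsCG m (Sg ν N) := ⟨m, h⟩
  rw [lw, dif_pos h']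
  exact h'.choose_spec.unique h

lemma lw_spec (ν : Measure (ℝ × ℝ)) [IsFiniteMeasure ν] (N : ℕ) : IsCG (lw ν N) (Sg ν N) := by
  obtain ⟨k, L, h⟩ := law_exists ν N
  have h1 := gauss_map L
  simp only [h] at h1
  rw [lw_eq h1]; exact h1

instance (ν : Measure (ℝ × ℝ)) [IsFiniteMeasure ν] (N : ℕ) : IsProbabilityMeasure (lw ν N) := (lw_spec ν N).1

lemma lw_add (ν ρ : Measure (ℝ × ℝ)) [IsFiniteMeasure ν] [IsFiniteMeasure ρ] (N : ℕ) :
    lw (ν + ρ) N = ((lw ν N).prod (lw ρ N)).map (fun p => p.1 + p.2) := by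
  refine lw_eq ?_
  have := (lw_spec ν N).add (lw_spec ρ N)
  have e : Sg (ν + ρ) N = fun a b => Sg ν N a b + Sg ρ N a b := by
    funext a b; exact Cc_add _ _ _ _
  rw [e]; exact this

lemma aN_conv {N : ℕ} (m m' : Measure (VV N)) [IsProbabilityMeasure m] [IsProbabilityMeasure m']
    (φ : ℝ → ℂ) (hφ : Continuous φ) (K : ENNReal)
    (h : ∀ x, ∫⁻ y, ‖mev (x + y) φ - mev x φ‖ₑ ∂m' ≤ K) (c : ℂ) :
    aN ((m.prod m').map (fun p => p.1 + p.2)) φ c ≤ aN m φ c + K ∧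
    aN m φ c ≤ aN ((m.prod m').map (fun p => p.1 + p.2)) φ c + K := by
  have hm := meas_mev N φ hφ
  have e : aN ((m.prod m').map (fun p => p.1 + p.2)) φ c = ∫⁻ x, ∫⁻ y, ‖mev (x + y) φ - c‖ₑ ∂m' ∂m := by
    unfold aN
    rw [lintegral_map (hm.sub_const c).enorm (by fun_prop), lintegral_prod]
    exact ((hm.comp (measurable_fst.add measurable_snd)).sub_const c).enorm.aemeasurable
  have hxy : ∀ x, Measurable (fun y : VV N => ‖mev (x + y) φ - c‖ₑ) := fun x =>
    ((hm.comp (measurable_const.add measurable_id)).sub_const c).enorm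
  rw [e]
  constructor
  · calc _ ≤ ∫⁻ x, (‖mev x φ - c‖ₑ + K) ∂m := by
          refine lintegral_mono fun x => ?_
          calc _ ≤ ∫⁻ y, (‖mev x φ - c‖ₑ + ‖mev (x + y) φ - mev x φ‖ₑ) ∂m' := by
                refine lintegral_mono fun y => ?_
                have : mev (x + y) φ - c = (mev x φ - c) + (mev (x + y) φ - mev x φ) := by ring
                rw [this]; exact enorm_add_le _ _
            _ ≤ _ := by
                rw [lintegral_add_left measurable_const]
                simp only [lintegral_const, measure_univ, mul_one]
                gcongr; exact h x
      _ = _ := by rw [lintegral_add_right _ measurable_const]; simp [aN]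
  · calc _ ≤ ∫⁻ x, (∫⁻ y, ‖mev (x + y) φ - c‖ₑ ∂m' + K) ∂m := by
          refine lintegral_mono fun x => ?_
          calc _ = ∫⁻ y, ‖mev x φ - c‖ₑ ∂m' := by simp
            _ ≤ ∫⁻ y, (‖mev (x + y) φ - c‖ₑ + ‖mev (x + y) φ - mev x φ‖ₑ) ∂m' := by
                refine lintegral_mono fun y => ?_
                have : mev x φ - c = (mev (x + y) φ - c) - (mev (x + y) φ - mev x φ) := by ring
                simp only
                rw [this]; exact enorm_sub_le
            _ ≤ _ := by
                rw [lintegral_add_left (hxy x)]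
                gcongr; exact h x
      _ = _ := by rw [lintegral_add_right _ measurable_const]; simp

lemma Smat_add {N : ℕ} (x y : VV N) : Smat N (x + y) - Smat N x = Smat N y := by
  ext i j; simp [Smat]; ring

lemma mev_cay {N : ℕ} (x y : VV N) (n : ℕ) (c : ℝ)
    (h : ∀ Q, Ctr Q → ‖(Q * ((Smat N y).map (fun t : ℝ => (t : ℂ)))).trace‖ ≤ c) :
    ‖mev (x + y) (fun t => uc t ^ n) - mev x (fun t => uc t ^ n)‖ ≤ (N : ℝ)⁻¹ * (2 * n * c) := by
  have := cay (Smat N (x + y)) (Smat N x) (Smat_herm _ _) (Smat_herm _ _) n c (by rwa [Smat_add])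
  simp only [mev]
  rw [← mul_sub, norm_mul, norm_inv, Complex.norm_natCast]
  gcongr
  exact this

lemma Smat_sq {N : ℕ} (y : VV N) : ∑ i, ∑ j, Smat N y i j ^ 2 ≤ 4 * (N : ℝ)⁻¹ * ∑ a, y a ^ 2 := by
  have h1 : ∑ i, ∑ j, Smat N y i j ^ 2 ≤ ∑ i, ∑ j, (2 * (N : ℝ)⁻¹ * (y (i, j) ^ 2 + y (j, i) ^ 2)) := by
    refine Finset.sum_le_sum fun i _ => Finset.sum_le_sum fun j _ => ?_
    rw [Smat, mul_pow, inv_pow, Real.sq_sqrt (by positivity), mul_comm 2, mul_assoc]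
    gcongr
    nlinarith [sq_nonneg (y (i, j) - y (j, i))]
  refine h1.trans (le_of_eq ?_)
  simp only [← Finset.mul_sum, Finset.sum_add_distrib]
  rw [Finset.sum_comm (f := fun i j => y (j, i) ^ 2), Fintype.sum_prod_type]
  ring

lemma mev_pert {N : ℕ} (x y : VV N) (n : ℕ) (δ : ℝ) (hδ : 0 < δ) :
    ‖mev (x + y) (fun t => uc t ^ n) - mev x (fun t => uc t ^ n)‖ ≤
      2 * n / δ * (((N : ℝ) ^ 2)⁻¹ * ∑ a, y a ^ 2) + 2 * n * δ := by
  set T := ∑ a, y a ^ 2 with hT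
  have hT0 : 0 ≤ T := by positivity
  rcases Nat.eq_zero_or_pos N with rfl | hN
  · simp [mev]; positivity
  have hN' : (0 : ℝ) < N := by exact_mod_cast hN
  refine (mev_cay x y n _ fun Q hQ => tr_frob hQ _).trans ?_
  have h1 : √N * √(∑ i, ∑ j, Smat N y i j ^ 2) ≤ 2 * √T := by
    rw [← Real.sqrt_mul (by positivity)]
    have : (2 : ℝ) * √T = √(4 * T) := by
      rw [Real.sqrt_mul (by norm_num), show (4 : ℝ) = 2 ^ 2 by norm_num, Real.sqrt_sq (by norm_num)]
    rw [this]
    refine Real.sqrt_le_sqrt ?_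
    calc _ ≤ (N : ℝ) * (4 * (N : ℝ)⁻¹ * T) := by gcongr; exact Smat_sq y
      _ = _ := by field_simp
  have h2 : 2 * √T ≤ T / (N * δ) + N * δ := by
    have h3 : √T * √T = T := Real.mul_self_sqrt hT0
    rw [← sub_nonneg]
    have : T / (N * δ) + N * δ - 2 * √T = (√T - N * δ) ^ 2 / (N * δ) := by
      field_simp
      nlinarith
    rw [this]; positivity
  calc _ ≤ (N : ℝ)⁻¹ * (2 * n * (T / (N * δ) + N * δ)) := by
        gcongr; exact h1.trans h2
    _ = _ := by field_simp

lemma lint_sq (ρ : Measure (ℝ × ℝ)) [IsFiniteMeasure ρ] (N : ℕ) :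
    ∫⁻ y, ENNReal.ofReal (((N : ℝ) ^ 2)⁻¹ * ∑ a, y a ^ 2) ∂(lw ρ N) ≤ ENNReal.ofReal (ρ.real Set.univ) := by
  have h0 : ∀ y : VV N, ENNReal.ofReal (((N : ℝ) ^ 2)⁻¹ * ∑ a, y a ^ 2) =
      ENNReal.ofReal ((N : ℝ) ^ 2)⁻¹ * ∑ a, ENNReal.ofReal (y a ^ 2) := fun y => by
    rw [ENNReal.ofReal_mul (by positivity), ENNReal.ofReal_sum_of_nonneg (fun a _ => sq_nonneg _)]
  simp only [h0]
  rw [lintegral_const_mul _ (by fun_prop), lintegral_finsetSum _ (fun a _ => by fun_prop)]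
  have h1 : ∀ a, ∫⁻ y : VV N, ENNReal.ofReal (y a ^ 2) ∂(lw ρ N) = ENNReal.ofReal (ρ.real Set.univ) := fun a => by
    rw [(lw_spec ρ N).sq a (by rw [Sg_diag]; positivity), Sg_diag]
  simp only [h1, Finset.sum_const, Finset.card_univ, Fintype.card_prod, Fintype.card_fin, nsmul_eq_mul]
  rcases Nat.eq_zero_or_pos N with rfl | hN
  · simp
  have hN' : (0 : ℝ) < N := by exact_mod_cast hN
  rw [← ENNReal.ofReal_natCast, ← ENNReal.ofReal_mul (by positivity), ← ENNReal.ofReal_mul (by positivity)]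
  refine ENNReal.ofReal_le_ofReal (le_of_eq ?_)
  push_cast
  field_simp

lemma lw_pert (ν ρ : Measure (ℝ × ℝ)) [IsFiniteMeasure ν] [IsFiniteMeasure ρ] (N n : ℕ) (c : ℂ)
    (δ : ℝ) (hδ : 0 < δ) :
    aN (lw (ν + ρ) N) (fun t => uc t ^ n) c ≤ aN (lw ν N) (fun t => uc t ^ n) c +
      ENNReal.ofReal (2 * n / δ * ρ.real Set.univ + 2 * n * δ) ∧
    aN (lw ν N) (fun t => uc t ^ n) c ≤ aN (lw (ν + ρ) N) (fun t => uc t ^ n) c +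
      ENNReal.ofReal (2 * n / δ * ρ.real Set.univ + 2 * n * δ) := by
  rw [lw_add]
  refine aN_conv _ _ _ (by have := uc_cont; fun_prop) _ (fun x => ?_) c
  calc _ ≤ ∫⁻ y, (ENNReal.ofReal (2 * n / δ) * ENNReal.ofReal (((N : ℝ) ^ 2)⁻¹ * ∑ a, y a ^ 2) +
          ENNReal.ofReal (2 * n * δ)) ∂(lw ρ N) := by
        refine lintegral_mono fun y => ?_
        rw [← ENNReal.ofReal_mul (by positivity), ← ENNReal.ofReal_add (by positivity) (by positivity),
          ← ofReal_norm]
        exact ENNReal.ofReal_le_ofReal (mev_pert x y n δ hδ)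
    _ ≤ ENNReal.ofReal (2 * n / δ) * ENNReal.ofReal (ρ.real Set.univ) + ENNReal.ofReal (2 * n * δ) := by
        rw [lintegral_add_right _ measurable_const, lintegral_const_mul _ (by fun_prop)]
        simp only [lintegral_const, measure_univ, mul_one]
        gcongr
        exact lint_sq ρ N
    _ = _ := by
        rw [← ENNReal.ofReal_mul (by positivity), ← ENNReal.ofReal_add (by positivity) (by positivity)]

lemma lw_second (ν : Measure (ℝ × ℝ)) [IsFiniteMeasure ν] (N : ℕ) :
    ∫⁻ x, ‖mev x (fun t => (t : ℂ) ^ 2)‖ₑ ∂(lw ν N) ≤ ENNReal.ofReal (4 * ν.real Set.univ) := by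
  have : ∀ x : VV N, ‖mev x (fun t => (t : ℂ) ^ 2)‖ₑ ≤
      ENNReal.ofReal 4 * ENNReal.ofReal (((N : ℝ) ^ 2)⁻¹ * ∑ a, x a ^ 2) := by
    intro x
    rw [← ENNReal.ofReal_mul (by positivity), ← ofReal_norm, mev_pow]
    refine ENNReal.ofReal_le_ofReal ?_
    have e : (Smat N x ^ 2).trace = ∑ i, ∑ j, Smat N x i j ^ 2 := by
      simp only [pow_two, Matrix.trace, Matrix.diag, Matrix.mul_apply]
      refine Finset.sum_congr rfl fun i _ => Finset.sum_congr rfl fun j _ => ?_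
      congr 1
      simp [Smat, add_comm]
    rw [e, Complex.norm_real, Real.norm_of_nonneg (by positivity)]
    calc _ ≤ (N : ℝ)⁻¹ * (4 * (N : ℝ)⁻¹ * ∑ a, x a ^ 2) := by gcongr; exact Smat_sq x
      _ = _ := by rw [sq, mul_inv]; ring
  refine (lintegral_mono this).trans ?_
  rw [lintegral_const_mul _ (by fun_prop), ENNReal.ofReal_mul (by norm_num)]
  gcongr
  exact lint_sq ν N

def atL (ω : ℝ) (z : ℝ × ℝ) (N : ℕ) : (Fin 2 → ℝ) →ₗ[ℝ] VV N where
  toFun ξ a := ω * (ξ 0 * cos ((a.1 : ℕ) * z.1 + (a.2 : ℕ) * z.2) + ξ 1 * sin ((a.1 : ℕ) * z.1 + (a.2 : ℕ) * z.2))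
  map_add' ξ η := by funext a; simp; ring
  map_smul' r ξ := by funext a; simp; ring

lemma atL_tr (ω : ℝ) (hω : 0 ≤ ω) (z : ℝ × ℝ) (N : ℕ) (ξ : Fin 2 → ℝ) (Q : Matrix (Fin N) (Fin N) ℂ) (hQ : Ctr Q) :
    ‖(Q * ((Smat N (atL ω z N ξ)).map (fun t : ℝ => (t : ℂ)))).trace‖ ≤ 4 * ω * √N * (|ξ 0| + |ξ 1|) := by
  let c1 : Fin N → ℝ := fun i => cos ((i : ℕ) * z.1)
  let s1 : Fin N → ℝ := fun i => sin ((i : ℕ) * z.1)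
  let c2 : Fin N → ℝ := fun i => cos ((i : ℕ) * z.2)
  let s2 : Fin N → ℝ := fun i => sin ((i : ℕ) * z.2)
  let t : (Fin N → ℝ) → (Fin N → ℝ) → ℂ := fun x y =>
    (Q * (Matrix.of fun i j => x i * y j).map (fun t : ℝ => (t : ℂ))).trace
  have ht : ∀ x y : Fin N → ℝ, (∀ i, |x i| ≤ 1) → (∀ i, |y i| ≤ 1) → ‖t x y‖ ≤ N := by
    intro x y hx hy
    refine (tr_rank1 hQ x y).trans ?_
    have : ∀ x : Fin N → ℝ, (∀ i, |x i| ≤ 1) → √(∑ i, x i ^ 2) ≤ √N := by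
      intro x hx
      refine Real.sqrt_le_sqrt ?_
      calc _ ≤ ∑ i : Fin N, (1 : ℝ) := Finset.sum_le_sum fun i _ => (sq_le_one_iff_abs_le_one _).2 (hx i)
        _ = N := by simp
    calc _ ≤ √N * √N := mul_le_mul (this x hx) (this y hy) (by positivity) (by positivity)
      _ = N := Real.mul_self_sqrt (by positivity)
  have e : (Q * ((Smat N (atL ω z N ξ)).map (fun t : ℝ => (t : ℂ)))).trace =
      (((√N)⁻¹ * ω : ℝ) : ℂ) * ((ξ 0 : ℂ) * (t c1 c2 - t s1 s2 + t c2 c1 - t s2 s1) +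
        (ξ 1 : ℂ) * (t s1 c2 + t c1 s2 + t c2 s1 + t s2 c1)) := by
    simp only [t, Matrix.trace, Matrix.diag, Matrix.mul_apply, Matrix.map_apply, Matrix.of_apply,
      ← Finset.sum_add_distrib, ← Finset.sum_sub_distrib, Finset.mul_sum]
    refine Finset.sum_congr rfl fun i _ => Finset.sum_congr rfl fun j _ => ?_
    simp only [Smat, atL, LinearMap.coe_mk, AddHom.coe_mk, cos_add, sin_add, c1, c2, s1, s2]
    push_cast
    ring
  have b1 : ∀ (x : ℝ) i, |cos (((i : Fin N) : ℕ) * x)| ≤ 1 := fun x i => abs_cos_le_one _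
  have b2 : ∀ (x : ℝ) i, |sin (((i : Fin N) : ℕ) * x)| ≤ 1 := fun x i => abs_sin_le_one _
  rw [e, norm_mul, Complex.norm_real, Real.norm_of_nonneg (by positivity)]
  have h4 : ∀ a b c d : ℂ, ‖a‖ ≤ N → ‖b‖ ≤ N → ‖c‖ ≤ N → ‖d‖ ≤ N → ‖a + b + c + d‖ ≤ 4 * N := by
    intro a b c d ha hb hc hd
    have := norm_add₄_le (a := a) (b := b) (c := c) (d := d)
    linarith
  have k0 : ‖t c1 c2 - t s1 s2 + t c2 c1 - t s2 s1‖ ≤ 4 * N := by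
    rw [show t c1 c2 - t s1 s2 + t c2 c1 - t s2 s1 = t c1 c2 + -t s1 s2 + t c2 c1 + -t s2 s1 by ring]
    refine h4 _ _ _ _ (ht _ _ (b1 _) (b1 _)) ?_ (ht _ _ (b1 _) (b1 _)) ?_
    · rw [norm_neg]; exact ht _ _ (b2 _) (b2 _)
    · rw [norm_neg]; exact ht _ _ (b2 _) (b2 _)
  have k1 : ‖t s1 c2 + t c1 s2 + t c2 s1 + t s2 c1‖ ≤ 4 * N :=
    h4 _ _ _ _ (ht _ _ (b2 _) (b1 _)) (ht _ _ (b1 _) (b2 _)) (ht _ _ (b1 _) (b2 _)) (ht _ _ (b2 _) (b1 _))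
  calc _ ≤ (√N)⁻¹ * ω * (|ξ 0| * (4 * N) + |ξ 1| * (4 * N)) := by
        gcongr
        refine (norm_add_le _ _).trans ?_
        rw [norm_mul, norm_mul, Complex.norm_real, Complex.norm_real, Real.norm_eq_abs, Real.norm_eq_abs]
        gcongr
    _ = _ := by
        rcases Nat.eq_zero_or_pos N with rfl | hN
        · simp
        have hN' : (0 : ℝ) < √N := Real.sqrt_pos.2 (by exact_mod_cast hN)
        have h5 : (N : ℝ) = √N * √N := (Real.mul_self_sqrt (by positivity)).symm
        field_simp
        rw [Real.sq_sqrt (by positivity)]; ring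

lemma lw_dirac (w : ENNReal) (hw : w ≠ ⊤) (z : ℝ × ℝ) (N : ℕ) :
    lw (w • Measure.dirac z) N = (stdG (Fin 2)).map (atL (√w.toReal) z N) := by
  refine lw_eq ?_
  have := gauss_map (atL (√w.toReal) z N)
  convert this using 1
  funext a b
  rw [Sg, Cc, integral_smul_measure, integral_dirac, smul_eq_mul]
  have : ((((b.1 : ℕ) : ℤ) - ((a.1 : ℕ) : ℤ) : ℤ) : ℝ) * z.1 + ((((b.2 : ℕ) : ℤ) - ((a.2 : ℕ) : ℤ) : ℤ) : ℝ) * z.2 =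
    ((b.1 : ℕ) * z.1 + (b.2 : ℕ) * z.2) - ((a.1 : ℕ) * z.1 + (a.2 : ℕ) * z.2) := by push_cast; ring
  rw [this, cos_sub]
  simp only [Fin.sum_univ_two, atL, LinearMap.coe_mk, AddHom.coe_mk, Pi.single_eq_same, Fin.isValue, ne_eq,
    one_ne_zero, zero_ne_one, not_false_eq_true, Pi.single_eq_of_ne]
  have h := Real.mul_self_sqrt (ENNReal.toReal_nonneg (a := w))
  set r := √w.toReal
  rw [← h]; ring

lemma std_sq (i : Fin 2) : ∫⁻ ξ : Fin 2 → ℝ, ENNReal.ofReal (ξ i ^ 2) ∂(stdG (Fin 2)) = 1 := by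
  have := gauss_map (LinearMap.id : (Fin 2 → ℝ) →ₗ[ℝ] (Fin 2 → ℝ))
  have h2 := this.sq i (Finset.sum_nonneg fun j _ => mul_self_nonneg _)
  rw [LinearMap.id_coe, Measure.map_id] at h2
  rw [h2]
  simp only [id, Pi.single_apply, mul_ite, mul_one, mul_zero]
  simp

lemma lw_atom (ν : Measure (ℝ × ℝ)) [IsFiniteMeasure ν] (w : ENNReal) (hw : w ≠ ⊤) (z : ℝ × ℝ) (N n : ℕ) (c : ℂ) :
    aN (lw (ν + w • Measure.dirac z) N) (fun t => uc t ^ n) c ≤ aN (lw ν N) (fun t => uc t ^ n) c +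
      ENNReal.ofReal ((N : ℝ)⁻¹ * (2 * n * (4 * √w.toReal * √N * 4))) := by
  have hf : IsFiniteMeasure (w • Measure.dirac z) := by
    refine ⟨?_⟩
    simp [hw.lt_top]
  rw [lw_add]
  refine (aN_conv _ _ _ (by have := uc_cont; fun_prop) _ (fun x => ?_) c).1
  rw [lw_dirac w hw, lintegral_map _ (meas_lin _)]
  swap
  · have := meas_mev N (fun t => uc t ^ n) (by have := uc_cont; fun_prop)
    exact ((this.comp (measurable_const.add measurable_id)).sub_const _).enorm
  set K := (N : ℝ)⁻¹ * (2 * n * (4 * √w.toReal * √N)) with hK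
  calc _ ≤ ∫⁻ ξ : Fin 2 → ℝ, ENNReal.ofReal K * (ENNReal.ofReal 2 + ENNReal.ofReal (ξ 0 ^ 2) + ENNReal.ofReal (ξ 1 ^ 2))
        ∂(stdG (Fin 2)) := by
        refine lintegral_mono fun ξ => ?_
        rw [← ENNReal.ofReal_add (by positivity) (by positivity), ← ENNReal.ofReal_add (by positivity) (by positivity),
          ← ENNReal.ofReal_mul (by positivity), ← ofReal_norm]
        refine ENNReal.ofReal_le_ofReal ?_
        refine (mev_cay x _ n _ fun Q hQ => atL_tr _ (by positivity) z N ξ Q hQ).trans ?_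
        have h : ∀ s : ℝ, |s| ≤ 1 + s ^ 2 := fun s => by
          rw [← sq_abs s]; nlinarith [sq_nonneg (|s| - 1)]
        calc _ = K * (|ξ 0| + |ξ 1|) := by rw [hK]; ring
          _ ≤ K * (2 + ξ 0 ^ 2 + ξ 1 ^ 2) := by
            exact mul_le_mul_of_nonneg_left (by linarith [h (ξ 0), h (ξ 1)]) (by positivity)
    _ = ENNReal.ofReal K * ENNReal.ofReal 4 := by
        rw [lintegral_const_mul _ (by fun_prop), lintegral_add_left (by fun_prop), lintegral_add_left (by fun_prop),
          std_sq, std_sq]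
        simp only [lintegral_const, measure_univ, mul_one]
        congr 1
        norm_num
    _ = _ := by
        rw [← ENNReal.ofReal_mul (by positivity)]
        congr 1
        rw [hK]; ring

lemma Cv_atom (ν : Measure (ℝ × ℝ)) [IsFiniteMeasure ν] (w : ENNReal) (hw : w ≠ ⊤) (z : ℝ × ℝ) (n : ℕ) (c : ℂ)
    (h : Cv (lw ν) (fun t => uc t ^ n) c) : Cv (lw (ν + w • Measure.dirac z)) (fun t => uc t ^ n) c := by
  have h1 : Tendsto (fun N : ℕ => (N : ℝ)⁻¹ * (2 * n * (4 * √w.toReal * √N * 4))) atTop (nhds 0) := by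
    have h2 : Tendsto (fun N : ℕ => (√(N : ℝ))⁻¹) atTop (nhds 0) :=
      tendsto_inv_atTop_zero.comp (Real.tendsto_sqrt_atTop.comp tendsto_natCast_atTop_atTop)
    have h3 := h2.const_mul (2 * n * (4 * √w.toReal * 4))
    rw [mul_zero] at h3
    refine h3.congr' ?_
    filter_upwards [eventually_gt_atTop 0] with N hN
    have hN' : (0 : ℝ) < √N := Real.sqrt_pos.2 (by exact_mod_cast hN)
    have h5 : (N : ℝ) = √N * √N := (Real.mul_self_sqrt (by positivity)).symm
    conv_rhs => rw [h5]
    field_simp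
    rw [Real.sqrt_sq hN'.le]
  have h6 := ENNReal.tendsto_ofReal h1
  rw [ENNReal.ofReal_zero] at h6
  have h7 := Tendsto.add h h6
  rw [add_zero] at h7
  exact tendsto_of_tendsto_of_tendsto_of_le_of_le tendsto_const_nhds h7 (fun _ => zero_le)
    (fun N => lw_atom ν w hw z N n c)

def fm (f : ℝ × ℝ → ℝ) : Measure (ℝ × ℝ) :=
  (volume.restrict specBox).withDensity (fun q => ENNReal.ofReal (f q))

def ee (k : ℤ × ℤ) (q : ℝ × ℝ) : ℂ := Complex.exp (Complex.I * ((k.1 * q.1 + k.2 * q.2 : ℝ) : ℂ))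

def TP (S : Finset (ℤ × ℤ)) (c : ℤ × ℤ → ℂ) (q : ℝ × ℝ) : ℂ := ∑ k ∈ S, c k * ee k q

lemma ee_cont (k : ℤ × ℤ) : Continuous (ee k) := by unfold ee; fun_prop

lemma TP_cont (S : Finset (ℤ × ℤ)) (c : ℤ × ℤ → ℂ) : Continuous (TP S c) := by
  have := ee_cont
  unfold TP; fun_prop

lemma ee_norm (k : ℤ × ℤ) (q : ℝ × ℝ) : ‖ee k q‖ = 1 := by
  rw [ee, mul_comm]; exact Complex.norm_exp_ofReal_mul_I _

lemma TP_bdd (S : Finset (ℤ × ℤ)) (c : ℤ × ℤ → ℂ) : ∃ C, 0 ≤ C ∧ ∀ q, ‖TP S c q‖ ≤ C := by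
  refine ⟨∑ k ∈ S, ‖c k‖, by positivity, fun q => ?_⟩
  refine (norm_sum_le _ _).trans (Finset.sum_le_sum fun k _ => ?_)
  rw [norm_mul, ee_norm, mul_one]

lemma ee_add (k l : ℤ × ℤ) (q : ℝ × ℝ) : ee (k + l) q = ee k q * ee l q := by
  rw [ee, ee, ee, ← Complex.exp_add]; congr 1; push_cast [Prod.fst_add, Prod.snd_add]; ring

lemma ee_conj (k : ℤ × ℤ) (q : ℝ × ℝ) : (starRingEnd ℂ) (ee k q) = ee (-k) q := by
  rw [ee, ee, ← Complex.exp_conj]; congr 1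
  rw [map_mul, Complex.conj_I, Complex.conj_ofReal]; push_cast [Prod.fst_neg, Prod.snd_neg]; ring

instance box_fin : IsFiniteMeasure (volume.restrict specBox) := by
  refine ⟨?_⟩
  rw [Measure.restrict_apply_univ, specBox, Measure.volume_eq_prod, Measure.prod_prod]
  simp [ENNReal.mul_lt_top_iff]

lemma int_one (n : ℤ) (hn : n ≠ 0) : ∫ x in Set.Ioc (-π) π, Complex.exp (Complex.I * (n * x : ℝ)) = 0 := by
  rw [← intervalIntegral.integral_of_le (by linarith [pi_pos])]
  have hc : Complex.I * n ≠ 0 := mul_ne_zero Complex.I_ne_zero (by exact_mod_cast hn)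
  have := integral_exp_mul_complex (a := -π) (b := π) hc
  have e : ∀ x : ℝ, Complex.I * ((n * x : ℝ) : ℂ) = Complex.I * n * x := fun x => by push_cast; ring
  simp only [e, this]
  have h2 : Complex.exp (Complex.I * n * (π : ℝ)) = Complex.exp (Complex.I * n * (-π : ℝ)) := by
    rw [Complex.exp_eq_exp_iff_exists_int]
    exact ⟨n, by push_cast; ring⟩
  rw [h2, sub_self, zero_div]

lemma int_box (k : ℤ × ℤ) (hk : k ≠ 0) : ∫ q in specBox, ee k q = 0 := by
  have e : ∀ q : ℝ × ℝ, ee k q = Complex.exp (Complex.I * (k.1 * q.1 : ℝ)) * Complex.exp (Complex.I * (k.2 * q.2 : ℝ)) := by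
    intro q; rw [ee, ← Complex.exp_add]; congr 1; push_cast; ring
  simp only [e]
  rw [specBox, Measure.volume_eq_prod, ← Measure.prod_restrict]
  rw [integral_prod_mul (μ := volume.restrict (Set.Ioc (-π) π)) (ν := volume.restrict (Set.Ioc (-π) π))
    (fun x => Complex.exp (Complex.I * (k.1 * x : ℝ))) (fun y => Complex.exp (Complex.I * (k.2 * y : ℝ)))]
  by_cases h1 : k.1 = 0
  · have h2 : k.2 ≠ 0 := fun h2 => hk (Prod.ext h1 h2)
    rw [int_one _ h2, mul_zero]
  · rw [int_one _ h1, zero_mul]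

lemma fm_fin {f : ℝ × ℝ → ℝ} (h : ∫⁻ q in specBox, ENNReal.ofReal (f q) ≠ ⊤) : IsFiniteMeasure (fm f) :=
  isFiniteMeasure_withDensity h

lemma TP_fin (S : Finset (ℤ × ℤ)) (c : ℤ × ℤ → ℂ) :
    ∫⁻ q in specBox, ENNReal.ofReal (‖TP S c q‖ ^ 2) ≠ ⊤ := by
  obtain ⟨C, h0, hC⟩ := TP_bdd S c
  refine ne_top_of_le_ne_top (b := ∫⁻ q in specBox, ENNReal.ofReal (C ^ 2)) ?_ (lintegral_mono fun q => ?_)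
  · rw [lintegral_const]; exact ENNReal.mul_ne_top (by simp) (measure_ne_top _ _)
  · exact ENNReal.ofReal_le_ofReal (pow_le_pow_left₀ (norm_nonneg _) (hC q) 2)

lemma Cc_TP (S : Finset (ℤ × ℤ)) (c : ℤ × ℤ → ℂ) (u v : ℤ)
    (h : (u, v) ∉ (S ×ˢ S).image (fun p => p.2 - p.1)) : Cc (fm (fun q => ‖TP S c q‖ ^ 2)) u v = 0 := by
  have hm : Continuous (fun q => ‖TP S c q‖ ^ 2) := (TP_cont S c).norm.pow 2
  rw [Cc, fm, integral_withDensity_eq_integral_toReal_smul hm.measurable.ennreal_ofReal (by simp)]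
  have e : ∀ q : ℝ × ℝ, (ENNReal.ofReal (‖TP S c q‖ ^ 2)).toReal • cos (u * q.1 + v * q.2) =
      (∑ p ∈ S ×ˢ S, c p.1 * (starRingEnd ℂ) (c p.2) * ee (p.1 - p.2 + (u, v)) q).re := by
    intro q
    have h1 : (∑ p ∈ S ×ˢ S, c p.1 * (starRingEnd ℂ) (c p.2) * ee (p.1 - p.2 + (u, v)) q) =
        TP S c q * (starRingEnd ℂ) (TP S c q) * ee (u, v) q := by
      rw [TP, map_sum, Finset.sum_mul_sum, ← Finset.sum_product', Finset.sum_mul]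
      refine Finset.sum_congr rfl fun p _ => ?_
      rw [ee_add, sub_eq_add_neg, ee_add, ← ee_conj, map_mul]; ring
    rw [h1, Complex.mul_conj, Complex.re_ofReal_mul, Complex.normSq_eq_norm_sq, smul_eq_mul,
      ENNReal.toReal_ofReal (by positivity)]
    congr 1
    rw [ee, mul_comm Complex.I, Complex.exp_ofReal_mul_I_re]
  simp only [e]
  have hi : ∀ k, Integrable (ee k) (volume.restrict specBox) := fun k =>
    Integrable.of_bound (C := 1) (ee_cont k).aestronglyMeasurable (Eventually.of_forall fun q => (ee_norm k q).le)
  have h2 : ∫ q in specBox, (∑ p ∈ S ×ˢ S, c p.1 * (starRingEnd ℂ) (c p.2) * ee (p.1 - p.2 + (u, v)) q) = 0 := by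
    rw [integral_finsetSum _ (fun p _ => (hi _).const_mul _)]
    refine Finset.sum_eq_zero fun p hp => ?_
    rw [integral_const_mul, int_box, mul_zero]
    intro h3
    refine h (Finset.mem_image.2 ⟨p, hp, ?_⟩)
    rw [← sub_eq_zero, ← neg_eq_zero, ← h3]; abel
  have h4 := integral_re (μ := volume.restrict specBox) (𝕜 := ℂ)
    (f := fun q => (∑ p ∈ S ×ˢ S, c p.1 * (starRingEnd ℂ) (c p.2) * ee (p.1 - p.2 + (u, v)) q))
    (integrable_finsetSum _ (fun p _ => (hi _).const_mul _))
  rw [h2] at h4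
  simpa using h4

lemma covH_of {ι : Type} [Fintype ι] [DecidableEq ι] {N : ℕ} (ν : Measure (ℝ × ℝ)) (D : Finset (ℤ × ℤ))
    (hD : ∀ u v, (u, v) ∉ D → Cc ν u v = 0) (L : (ι → ℝ) →ₗ[ℝ] VV N)
    (hL : ∀ a b, ∑ i, L (Pi.single i 1) a * L (Pi.single i 1) b = Sg ν N a b) :
    CovH (HL L) (D ∪ D.image Prod.swap) (fun q => Cc ν q.1 q.2 + Cc ν q.2 q.1) := by
  intro j k l m
  have hs : ∀ u v, ∑ q ∈ D ∪ D.image Prod.swap, (Cc ν q.1 q.2 + Cc ν q.2 q.1) * (N : ℝ)⁻¹ *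
      ((if u = q.1 then 1 else 0) * (if v = q.2 then 1 else 0)) = (N : ℝ)⁻¹ * (Cc ν u v + Cc ν v u) := by
    intro u v
    rw [Finset.sum_eq_single (u, v)]
    · simp; ring
    · intro q _ hq
      have : ¬ (u = q.1 ∧ v = q.2) := fun h => hq (Prod.ext h.1.symm h.2.symm)
      by_cases h1 : u = q.1
      · have h2 : v ≠ q.2 := fun h2 => this ⟨h1, h2⟩
        simp [h2]
      · simp [h1]
    · intro hn
      have h1 : (u, v) ∉ D := fun h => hn (Finset.mem_union_left _ h)
      have h2 : (v, u) ∉ D := fun h => hn (Finset.mem_union_right _ (Finset.mem_image.2 ⟨_, h, rfl⟩))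
      simp [hD _ _ h1, hD _ _ h2]
  simp only [mul_add, Finset.sum_add_distrib, Tm]
  have hs' := hs
  simp only [mul_add] at hs'
  rw [hs', hs']
  have e : ∀ i, HL L i j k * HL L i l m = (N : ℝ)⁻¹ * (L (Pi.single i 1) (j, k) * L (Pi.single i 1) (l, m) +
      L (Pi.single i 1) (j, k) * L (Pi.single i 1) (m, l) + L (Pi.single i 1) (k, j) * L (Pi.single i 1) (l, m) +
      L (Pi.single i 1) (k, j) * L (Pi.single i 1) (m, l)) := by
    intro i
    have : (N : ℝ)⁻¹ = (√(N : ℝ))⁻¹ * (√(N : ℝ))⁻¹ := by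
      rw [← mul_inv, Real.mul_self_sqrt (by positivity)]
    rw [HL, Smat, Smat, this]; ring
  simp only [e]
  rw [← Finset.mul_sum]
  simp only [Finset.sum_add_distrib, hL, Sg]
  ring

lemma nice_TP (S : Finset (ℤ × ℤ)) (c : ℤ × ℤ → ℂ) (n : ℕ) :
    ∃ d, Cv (lw (fm (fun q => ‖TP S c q‖ ^ 2))) (fun t => uc t ^ n) d := by
  have := fm_fin (TP_fin S c)
  set ν := fm (fun q => ‖TP S c q‖ ^ 2)
  choose k L hL using law_exists ν
  obtain ⟨d, hd⟩ := nice_all L (fun N => covH_of ν _ (Cc_TP S c) (L N) (hL N)) (fun t => uc t ^ n)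
    (by have := uc_cont; fun_prop) ⟨1, fun x => by simp [uc_norm]⟩
  refine ⟨d, ?_⟩
  convert hd using 2 with N
  have h1 := gauss_map (L N)
  simp only [hL] at h1
  exact lw_eq h1

def kap (q : ℝ × ℝ) : UnitAddTorus (Fin 2) :=
  ![((q.1 / (2 * π) : ℝ) : UnitAddCircle), ((q.2 / (2 * π) : ℝ) : UnitAddCircle)]

lemma kap_cont : Continuous kap := by
  refine continuous_pi fun i => ?_
  fin_cases i
  · exact (AddCircle.continuous_mk' 1).comp (by fun_prop)
  · exact (AddCircle.continuous_mk' 1).comp (by fun_prop)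

def r1 (z : UnitAddCircle) : ℝ := 2 * π * ((AddCircle.measurableEquivIoc 1 (-1 / 2) z : Set.Ioc _ _) : ℝ)

lemma r1_meas : Measurable r1 :=
  ((measurable_subtype_coe.comp (AddCircle.measurableEquivIoc 1 (-1 / 2)).measurable).const_mul _)

lemma r1_eq (x : ℝ) (hx : x ∈ Set.Ioc (-π) π) : r1 ((x / (2 * π) : ℝ) : UnitAddCircle) = x := by
  have hp := pi_pos
  have h : x / (2 * π) ∈ Set.Ioc (-1 / 2 : ℝ) (-1 / 2 + 1) := by
    constructor
    · rw [lt_div_iff₀ (by positivity)]; linarith [hx.1]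
    · rw [div_le_iff₀ (by positivity)]; linarith [hx.2]
  have := AddCircle.equivIoc_coe_of_mem (p := (1 : ℝ)) h
  rw [r1]
  change 2 * π * ((AddCircle.equivIoc (1 : ℝ) (-1 / 2) ((x / (2 * π) : ℝ) : AddCircle (1 : ℝ)) : Set.Ioc (-1 / 2 : ℝ) (-1 / 2 + 1)) : ℝ) = x
  rw [this]; field_simp

def rr (z : UnitAddTorus (Fin 2)) : ℝ × ℝ := (r1 (z 0), r1 (z 1))

lemma rr_meas : Measurable rr :=
  (r1_meas.comp (measurable_pi_apply 0)).prodMk (r1_meas.comp (measurable_pi_apply 1))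

lemma rr_kap (q : ℝ × ℝ) (hq : q ∈ specBox) : rr (kap q) = q := by
  ext
  · exact r1_eq _ hq.1
  · exact r1_eq _ hq.2

lemma mF_kap (n : Fin 2 → ℤ) (q : ℝ × ℝ) : UnitAddTorus.mFourier n (kap q) = ee (n 0, n 1) q := by
  have hp := pi_ne_zero
  simp only [UnitAddTorus.mFourier, ContinuousMap.coe_mk, Fin.prod_univ_two, kap, Matrix.cons_val_zero,
    Matrix.cons_val_one]
  rw [fourier_coe_apply, fourier_coe_apply, ee, ← Complex.exp_add]
  congr 1
  push_cast
  have hp' : (π : ℂ) ≠ 0 := by exact_mod_cast hp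
  field_simp

lemma span_TP (p : C(UnitAddTorus (Fin 2), ℂ))
    (hp : p ∈ Submodule.span ℂ (Set.range (UnitAddTorus.mFourier (d := Fin 2)))) :
    ∃ S c, ∀ q, p (kap q) = TP S c q := by
  obtain ⟨c, rfl⟩ := Finsupp.mem_span_range_iff_exists_finsupp.1 hp
  refine ⟨c.support.map (finTwoArrowEquiv ℤ).toEmbedding, fun k => c ((finTwoArrowEquiv ℤ).symm k), fun q => ?_⟩
  rw [TP, Finset.sum_map, Finsupp.sum, ContinuousMap.sum_apply]
  refine Finset.sum_congr rfl fun n _ => ?_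
  rw [ContinuousMap.smul_apply, mF_kap, Equiv.coe_toEmbedding, Equiv.symm_apply_apply]
  rfl

lemma msB : MeasurableSet specBox := measurableSet_Ioc.prod measurableSet_Ioc

lemma dens1 (F : ℝ × ℝ → ℂ) (hF : Measurable F) (hL : MemLp F 2 (volume.restrict specBox)) (ε : ℝ) (hε : 0 < ε) :
    ∃ S c, eLpNorm (fun q => F q - TP S c q) 2 (volume.restrict specBox) ≤ ENNReal.ofReal ε := by
  set B := volume.restrict specBox with hB
  set σ := B.map kap with hσ
  have hk := kap_cont.measurable
  have : IsFiniteMeasure σ := Measure.isFiniteMeasure_map _ _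
  have hae : (F ∘ rr) ∘ kap =ᵐ[B] F := by
    filter_upwards [ae_restrict_mem msB] with q hq
    simp [rr_kap q hq]
  have hm : Measurable (F ∘ rr) := hF.comp rr_meas
  have hG : MemLp (F ∘ rr) 2 σ := by
    refine ⟨hm.aestronglyMeasurable, ?_⟩
    rw [hσ, eLpNorm_map_measure hm.aestronglyMeasurable hk.aemeasurable, eLpNorm_congr_ae hae]
    exact hL.2
  obtain ⟨g, hg, -⟩ := hG.exists_boundedContinuous_eLpNorm_sub_le (by simp) (ε := ENNReal.ofReal (ε / 2))
    (by simpa using hε)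
  set V := (σ Set.univ) ^ ((2 : ENNReal).toReal)⁻¹ with hV
  have hVt : V ≠ ⊤ := ENNReal.rpow_ne_top_of_nonneg (by simp) (measure_ne_top _ _)
  set δ := ε / 2 / (V.toReal + 1) with hδ
  have hδ0 : 0 < δ := by positivity
  have hmem : (g.toContinuousMap) ∈
      (Submodule.span ℂ (Set.range (UnitAddTorus.mFourier (d := Fin 2)))).topologicalClosure := by
    rw [UnitAddTorus.span_mFourier_closure_eq_top]; trivial
  obtain ⟨p, hp, hpd⟩ := Metric.mem_closure_iff.1 hmem δ hδ0
  obtain ⟨S, c, hSc⟩ := span_TP p hp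
  refine ⟨S, c, ?_⟩
  have h1 : eLpNorm (fun q => F q - TP S c q) 2 B = eLpNorm ((F ∘ rr) - (p : UnitAddTorus (Fin 2) → ℂ)) 2 σ := by
    rw [hσ, eLpNorm_map_measure (hm.sub p.continuous.measurable).aestronglyMeasurable hk.aemeasurable]
    refine eLpNorm_congr_ae ?_
    filter_upwards [hae] with q hq
    simp only [Function.comp_apply, Pi.sub_apply] at hq ⊢
    rw [hq, hSc]
  have h2 : (F ∘ rr) - (p : UnitAddTorus (Fin 2) → ℂ) = ((F ∘ rr) - g) + ((g : UnitAddTorus (Fin 2) → ℂ) - (p : UnitAddTorus (Fin 2) → ℂ)) := by abel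
  have h3 : eLpNorm ((g : UnitAddTorus (Fin 2) → ℂ) - (p : UnitAddTorus (Fin 2) → ℂ)) 2 σ ≤ V * ENNReal.ofReal δ := by
    refine eLpNorm_le_of_ae_bound (Eventually.of_forall fun x => ?_)
    have := (ContinuousMap.dist_apply_le_dist (f := g.toContinuousMap) (g := p) x).trans hpd.le
    rwa [dist_eq_norm] at this
  rw [h1, h2]
  refine (eLpNorm_add_le (hm.aestronglyMeasurable.sub g.continuous.measurable.aestronglyMeasurable)
    (g.continuous.measurable.sub p.continuous.measurable).aestronglyMeasurable (by norm_num)).trans ?_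
  have h4 : V * ENNReal.ofReal δ ≤ ENNReal.ofReal (ε / 2) := by
    rw [← ENNReal.ofReal_toReal hVt, ← ENNReal.ofReal_mul (by positivity)]
    refine ENNReal.ofReal_le_ofReal ?_
    rw [hδ, mul_div_assoc', div_le_iff₀ (by positivity)]
    nlinarith [ENNReal.toReal_nonneg (a := V)]
  calc _ ≤ ENNReal.ofReal (ε / 2) + ENNReal.ofReal (ε / 2) := add_le_add hg (h3.trans h4)
    _ = _ := by rw [← ENNReal.ofReal_add (by positivity) (by positivity)]; congr 1; ring

lemma eL2 {α : Type*} [MeasurableSpace α] (m : Measure α) (F : α → ℂ) :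
    ∫⁻ x, ENNReal.ofReal (‖F x‖ ^ 2) ∂m = eLpNorm F 2 m ^ 2 := by
  rw [eLpNorm_eq_lintegral_rpow_enorm_toReal (by simp) (by simp), ← ENNReal.rpow_natCast, ← ENNReal.rpow_mul]
  simp only [ENNReal.toReal_ofNat, Nat.cast_ofNat]
  norm_num

lemma dens2 (f : ℝ × ℝ → ℝ) (hf : Measurable f) (h0 : ∀ q, 0 ≤ f q)
    (hi : ∫⁻ q in specBox, ENNReal.ofReal (f q) ≠ ⊤) (ε : ℝ) (hε : 0 < ε) :
    ∃ S c, ∫⁻ q in specBox, ENNReal.ofReal |f q - ‖TP S c q‖ ^ 2| ≤ ENNReal.ofReal ε := by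
  set B := volume.restrict specBox with hB
  set F : ℝ × ℝ → ℂ := fun q => (√(f q) : ℝ) with hFd
  have hFm : Measurable F := by fun_prop
  have hFn : ∀ q, ‖F q‖ ^ 2 = f q := fun q => by
    simp only [hFd, Complex.norm_real, norm_eq_abs, sq_abs, sq_sqrt (h0 q)]
  have hL : MemLp F 2 B := by
    refine ⟨hFm.aestronglyMeasurable, ?_⟩
    have := eL2 B F
    simp only [hFn] at this
    rw [this] at hi
    by_contra hc
    simp only [not_lt, top_le_iff] at hc
    rw [hc] at hi; simp at hi
  set M := (∫⁻ q, ENNReal.ofReal (f q) ∂B).toReal with hM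
  have hM0 : 0 ≤ M := ENNReal.toReal_nonneg
  set δ := ε / 2 / (M + 1) with hδ
  have hδ0 : 0 < δ := by positivity
  set η := √(ε / 2 / (1 + 1 / δ)) with hη
  have hη0 : 0 < η := Real.sqrt_pos.2 (by positivity)
  obtain ⟨S, c, h⟩ := dens1 F hFm hL η hη0
  refine ⟨S, c, ?_⟩
  have hTm := (TP_cont S c).measurable
  have hpt : ∀ q, |f q - ‖TP S c q‖ ^ 2| ≤ (1 + 1 / δ) * ‖F q - TP S c q‖ ^ 2 + δ * f q := by
    intro q
    rw [← hFn q]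
    have h1 := norm_sub_norm_le (F q) (TP S c q)
    have h2 := norm_sub_norm_le (TP S c q) (F q)
    rw [norm_sub_rev] at h2
    set a := ‖F q‖
    set b := ‖TP S c q‖
    set d := ‖F q - TP S c q‖
    have ha : 0 ≤ a := norm_nonneg _
    have hb : 0 ≤ b := norm_nonneg _
    have hd : 0 ≤ d := norm_nonneg _
    have h5 : 2 * a * d ≤ 1 / δ * d ^ 2 + δ * a ^ 2 := by
      have : 1 / δ * d ^ 2 + δ * a ^ 2 - 2 * a * d = 1 / δ * (d - δ * a) ^ 2 := by field_simp; ring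
      have : 0 ≤ 1 / δ * (d - δ * a) ^ 2 := by positivity
      linarith
    rw [abs_le]
    constructor <;> nlinarith
  calc _ ≤ ∫⁻ q, (ENNReal.ofReal (1 + 1 / δ) * ENNReal.ofReal (‖F q - TP S c q‖ ^ 2) +
        ENNReal.ofReal δ * ENNReal.ofReal (f q)) ∂B := by
        refine lintegral_mono fun q => ?_
        rw [← ENNReal.ofReal_mul (by positivity), ← ENNReal.ofReal_mul (by positivity),
          ← ENNReal.ofReal_add (by positivity) (mul_nonneg hδ0.le (h0 q))]
        exact ENNReal.ofReal_le_ofReal (hpt q)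
    _ = ENNReal.ofReal (1 + 1 / δ) * eLpNorm (fun q => F q - TP S c q) 2 B ^ 2 + ENNReal.ofReal δ * ENNReal.ofReal M := by
        rw [lintegral_add_left (by fun_prop), lintegral_const_mul _ (by fun_prop), lintegral_const_mul _ (by fun_prop),
          eL2 B (fun q => F q - TP S c q), ENNReal.ofReal_toReal hi]
    _ ≤ ENNReal.ofReal (1 + 1 / δ) * ENNReal.ofReal η ^ 2 + ENNReal.ofReal δ * ENNReal.ofReal M := by gcongr
    _ ≤ ENNReal.ofReal (ε / 2) + ENNReal.ofReal (ε / 2) := by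
        rw [← ENNReal.ofReal_pow hη0.le, ← ENNReal.ofReal_mul (by positivity), ← ENNReal.ofReal_mul (by positivity)]
        refine add_le_add (ENNReal.ofReal_le_ofReal (le_of_eq ?_)) (ENNReal.ofReal_le_ofReal ?_)
        · rw [hη, sq_sqrt (by positivity)]; field_simp
        · rw [hδ, div_mul_eq_mul_div, div_le_iff₀ (by positivity)]
          nlinarith
    _ = _ := by rw [← ENNReal.ofReal_add (by positivity) (by positivity)]; congr 1; ring

lemma fm_split (f p : ℝ × ℝ → ℝ) (hf : Measurable f) (hp : Measurable p) (hf0 : ∀ q, 0 ≤ f q)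
    (hp0 : ∀ q, 0 ≤ p q) (ε : ℝ) (hε : 0 ≤ ε)
    (h : ∫⁻ q in specBox, ENNReal.ofReal |f q - p q| ≤ ENNReal.ofReal ε) :
    ∃ ρ, fm f = fm (fun q => min (f q) (p q)) + ρ ∧ ρ Set.univ ≤ ENNReal.ofReal ε := by
  refine ⟨fm (fun q => f q - min (f q) (p q)), ?_, ?_⟩
  · rw [fm, fm, fm, ← withDensity_add_left (by fun_prop)]
    congr 1; funext q
    rw [Pi.add_apply, ← ENNReal.ofReal_add (le_min (hf0 q) (hp0 q)) (by linarith [min_le_left (f q) (p q)])]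
    congr 1; ring
  · rw [fm, withDensity_apply _ MeasurableSet.univ, Measure.restrict_univ]
    refine le_trans (lintegral_mono fun q => ENNReal.ofReal_le_ofReal ?_) h
    rcases le_total (f q) (p q) with h1 | h1
    · rw [min_eq_left h1]; simp
    · rw [min_eq_right h1]; exact le_abs_self _

lemma Cv_ac (f : ℝ × ℝ → ℝ) (hf : Measurable f) (h0 : ∀ q, 0 ≤ f q)
    (hi : ∫⁻ q in specBox, ENNReal.ofReal (f q) ≠ ⊤) (n : ℕ) : ∃ d, Cv (lw (fm f)) (fun t => uc t ^ n) d := by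
  have := fm_fin hi
  refine Cv_meas _ _ (by have := uc_cont; fun_prop) fun ε hε => ?_
  set δ := ε / (8 * n + 1) with hδ
  have hδ0 : 0 < δ := by positivity
  obtain ⟨S, c, h⟩ := dens2 f hf h0 hi (δ ^ 2) (by positivity)
  obtain ⟨d, hd⟩ := nice_TP S c n
  refine ⟨_, d, hd, Eventually.of_forall fun N => ?_⟩
  have hT := ((TP_cont S c).measurable.norm.pow_const 2)
  obtain ⟨ρ, e1, hρ⟩ := fm_split f (fun q => ‖TP S c q‖ ^ 2) hf hT h0 (fun q => by positivity) (δ ^ 2) (by positivity) h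
  obtain ⟨ρ', e2, hρ'⟩ := fm_split (fun q => ‖TP S c q‖ ^ 2) f hT hf (fun q => by positivity) h0 (δ ^ 2) (by positivity)
    (by simp only [abs_sub_comm]; simpa only [abs_sub_comm] using h)
  have e3 : (fun q => min (‖TP S c q‖ ^ 2) (f q)) = (fun q => min (f q) (‖TP S c q‖ ^ 2)) := by
    funext q; exact min_comm _ _
  rw [e3] at e2
  have f1 : IsFiniteMeasure ρ := ⟨hρ.trans_lt ENNReal.ofReal_lt_top⟩
  have f2 : IsFiniteMeasure ρ' := ⟨hρ'.trans_lt ENNReal.ofReal_lt_top⟩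
  have r1 : ρ.real Set.univ ≤ δ ^ 2 := ENNReal.toReal_le_of_le_ofReal (by positivity) hρ
  have r2 : ρ'.real Set.univ ≤ δ ^ 2 := ENNReal.toReal_le_of_le_ofReal (by positivity) hρ'
  set ν := fm (fun q => min (f q) (‖TP S c q‖ ^ 2)) with hν
  have f3 : IsFiniteMeasure ν := isFiniteMeasure_of_le (fm f) (by rw [e1]; exact Measure.le_add_right le_rfl)
  have key : ∀ r : ℝ, 0 ≤ r → r ≤ δ ^ 2 → ENNReal.ofReal (2 * n / δ * r + 2 * n * δ) ≤ ENNReal.ofReal (ε / 2) := by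
    intro r _ hr
    refine ENNReal.ofReal_le_ofReal ?_
    calc _ ≤ 2 * n / δ * δ ^ 2 + 2 * n * δ := by gcongr
      _ = 4 * n * δ := by field_simp; ring
      _ ≤ ε / 2 := by
        rw [hδ, mul_div_assoc', div_le_iff₀ (by positivity)]; nlinarith
  rw [e1, e2]
  refine (lw_pert ν ρ N n d δ hδ0).1.trans ?_
  refine (add_le_add (lw_pert ν ρ' N n d δ hδ0).2 (key _ (by positivity) r1)).trans ?_
  rw [add_assoc]
  refine add_le_add le_rfl ?_
  refine (add_le_add (key _ (by positivity) r2) le_rfl).trans (le_of_eq ?_)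
  rw [← ENNReal.ofReal_add (by positivity) (by positivity)]; congr 1; ring

lemma Cv_restr (ν νd : Measure (ℝ × ℝ)) [IsFiniteMeasure ν] [IsFiniteMeasure νd] (n : ℕ) (c : ℂ)
    (h : Cv (lw ν) (fun t => uc t ^ n) c) (T : Finset (ℝ × ℝ)) :
    Cv (lw (ν + νd.restrict T)) (fun t => uc t ^ n) c := by
  classical
  induction T using Finset.induction_on with
  | empty => simpa using h
  | insert a T ha ih =>
    have e : ν + νd.restrict (insert a T : Finset (ℝ × ℝ)) = (ν + νd.restrict T) + νd {a} • Measure.dirac a := by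
      rw [Finset.coe_insert, Set.insert_eq, Measure.restrict_union (by simpa using ha) T.measurableSet,
        Measure.restrict_singleton, add_assoc, add_comm (νd {a} • Measure.dirac a)]
    rw [e]
    exact Cv_atom _ _ (measure_ne_top _ _) _ _ _ ih

lemma disc_tail (νd : Measure (ℝ × ℝ)) [IsFiniteMeasure νd] (s : Set (ℝ × ℝ)) (hs : s.Countable) (h : νd sᶜ = 0)
    (ε : ℝ) (hε : 0 < ε) : ∃ T : Finset (ℝ × ℝ), νd ((T : Set (ℝ × ℝ))ᶜ) ≤ ENNReal.ofReal ε := by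
  classical
  obtain ⟨e, he⟩ := (hs.insert 0).exists_eq_range (Set.insert_nonempty _ _)
  have h1 := tendsto_measure_iInter_atTop (μ := νd) (s := fun n : ℕ => (((Finset.range n).image e : Finset _) : Set (ℝ × ℝ))ᶜ)
    (fun n => (Finset.measurableSet _).compl.nullMeasurableSet)
    (fun i j hij => Set.compl_subset_compl.2 (by
      intro x hx
      simp only [Finset.coe_image, Set.mem_image, Finset.mem_coe, Finset.mem_range] at hx ⊢
      obtain ⟨k, hk, rfl⟩ := hx
      exact ⟨k, by omega, rfl⟩)) ⟨0, measure_ne_top _ _⟩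
  have h2 : νd (⋂ n : ℕ, (((Finset.range n).image e : Finset _) : Set (ℝ × ℝ))ᶜ) = 0 := by
    refine measure_mono_null (fun x hx => ?_) h
    intro hxs
    have : x ∈ Set.range e := he ▸ Set.mem_insert_of_mem _ hxs
    obtain ⟨k, rfl⟩ := this
    refine Set.mem_iInter.1 hx (k + 1) ?_
    simp only [Finset.coe_image, Set.mem_image, Finset.mem_coe, Finset.mem_range]
    exact ⟨k, by omega, rfl⟩
  rw [h2] at h1
  obtain ⟨n, hn⟩ := ((ENNReal.tendsto_nhds_zero.1 h1) (ENNReal.ofReal ε) (by simpa using hε)).exists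
  exact ⟨_, hn⟩

lemma Cv_disc (ν νd : Measure (ℝ × ℝ)) [IsFiniteMeasure ν] [IsFiniteMeasure νd] (n : ℕ) (c : ℂ)
    (h : Cv (lw ν) (fun t => uc t ^ n) c) (s : Set (ℝ × ℝ)) (hs : s.Countable) (h0 : νd sᶜ = 0) :
    Cv (lw (ν + νd)) (fun t => uc t ^ n) c := by
  refine ENNReal.tendsto_nhds_zero.2 fun ε hε => ?_
  obtain ⟨ε', he0, he⟩ : ∃ ε' : ℝ, 0 < ε' ∧ ENNReal.ofReal ε' + ENNReal.ofReal ε' ≤ ε := by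
    by_cases ht : ε = ⊤
    · exact ⟨1, one_pos, by simp [ht]⟩
    · refine ⟨ε.toReal / 2, by have := ENNReal.toReal_pos hε.ne' ht; positivity, ?_⟩
      rw [← ENNReal.ofReal_add (by positivity) (by positivity), add_halves, ENNReal.ofReal_toReal ht]
  set δ := ε' / (4 * n + 1) with hδ
  have hδ0 : 0 < δ := by positivity
  obtain ⟨T, hT⟩ := disc_tail νd s hs h0 (δ ^ 2) (by positivity)
  have h1 := Cv_restr ν νd n c h T
  have e : ν + νd = (ν + νd.restrict T) + νd.restrict (T : Set (ℝ × ℝ))ᶜ := by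
    rw [add_assoc, Measure.restrict_add_restrict_compl T.measurableSet]
  filter_upwards [(ENNReal.tendsto_nhds_zero.1 h1) (ENNReal.ofReal ε') (by simpa using he0)] with N hN
  rw [e]
  refine (lw_pert _ _ N n c δ hδ0).1.trans (le_trans (add_le_add hN ?_) he)
  refine ENNReal.ofReal_le_ofReal ?_
  have hr : (νd.restrict (T : Set (ℝ × ℝ))ᶜ).real Set.univ ≤ δ ^ 2 :=
    ENNReal.toReal_le_of_le_ofReal (by positivity) (by simpa using hT)
  calc _ ≤ 2 * n / δ * δ ^ 2 + 2 * n * δ := by gcongr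
    _ = 4 * n * δ := by field_simp; ring
    _ ≤ ε' := by
        rw [hδ, mul_div_assoc', div_le_iff₀ (by positivity)]; nlinarith

lemma mev_conj {N : ℕ} (x : VV N) (φ : ℝ → ℂ) : mev x (fun t => (starRingEnd ℂ) (φ t)) = (starRingEnd ℂ) (mev x φ) := by
  simp [mev, map_sum]

lemma Cv_conj {m : ∀ N, Measure (VV N)} {φ : ℝ → ℂ} {c : ℂ} (h : Cv m φ c) :
    Cv m (fun t => (starRingEnd ℂ) (φ t)) ((starRingEnd ℂ) c) := by
  refine Tendsto.congr (fun N => ?_) h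
  unfold aN
  refine lintegral_congr fun x => ?_
  rw [mev_conj, ← map_sub, ← ofReal_norm, ← ofReal_norm, Complex.norm_conj]

lemma uc_int (m : ∀ N, Measure (VV N)) (h : ∀ n : ℕ, ∃ c, Cv m (fun t => uc t ^ n) c) (n : ℤ) :
    ∃ c, Cv m (fun t => Complex.exp (Complex.I * ((n : ℝ) * (2 * arctan t) : ℝ))) c := by
  have e : ∀ (k : ℕ) (t : ℝ), uc t ^ k = Complex.exp (Complex.I * (((k : ℤ) : ℝ) * (2 * arctan t) : ℝ)) := by
    intro k t
    rw [uc_exp, ← Complex.exp_nat_mul]; congr 1; push_cast; ring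
  obtain ⟨k, rfl | rfl⟩ := n.eq_nat_or_neg
  · obtain ⟨c, hc⟩ := h k
    simp only [e] at hc
    exact ⟨c, hc⟩
  · obtain ⟨c, hc⟩ := h k
    have := Cv_conj hc
    simp only [e] at this
    refine ⟨(starRingEnd ℂ) c, ?_⟩
    convert this using 2 with t
    rw [← Complex.exp_conj]; congr 1
    rw [map_mul, Complex.conj_I, Complex.conj_ofReal]; push_cast; ring

lemma Cv_bc (m : ∀ N, Measure (VV N)) [∀ N, IsProbabilityMeasure (m N)] (B : ℝ) (hB0 : 0 ≤ B)
    (hB : ∀ N, ∫⁻ x, ‖mev x (fun t => (t : ℂ) ^ 2)‖ₑ ∂(m N) ≤ ENNReal.ofReal B)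
    (h : ∀ n : ℕ, ∃ c, Cv m (fun t => uc t ^ n) c)
    (g : ℝ → ℝ) (hg : Continuous g) (hgb : ∃ C, ∀ x, |g x| ≤ C) : ∃ c, Cv m (fun t => (g t : ℂ)) c := by
  refine Cv_all m B hB0 hB (fun M _ => ⟨fun t => 2 * arctan t, by fun_prop, ?_, ?_, uc_int m h⟩) g hg hgb
  · intro x _ y _ hxy
    exact arctan_injective (by simpa using hxy)
  · intro x _
    have h1 := neg_pi_div_two_lt_arctan x
    have h2 := arctan_lt_pi_div_two x
    constructor <;> simp only <;> linarith

lemma Cv_sub_unique {m M : ∀ N, Measure (VV N)} [∀ N, IsProbabilityMeasure (m N)] (φ : ℝ → ℂ) (hφ : Continuous φ)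
    {c d : ℂ} (h1 : Cv m φ c) (h2 : Cv M φ d) {u : ℕ → ℕ} (hu : Tendsto u atTop atTop)
    (he : ∀ k, M (u k) = m (u k)) : c = d := by
  have h3 := (Tendsto.comp h1 hu).add (Tendsto.comp h2 hu)
  rw [add_zero] at h3
  have h4 : ∀ k, ‖c - d‖ₑ ≤ aN (m (u k)) φ c + aN (M (u k)) φ d := fun k => by
    rw [he]; exact aN_h2 (m (u k)) φ hφ c d
  have : ‖c - d‖ₑ ≤ 0 := ge_of_tendsto h3 (Eventually.of_forall h4)
  simpa [sub_eq_zero] using this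

/-- the same limits for two families having the same Cayley limits -/
lemma Cv_same (m m' : ∀ N, Measure (VV N)) [∀ N, IsProbabilityMeasure (m N)] [∀ N, IsProbabilityMeasure (m' N)]
    (B : ℝ) (hB0 : 0 ≤ B)
    (hB : ∀ N, ∫⁻ x, ‖mev x (fun t => (t : ℂ) ^ 2)‖ₑ ∂(m N) ≤ ENNReal.ofReal B)
    (hB' : ∀ N, ∫⁻ x, ‖mev x (fun t => (t : ℂ) ^ 2)‖ₑ ∂(m' N) ≤ ENNReal.ofReal B)
    (h : ∀ n : ℕ, ∃ c, Cv m (fun t => uc t ^ n) c ∧ Cv m' (fun t => uc t ^ n) c)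
    (g : ℝ → ℝ) (hg : Continuous g) (hgb : ∃ C, ∀ x, |g x| ≤ C) :
    ∃ c, Cv m (fun t => (g t : ℂ)) c ∧ Cv m' (fun t => (g t : ℂ)) c := by
  classical
  set M : ∀ N, Measure (VV N) := fun N => if Even N then m N else m' N with hM
  have : ∀ N, IsProbabilityMeasure (M N) := fun N => by
    simp only [hM]; split_ifs <;> infer_instance
  have hBM : ∀ N, ∫⁻ x, ‖mev x (fun t => (t : ℂ) ^ 2)‖ₑ ∂(M N) ≤ ENNReal.ofReal B := fun N => by
    simp only [hM]; split_ifs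
    · exact hB N
    · exact hB' N
  have hMc : ∀ φ c, Cv m φ c → Cv m' φ c → Cv M φ c := by
    intro φ c h1 h2
    refine ENNReal.tendsto_nhds_zero.2 fun ε hε => ?_
    filter_upwards [ENNReal.tendsto_nhds_zero.1 h1 ε hε, ENNReal.tendsto_nhds_zero.1 h2 ε hε] with N h3 h4
    simp only [hM]; split_ifs
    · exact h3
    · exact h4
  have hφ : Continuous fun t => (g t : ℂ) := by fun_prop
  obtain ⟨c, hc⟩ := Cv_bc M B hB0 hBM (fun n => by
    obtain ⟨c, h1, h2⟩ := h n; exact ⟨c, hMc _ _ h1 h2⟩) g hg hgb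
  obtain ⟨c1, hc1⟩ := Cv_bc m B hB0 hB (fun n => by obtain ⟨c, h1, h2⟩ := h n; exact ⟨c, h1⟩) g hg hgb
  obtain ⟨c2, hc2⟩ := Cv_bc m' B hB0 hB' (fun n => by obtain ⟨c, h1, h2⟩ := h n; exact ⟨c, h2⟩) g hg hgb
  have h1 : Tendsto (fun k : ℕ => 2 * k) atTop atTop := tendsto_id.const_mul_atTop' (by norm_num)
  have h2 : Tendsto (fun k : ℕ => 2 * k + 1) atTop atTop := tendsto_atTop_mono (fun k => by simp only [id]; omega) tendsto_id
  have e1 : c1 = c := Cv_sub_unique _ hφ hc1 hc h1 (fun k => by simp [hM])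
  have e2 : c2 = c := Cv_sub_unique _ hφ hc2 hc h2 (fun k => by simp [hM])
  exact ⟨c, e1 ▸ hc1, e2 ▸ hc2⟩

/-- existence of the limit functional -/
lemma lim_exists (f : ℝ × ℝ → ℝ) (hf : Measurable f) (h0 : ∀ q, 0 ≤ f q)
    (hi : ∫⁻ q in specBox, ENNReal.ofReal (f q) ≠ ⊤) (νd : Measure (ℝ × ℝ)) [IsFiniteMeasure νd]
    (s : Set (ℝ × ℝ)) (hs : s.Countable) (hd : νd sᶜ = 0)
    (g : ℝ → ℝ) (hg : Continuous g) (hgb : ∃ C, ∀ x, |g x| ≤ C) :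
    ∃ c, Cv (lw (fm f)) (fun t => (g t : ℂ)) c ∧ Cv (lw (fm f + νd)) (fun t => (g t : ℂ)) c := by
  have := fm_fin hi
  refine Cv_same _ _ (4 * (fm f + νd).real Set.univ) (by positivity) (fun N => (lw_second _ N).trans ?_)
    (fun N => lw_second _ N) (fun n => ?_) g hg hgb
  · refine ENNReal.ofReal_le_ofReal ?_
    rw [measureReal_add_apply]
    have : 0 ≤ νd.real Set.univ := measureReal_nonneg
    linarith
  · obtain ⟨c, hc⟩ := Cv_ac f hf h0 hi n
    exact ⟨c, hc, Cv_disc _ _ n c hc s hs hd⟩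

def BC (g : ℝ → ℝ) : Prop := Continuous g ∧ ∃ C, ∀ x, |g x| ≤ C

lemma BC.add {g h : ℝ → ℝ} (hg : BC g) (hh : BC h) : BC (fun t => g t + h t) := by
  obtain ⟨h1, C, hC⟩ := hg
  obtain ⟨h2, D, hD⟩ := hh
  exact ⟨h1.add h2, C + D, fun x => (abs_add_le _ _).trans (add_le_add (hC x) (hD x))⟩

lemma BC.smul {g : ℝ → ℝ} (hg : BC g) (a : ℝ) : BC (fun t => a * g t) := by
  obtain ⟨h1, C, hC⟩ := hg
  refine ⟨by fun_prop, |a| * C, fun x => ?_⟩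
  rw [abs_mul]; exact mul_le_mul_of_nonneg_left (hC x) (abs_nonneg a)

lemma BC.mul {g h : ℝ → ℝ} (hg : BC g) (hh : BC h) : BC (fun t => g t * h t) := by
  obtain ⟨h1, C, hC⟩ := hg
  obtain ⟨h2, D, hD⟩ := hh
  refine ⟨h1.mul h2, C * D, fun x => ?_⟩
  rw [abs_mul]
  exact mul_le_mul (hC x) (hD x) (abs_nonneg _) ((abs_nonneg _).trans (hC x))

lemma BC.one : BC (fun _ => 1) := ⟨continuous_const, 1, fun _ => by simp⟩

lemma BC_cc (g : CompactlySupportedContinuousMap ℝ ℝ) : BC g := by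
  obtain ⟨C, hC⟩ := g.hasCompactSupport.exists_bound_of_continuous g.continuous
  exact ⟨g.continuous, C, hC⟩

def chi (n : ℕ) (t : ℝ) : ℝ := max 0 (min 1 (n + 1 - |t|))

lemma chi_cont (n : ℕ) : Continuous (chi n) := by unfold chi; fun_prop
lemma chi_nonneg (n : ℕ) (t : ℝ) : 0 ≤ chi n t := le_max_left _ _
lemma chi_le (n : ℕ) (t : ℝ) : chi n t ≤ 1 := max_le zero_le_one (min_le_left _ _)
lemma chi_one (n : ℕ) (t : ℝ) (h : |t| ≤ n) : chi n t = 1 := by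
  rw [chi, min_eq_left (by linarith), max_eq_right zero_le_one]
lemma chi_BC (n : ℕ) : BC (chi n) := ⟨chi_cont n, 1, fun x => by rw [abs_of_nonneg (chi_nonneg n x)]; exact chi_le n x⟩
lemma chi_supp (n : ℕ) : HasCompactSupport (chi n) := by
  refine HasCompactSupport.intro (isCompact_Icc (a := -((n : ℝ) + 1)) (b := n + 1)) fun x hx => ?_
  have : (n : ℝ) + 1 < |x| := by
    by_contra h
    push Not at h
    exact hx (abs_le.1 h)
  rw [chi, max_eq_left]
  exact (min_le_right _ _).trans (by linarith)

lemma chi_tail (n : ℕ) (hn : 0 < n) (t : ℝ) : 1 - chi n t ≤ t ^ 2 / (n : ℝ) ^ 2 := by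
  have hn' : (0 : ℝ) < n := by exact_mod_cast hn
  by_cases h : |t| ≤ n
  · rw [chi_one n t h, sub_self]; positivity
  · push Not at h
    have : 1 ≤ t ^ 2 / (n : ℝ) ^ 2 := by
      rw [le_div_iff₀ (by positivity), one_mul, ← sq_abs t]
      exact pow_le_pow_left₀ hn'.le h.le 2
    linarith [chi_nonneg n t]

lemma riesz (l : (ℝ → ℝ) → ℝ) (hadd : ∀ g h, BC g → BC h → l (fun t => g t + h t) = l g + l h)
    (hsmul : ∀ g a, BC g → l (fun t => a * g t) = a * l g) (hpos : ∀ g, BC g → (∀ t, 0 ≤ g t) → 0 ≤ l g)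
    (hone : l (fun _ => 1) = 1) (B : ℝ)
    (htight : ∀ g (M : ℝ), 0 < M → BC g → (∀ t, |g t| ≤ t ^ 2 / M) → |l g| ≤ B / M) :
    ∃ μ : Measure ℝ, IsProbabilityMeasure μ ∧ ∀ g, BC g → l g = ∫ x, g x ∂μ := by
  let Λ : CompactlySupportedContinuousMap ℝ ℝ →ₚ[ℝ] ℝ := PositiveLinearMap.mk₀
    { toFun := fun g => l g
      map_add' := fun g h => hadd g h (BC_cc g) (BC_cc h)
      map_smul' := fun a g => hsmul g a (BC_cc g) } (fun g hg => hpos g (BC_cc g) hg)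
  set μ := RealRMK.rieszMeasure Λ with hμ
  have hint : ∀ g (hg : Continuous g) (hs : HasCompactSupport g), ∫ x, g x ∂μ = l g := fun g hg hs =>
    RealRMK.integral_rieszMeasure Λ ⟨⟨g, hg⟩, hs⟩
  have hsub : ∀ g h, BC g → BC h → l g = l h + l (fun t => g t + (-1) * h t) := by
    intro g h hg hh
    rw [← hadd h _ hh (hg.add (hh.smul (-1)))]
    congr 1; funext t; ring
  have hchi : ∀ n, l (chi n) ≤ 1 := by
    intro n
    have h1 := hsub _ _ BC.one (chi_BC n)
    have h2 := hpos _ (BC.one.add ((chi_BC n).smul (-1))) (fun t => by linarith [chi_le n t])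
    linarith
  have hle : ∀ n : ℕ, μ (Set.Icc (-(n : ℝ)) n) ≤ 1 := by
    intro n
    have := RealRMK.rieszMeasure_le_of_eq_one Λ (f := ⟨⟨chi n, chi_cont n⟩, chi_supp n⟩) (chi_nonneg n)
      (K := Set.Icc (-(n : ℝ)) n) isCompact_Icc (fun x hx => chi_one n x (abs_le.2 hx))
    refine this.trans ?_
    rw [ENNReal.ofReal_le_one]
    exact hchi n
  have hfin : μ Set.univ ≤ 1 := by
    have hU : (⋃ n : ℕ, Set.Icc (-(n : ℝ)) n) = Set.univ := by
      refine Set.eq_univ_of_forall fun x => Set.mem_iUnion.2 ?_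
      obtain ⟨n, hn⟩ := exists_nat_ge |x|
      exact ⟨n, abs_le.1 hn⟩
    rw [← hU, Monotone.measure_iUnion]
    · exact iSup_le hle
    · intro i j hij
      have : (i : ℝ) ≤ j := by exact_mod_cast hij
      exact Set.Icc_subset_Icc (by linarith) this
  have : IsFiniteMeasure μ := ⟨hfin.trans_lt ENNReal.one_lt_top⟩
  have key : ∀ g, BC g → l g = ∫ x, g x ∂μ := by
    intro g hg
    obtain ⟨hc, C, hC⟩ := hg
    have hC0 : 0 ≤ C := (abs_nonneg _).trans (hC 0)
    have h1 : Tendsto (fun n : ℕ => ∫ x, g x * chi n x ∂μ) atTop (nhds (∫ x, g x ∂μ)) := by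
      refine tendsto_integral_of_dominated_convergence (fun _ => C)
        (fun n => (hc.mul (chi_cont n)).aestronglyMeasurable) (integrable_const _) (fun n => ?_) ?_
      · refine Eventually.of_forall fun x => ?_
        rw [norm_mul, norm_eq_abs, norm_eq_abs, abs_of_nonneg (chi_nonneg n x)]
        exact (mul_le_of_le_one_right (abs_nonneg _) (chi_le n x)).trans (hC x)
      · refine Eventually.of_forall fun x => ?_
        refine tendsto_const_nhds.congr' ?_
        filter_upwards [tendsto_natCast_atTop_atTop.eventually_ge_atTop |x|] with n hn
        rw [chi_one n x hn, mul_one]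
    have h2 : Tendsto (fun n : ℕ => ∫ x, g x * chi n x ∂μ) atTop (nhds (l g)) := by
      have e : ∀ n, ∫ x, g x * chi n x ∂μ = l (fun x => g x * chi n x) := fun n =>
        hint (fun x => g x * chi n x) (hc.mul (chi_cont n)) (chi_supp n).mul_left
      simp only [e]
      rw [tendsto_iff_dist_tendsto_zero]
      have h3 : Tendsto (fun n : ℕ => B / ((n : ℝ) ^ 2 / (C + 1))) atTop (nhds 0) := by
        refine Tendsto.div_atTop tendsto_const_nhds ?_
        refine Tendsto.atTop_div_const (by positivity) ?_
        exact (tendsto_pow_atTop (by norm_num)).comp tendsto_natCast_atTop_atTop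
      refine tendsto_of_tendsto_of_tendsto_of_le_of_le' tendsto_const_nhds h3
        (Eventually.of_forall fun n => dist_nonneg) ?_
      filter_upwards [eventually_gt_atTop 0] with n hn
      have hn' : (0 : ℝ) < n := by exact_mod_cast hn
      have hb1 : BC g := ⟨hc, C, hC⟩
      have hb2 : BC (fun x => g x * chi n x) := hb1.mul (chi_BC n)
      have h4 := hsub _ _ hb1 hb2
      have h5 := htight _ ((n : ℝ) ^ 2 / (C + 1)) (by positivity) (hb1.add (hb2.smul (-1))) (fun t => by
        have : g t + -1 * (g t * chi n t) = g t * (1 - chi n t) := by ring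
        have h0 : 0 ≤ 1 - chi n t := by linarith [chi_le n t]
        rw [this, abs_mul, abs_of_nonneg h0]
        calc _ ≤ (C + 1) * (t ^ 2 / (n : ℝ) ^ 2) :=
              mul_le_mul ((hC t).trans (by linarith)) (chi_tail n hn t) h0 (by positivity)
          _ = _ := by field_simp)
      rw [dist_comm, Real.dist_eq]
      rw [h4, add_sub_cancel_left]; exact h5
    exact tendsto_nhds_unique h2 h1
  refine ⟨μ, ⟨?_⟩, key⟩
  have h1 := key _ BC.one
  rw [hone] at h1
  simp only [integral_const, smul_eq_mul, mul_one] at h1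
  have := ENNReal.ofReal_toReal (measure_ne_top μ Set.univ)
  rw [← this]
  change ENNReal.ofReal (μ.real Set.univ) = 1
  rw [← h1, ENNReal.ofReal_one]

lemma Cv_pos {m : ∀ N, Measure (VV N)} [∀ N, IsProbabilityMeasure (m N)] {g : ℝ → ℝ} {c : ℂ}
    (hg : ∀ t, 0 ≤ g t) (h : Cv m (fun t => (g t : ℂ)) c) : 0 ≤ c.re := by
  have h1 : ENNReal.ofReal (-c.re) ≤ 0 := by
    refine ge_of_tendsto h (Eventually.of_forall fun N => ?_)
    calc ENNReal.ofReal (-c.re) = ∫⁻ x : VV N, ENNReal.ofReal (-c.re) ∂(m N) := by simp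
      _ ≤ _ := lintegral_mono fun x => by
        rw [← ofReal_norm]
        refine ENNReal.ofReal_le_ofReal ?_
        have h2 := Complex.re_le_norm (mev x (fun t => (g t : ℂ)) - c)
        have h3 : mev x (fun t => (g t : ℂ)) = (((N : ℝ)⁻¹ * ∑ j, g (ev x j) : ℝ) : ℂ) := by
          rw [mev]; push_cast; rfl
        have h4 : 0 ≤ (N : ℝ)⁻¹ * ∑ j, g (ev x j) :=
          mul_nonneg (by positivity) (Finset.sum_nonneg fun j _ => hg _)
        rw [Complex.sub_re] at h2
        have h5 : (mev x (fun t => (g t : ℂ))).re = (N : ℝ)⁻¹ * ∑ j, g (ev x j) := by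
          rw [h3, Complex.ofReal_re]
        linarith
  simpa using h1

lemma Cv_one (m : ∀ N, Measure (VV N)) : Cv m (fun _ => ((1 : ℝ) : ℂ)) 1 := by
  refine tendsto_const_nhds.congr' ?_
  filter_upwards [eventually_gt_atTop 0] with N hN
  unfold aN
  simp [mev_one hN]

lemma Cv_tight {m : ∀ N, Measure (VV N)} [∀ N, IsProbabilityMeasure (m N)] {g : ℝ → ℝ} {c : ℂ} {B M : ℝ}
    (hB0 : 0 ≤ B) (hM : 0 < M)
    (hB : ∀ N, ∫⁻ x, ‖mev x (fun t => (t : ℂ) ^ 2)‖ₑ ∂(m N) ≤ ENNReal.ofReal B) (hgc : Continuous g)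
    (hg : ∀ t, |g t| ≤ t ^ 2 / M) (h : Cv m (fun t => (g t : ℂ)) c) : ‖c‖ ≤ B / M := by
  have hφ : Continuous fun t => (g t : ℂ) := by fun_prop
  have h0 : ∀ N, aN (m N) (fun t => (g t : ℂ)) 0 ≤ ENNReal.ofReal (B / M) := by
    intro N
    have hm := (meas_mev_pow N 2).enorm
    calc _ ≤ ∫⁻ x, ENNReal.ofReal (1 / M) * ‖mev x (fun t => (t : ℂ) ^ 2)‖ₑ ∂(m N) := by
          refine lintegral_mono fun x => ?_
          rw [sub_zero, ← ofReal_norm, ← ofReal_norm, ← ENNReal.ofReal_mul (by positivity)]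
          refine ENNReal.ofReal_le_ofReal ?_
          have h1 := mev_norm_le x (fun t => (g t : ℂ)) (fun t => t ^ 2 / M) (fun t => by
            rw [Complex.norm_real]; exact hg t)
          refine h1.trans ((Complex.re_le_norm _).trans (le_of_eq ?_))
          have : (fun t : ℝ => ((t ^ 2 / M : ℝ) : ℂ)) = fun t : ℝ => ((1 / M : ℝ) : ℂ) * (t : ℂ) ^ 2 := by
            funext t; push_cast; ring
          rw [this, mev_smul, norm_mul, Complex.norm_real, norm_eq_abs, abs_of_pos (by positivity)]
      _ ≤ ENNReal.ofReal (1 / M) * ENNReal.ofReal B := by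
          rw [lintegral_const_mul _ hm]; gcongr; exact hB N
      _ = _ := by rw [← ENNReal.ofReal_mul (by positivity)]; congr 1; ring
  have h1 : ‖c‖ₑ ≤ 0 + ENNReal.ofReal (B / M) := by
    refine ge_of_tendsto (Tendsto.add_const (ENNReal.ofReal (B / M)) h) (Eventually.of_forall fun N => ?_)
    have := aN_h2 (m N) _ hφ c 0
    rw [sub_zero] at this
    exact this.trans (add_le_add le_rfl (h0 N))
  rw [zero_add, ← ofReal_norm] at h1
  exact (ENNReal.ofReal_le_ofReal_iff (by positivity)).1 h1

lemma lim_measure (f : ℝ × ℝ → ℝ) (hf : Measurable f) (h0 : ∀ q, 0 ≤ f q)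
    (hi : ∫⁻ q in specBox, ENNReal.ofReal (f q) ≠ ⊤) :
    ∃ μ : Measure ℝ, IsProbabilityMeasure μ ∧ ∀ g, BC g →
      Cv (lw (fm f)) (fun t => (g t : ℂ)) ((∫ x, g x ∂μ : ℝ) : ℂ) := by
  classical
  have := fm_fin hi
  have hex : ∀ g, BC g → ∃ c : ℝ, Cv (lw (fm f)) (fun t => (g t : ℂ)) (c : ℂ) := by
    intro g hg
    obtain ⟨c, hc, -⟩ := lim_exists f hf h0 hi 0 ∅ Set.countable_empty (by simp) g hg.1 hg.2
    have h1 := Cv_conj hc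
    simp only [Complex.conj_ofReal] at h1
    have hφ : Continuous fun t => (g t : ℂ) := Complex.continuous_ofReal.comp hg.1
    have h2 := Cv_unique hφ h1 hc
    exact ⟨c.re, by rwa [Complex.conj_eq_iff_re.1 h2]⟩
  have hun : ∀ g (c d : ℝ), BC g → Cv (lw (fm f)) (fun t => (g t : ℂ)) (c : ℂ) →
      Cv (lw (fm f)) (fun t => (g t : ℂ)) (d : ℂ) → c = d := by
    intro g c d hg h1 h2
    have hφ : Continuous fun t => (g t : ℂ) := Complex.continuous_ofReal.comp hg.1
    exact_mod_cast Cv_unique hφ h1 h2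
  let l : (ℝ → ℝ) → ℝ := fun g => if hg : BC g then (hex g hg).choose else 0
  have hl : ∀ g, BC g → Cv (lw (fm f)) (fun t => (g t : ℂ)) (l g : ℂ) := by
    intro g hg
    simp only [l, dif_pos hg]
    exact (hex g hg).choose_spec
  obtain ⟨μ, hμ, h⟩ := riesz l
    (fun g h hg hh => hun _ _ _ (hg.add hh) (hl _ (hg.add hh)) (by
      have hφ : Continuous fun t => (g t : ℂ) := Complex.continuous_ofReal.comp hg.1
      have := Cv_add hφ (hl g hg) (hl h hh)
      push_cast; exact this))
    (fun g a hg => hun _ _ _ (hg.smul a) (hl _ (hg.smul a)) (by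
      have hφ : Continuous fun t => (g t : ℂ) := Complex.continuous_ofReal.comp hg.1
      have := Cv_smul hφ a (hl g hg)
      push_cast; exact this))
    (fun g hg hp => by simpa using Cv_pos hp (hl g hg))
    (hun _ _ _ BC.one (hl _ BC.one) (by simpa using Cv_one (lw (fm f))))
    (4 * (fm f).real Set.univ)
    (fun g M hM hg ht => by
      have := Cv_tight (by positivity) hM (lw_second (fm f)) hg.1 ht (hl g hg)
      simpa using this)
  exact ⟨μ, hμ, fun g hg => h g hg ▸ hl g hg⟩

lemma gauss_sq {Ω : Type*} [MeasurableSpace Ω] {P : Measure Ω} {Y : Ω → ℝ} (hY : Measurable Y) {v : NNReal}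
    (h : P.map Y = gaussianReal 0 v) : MemLp Y 2 P ∧ ∫ ω, Y ω ^ 2 ∂P = v := by
  constructor
  · have := memLp_id_gaussianReal (μ := 0) (v := v) 2
    rw [← h, memLp_map_measure_iff aestronglyMeasurable_id hY.aemeasurable] at this
    exact this
  · have hv := variance_id_gaussianReal (μ := 0) (v := v)
    rw [variance_eq_integral (by fun_prop)] at hv
    simp only [id, integral_id_gaussianReal, sub_zero] at hv
    rw [← h, integral_map hY.aemeasurable (by fun_prop)] at hv
    exact hv

def Vx {Ω : Type*} (X : ℤ → ℤ → Ω → ℝ) (N : ℕ) (ω : Ω) : VV N :=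
  fun a => X ((a.1 : ℕ) + 1) ((a.2 : ℕ) + 1) ω

lemma Vx_meas {Ω : Type*} [MeasurableSpace Ω] (X : ℤ → ℤ → Ω → ℝ) (h : ∀ j k, Measurable (X j k)) (N : ℕ) :
    Measurable (Vx X N) := measurable_pi_lambda _ fun a => h _ _

lemma law_X {Ω : Type*} [MeasurableSpace Ω] (P : Measure Ω) [IsProbabilityMeasure P] (X : ℤ → ℤ → Ω → ℝ)
    (ν νd : Measure (ℝ × ℝ)) (f : ℝ × ℝ → ℝ) (hX : StatGauss P X) (hν : SpectralDecomp P X ν νd f) (N : ℕ) :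
    lw ν N = P.map (Vx X N) := by
  have hfin := hν.finite
  have hVm := Vx_meas X hX.meas N
  refine lw_eq ⟨Measure.isProbabilityMeasure_map hVm.aemeasurable, fun c => ?_⟩
  have hL2 : ∀ j k, MemLp (X j k) 2 P := by
    intro j k
    obtain ⟨v, hv⟩ := hX.gauss (Finsupp.single (j, k) 1)
    have : (fun ω => ∑ p ∈ (Finsupp.single (j, k) (1 : ℝ)).support,
        (Finsupp.single (j, k) (1 : ℝ)) p * X p.1 p.2 ω) = X j k := by
      funext ω
      rw [Finsupp.support_single_ne_zero _ one_ne_zero]; simp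
    rw [this] at hv
    exact (gauss_sq (hX.meas j k) hv).1
  have hR : ∀ u v : ℤ, ∫ ω, X 0 0 ω * X u v ω ∂P = Cc ν u v := by
    intro u v
    have h1 := congrArg Complex.re (hν.herglotz u v)
    rw [Complex.ofReal_re] at h1
    rw [← h1, Cc]
    have hint : Integrable (fun q : ℝ × ℝ => Complex.exp (Complex.I * ((u * q.1 + v * q.2 : ℝ) : ℂ))) ν :=
      Integrable.of_bound (C := 1) (by fun_prop) (Eventually.of_forall fun q => by
        rw [mul_comm, Complex.norm_exp_ofReal_mul_I])
    have h4 := integral_re hint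
    simp only [RCLike.re_to_complex] at h4
    rw [← h4]
    congr 1; funext q
    rw [mul_comm Complex.I, Complex.exp_ofReal_mul_I_re]
  set Y : Ω → ℝ := fun ω => ∑ a, c a * Vx X N ω a with hYd
  have hYm : Measurable Y := Finset.measurable_sum _ fun a _ => ((measurable_pi_apply a).comp hVm).const_mul _
  obtain ⟨v, hv⟩ : ∃ v : NNReal, P.map Y = gaussianReal 0 v := by
    let e : Fin N × Fin N ↪ ℤ × ℤ := ⟨fun a => (((a.1 : ℕ) : ℤ) + 1, ((a.2 : ℕ) : ℤ) + 1), fun a b hab => by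
      simp only [Prod.mk.injEq, add_left_inj, Nat.cast_inj] at hab
      exact Prod.ext (Fin.ext hab.1) (Fin.ext hab.2)⟩
    obtain ⟨v, hv⟩ := hX.gauss (Finsupp.embDomain e (Finsupp.equivFunOnFinite.symm c))
    refine ⟨v, ?_⟩
    rw [← hv]
    congr 1; funext ω
    have := Finsupp.sum_embDomain (v := Finsupp.equivFunOnFinite.symm c) (f := e)
      (g := fun p r => r * X p.1 p.2 ω)
    rw [Finsupp.sum] at this
    rw [this, Finsupp.sum_fintype _ _ (by simp)]
    rfl
  have hvar := (gauss_sq hYm hv).2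
  have hexp : ∫ ω, Y ω ^ 2 ∂P = ∑ a, ∑ b, c a * c b * Sg ν N a b := by
    have e1 : ∀ ω, Y ω ^ 2 = ∑ a, ∑ b, c a * c b * (Vx X N ω a * Vx X N ω b) := by
      intro ω
      rw [sq, hYd, Finset.sum_mul_sum]
      refine Finset.sum_congr rfl fun a _ => Finset.sum_congr rfl fun b _ => by ring
    have hi : ∀ a b, Integrable (fun ω => Vx X N ω a * Vx X N ω b) P := fun a b =>
      (hL2 _ _).integrable_mul (hL2 _ _)
    simp only [e1]
    rw [integral_finsetSum _ (fun a _ => integrable_finsetSum _ fun b _ => (hi a b).const_mul _)]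
    refine Finset.sum_congr rfl fun a _ => ?_
    rw [integral_finsetSum _ (fun b _ => (hi a b).const_mul _)]
    refine Finset.sum_congr rfl fun b _ => ?_
    rw [integral_const_mul]
    congr 1
    rw [Sg, ← hR, ← hX.stat ((a.1 : ℕ) + 1) ((a.2 : ℕ) + 1)]
    congr 1; funext ω
    simp only [Vx]
    congr 2 <;> ring
  rw [integral_map hVm.aemeasurable (by exact (by fun_prop : Continuous _).aestronglyMeasurable)]
  have h5 := charFun_gaussianReal (μ := 0) (v := v) 1
  rw [charFun_apply_real, ← hv, integral_map hYm.aemeasurable (by exact (by fun_prop : Continuous _).aestronglyMeasurable)] at h5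
  rw [← hexp, hvar]
  simp only [Complex.ofReal_one, one_mul] at h5
  refine h5.trans ?_
  congr 1; push_cast; ring

lemma esd_of_Cv {Ω : Type*} [MeasurableSpace Ω] (P : Measure Ω) [IsProbabilityMeasure P] (X : ℤ → ℤ → Ω → ℝ)
    (hm : ∀ j k, Measurable (X j k)) (μ : Measure ℝ)
    (h : ∀ g, BC g → Cv (fun N => P.map (Vx X N)) (fun t => (g t : ℂ)) ((∫ x, g x ∂μ : ℝ) : ℂ)) :
    ESDTendstoInProb P (scaledW X) μ := by
  intro g hg hgb ε hε
  have h1 := h g ⟨hg, hgb⟩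
  have hφ : Continuous fun t => (g t : ℂ) := Complex.continuous_ofReal.comp hg
  have h2 := ENNReal.Tendsto.div_const h1 (b := ENNReal.ofReal ε) (Or.inr (by simpa using hε))
  rw [ENNReal.zero_div] at h2
  refine tendsto_of_tendsto_of_tendsto_of_le_of_le tendsto_const_nhds h2 (fun _ => zero_le) fun N => ?_
  have hVm := Vx_meas X hm N
  have hmm := ((meas_mev N _ hφ).sub_const ((∫ x, g x ∂μ : ℝ) : ℂ)).enorm
  simp only [aN]
  rw [lintegral_map hmm hVm]
  rw [ENNReal.le_div_iff_mul_le (Or.inl (by simpa using hε)) (Or.inl (by simp)), mul_comm]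
  refine le_trans (le_of_eq ?_) (mul_meas_ge_le_lintegral₀ (hmm.comp hVm).aemeasurable (ENNReal.ofReal ε))
  congr 2
  ext ω
  simp only [Set.mem_setOf_eq, Function.comp_apply]
  have e : scaledW X N ω = Smat N (Vx X N ω) := rfl
  rw [e, ← esd_eq, ← Complex.ofReal_sub, ← ofReal_norm, Complex.norm_real, norm_eq_abs,
    ENNReal.ofReal_le_ofReal_iff (abs_nonneg _)]

lemma esd_unique {Ω : Type*} [MeasurableSpace Ω] (P : Measure Ω) [IsProbabilityMeasure P]
    (A : (N : ℕ) → Ω → Matrix (Fin N) (Fin N) ℝ) (μ μ' : Measure ℝ) [IsProbabilityMeasure μ] [IsProbabilityMeasure μ']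
    (h : ESDTendstoInProb P A μ) (h' : ESDTendstoInProb P A μ') : μ = μ' := by
  refine ext_of_forall_integral_eq_of_IsFiniteMeasure fun g => ?_
  by_contra hne
  have hb : ∃ C, ∀ x, |g x| ≤ C := ⟨‖g‖, fun x => g.norm_coe_le_norm x⟩
  set a := ∫ x, g x ∂μ
  set b := ∫ x, g x ∂μ'
  have hpos : 0 < |a - b| / 2 := by have := abs_pos.2 (sub_ne_zero.2 hne); positivity
  have h1 := (h g g.continuous hb _ hpos).add (h' g g.continuous hb _ hpos)
  rw [add_zero] at h1
  have : (1 : ENNReal) ≤ 0 := by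
    refine ge_of_tendsto h1 (Eventually.of_forall fun N => ?_)
    rw [← measure_univ (μ := P)]
    refine (measure_mono fun ω _ => ?_).trans (measure_union_le _ _)
    by_contra hc
    simp only [Set.mem_union, Set.mem_setOf_eq, not_or, not_le] at hc
    have := abs_sub_le a (esdEval (A N ω) g) b
    have h3 : |esdEval (A N ω) g - a| < |a - b| / 2 := hc.1
    have h4 : |esdEval (A N ω) g - b| < |a - b| / 2 := hc.2
    rw [abs_sub_comm a (esdEval (A N ω) g)] at this
    linarith
  simp at this

lemma main_conv {Ω : Type*} [MeasurableSpace Ω] (P : Measure Ω) [IsProbabilityMeasure P] (X : ℤ → ℤ → Ω → ℝ)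
    (ν νd : Measure (ℝ × ℝ)) (f : ℝ × ℝ → ℝ) (hX : StatGauss P X) (hν : SpectralDecomp P X ν νd f) (μ : Measure ℝ)
    (hi : ∫⁻ q in specBox, ENNReal.ofReal (f q) ≠ ⊤)
    (h : ∀ g, BC g → Cv (lw (fm f)) (fun t => (g t : ℂ)) ((∫ x, g x ∂μ : ℝ) : ℂ)) :
    ESDTendstoInProb P (scaledW X) μ := by
  refine esd_of_Cv P X hX.meas μ fun g hg => ?_
  have hfin := hν.finite
  have := fm_fin hi
  have hdec : ν = fm f + νd := hν.decomp
  have hfd : IsFiniteMeasure νd := isFiniteMeasure_of_le ν (by rw [hdec]; exact Measure.le_add_left le_rfl)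
  have e : (fun N => P.map (Vx X N)) = lw (fm f + νd) := by
    funext N; rw [← law_X P X ν νd f hX hν N, hdec]
  rw [e]
  obtain ⟨s, hs, hs0⟩ := hν.discrete
  obtain ⟨c, h1, h2⟩ := lim_exists f hν.f_meas hν.f_nonneg hi νd s hs hs0 g hg.1 hg.2
  have hφ : Continuous fun t => (g t : ℂ) := Complex.continuous_ofReal.comp hg.1
  rwa [Cv_unique hφ (h g hg) h1]

/-- **Theorem 1.** There is a deterministic probability measure `μ_f`,
determined solely by the density `f` of the absolutely continuous component of
the spectral measure, such that `ESD(W_N/√N) → μ_f` weakly in probability. -/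
theorem statement0 {Ω : Type} [MeasurableSpace Ω] (P : Measure Ω)
    [IsProbabilityMeasure P] (X : ℤ → ℤ → Ω → ℝ) (ν νd : Measure (ℝ × ℝ))
    (f : ℝ × ℝ → ℝ) (hX : StatGauss P X) (hν : SpectralDecomp P X ν νd f) :
    ∃ μf : Measure ℝ, IsProbabilityMeasure μf ∧
      ESDTendstoInProb P (scaledW X) μf ∧
      ∀ {Ω' : Type} [MeasurableSpace Ω'] (P' : Measure Ω')
        [IsProbabilityMeasure P'] (X' : ℤ → ℤ → Ω' → ℝ)
        (ν' νd' : Measure (ℝ × ℝ)),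
        StatGauss P' X' → SpectralDecomp P' X' ν' νd' f →
        ∀ μ' : Measure ℝ, IsProbabilityMeasure μ' →
          ESDTendstoInProb P' (scaledW X') μ' → μ' = μf := by
  have hfin := hν.finite
  have hi : ∫⁻ q in specBox, ENNReal.ofReal (f q) ≠ ⊤ := by
    have hdec : ν = fm f + νd := hν.decomp
    have h1 : fm f ≤ ν := by rw [hdec]; exact Measure.le_add_right le_rfl
    have h2 : fm f Set.univ ≠ ⊤ := ne_top_of_le_ne_top (measure_ne_top ν Set.univ) (h1 Set.univ)
    rwa [fm, withDensity_apply _ MeasurableSet.univ, Measure.restrict_univ] at h2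
  obtain ⟨μ, hμ, h⟩ := lim_measure f hν.f_meas hν.f_nonneg hi
  refine ⟨μ, hμ, main_conv P X ν νd f hX hν μ hi h, ?_⟩
  intro Ω' _ P' _ X' ν' νd' hX' hν' μ' hμ' h'
  exact esd_unique P' (scaledW X') μ' μ h' (main_conv P' X' ν' νd' f hX' hν' μ hi h)

end
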